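/- arXiv:1609.04195 — 3 statements merged into one kernel-verified Lean document; each statement's English description precedes it below -/
import Mathlib

section
/- Let 0 ≤ δ ≤ 9/16 and let A be an n×n complex Hermitian matrix with 0 ⪯ A ⪯ I whose diagonal entries all satisfy A_{ii} ≤ δ. Then there exists a partition X₁ ⊔ X₂ ⊔ X₃ ⊔ X₄ = {1,…,n} into four pairwise disjoint sets such that the largest eigenvalue of P_{X₁}AP_{X₁} + P_{X₂}AP_{X₂} + P_{X₃}AP_{X₃} + P_{X₄}AP_{X₄} is at most (1/16)·(√(7(1−δ)) + 3√δ)², where P_X denotes the diagonal 0-1 projection matrix onto the coordinates in X. In particular, for a projection P with diagonal entries at most 1/2, this bound equals (3+√7)²/32 ≈ 0.996. -/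
open Polynomial Matrix
open scoped ComplexOrder

/-- The diagonal 0-1 projection matrix onto the coordinates in `X`. -/
def proj {n : ℕ} (X : Finset (Fin n)) : Matrix (Fin n) (Fin n) ℂ :=
  Matrix.diagonal fun i => if i ∈ X then 1 else 0



/-- local analysis of an interlacing pair at a root -/
lemma pf_local (g f2 : ℝ[X]) (a : ℝ) (m : ℕ) (hm : 1 ≤ m)
    (hg : g.eval a ≠ 0) (hf2 : f2.eval a ≠ 0)
    (h : ∀ z : ℂ, 0 < z.im →
      ((aeval z g) * (starRingEnd ℂ) (aeval z ((X - C a) ^ m * f2))).im ≤ 0) :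
    m = 1 ∧ 0 < g.eval a * f2.eval a := by
  set K := g.eval a * f2.eval a with hK
  have hK0 : K ≠ 0 := mul_ne_zero hg hf2
  have key : ∀ ω : ℂ, 0 < ω.im → 0 ≤ K * (ω ^ m).im := by
    intro ω hω
    have hc : Filter.Tendsto (fun ε : ℝ =>
        ((aeval ((a : ℂ) + ε * ω) g) * (starRingEnd ℂ) (aeval ((a : ℂ) + ε * ω) f2)
          * (starRingEnd ℂ) (ω ^ m)).im) (nhdsWithin 0 (Set.Ioi 0))
        (nhds (((aeval ((a : ℂ) + (0 : ℝ) * ω) g) * (starRingEnd ℂ) (aeval ((a : ℂ) + (0 : ℝ) * ω) f2)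
          * (starRingEnd ℂ) (ω ^ m)).im)) := by
      apply Filter.Tendsto.mono_left _ nhdsWithin_le_nhds
      apply Continuous.tendsto (f := fun ε : ℝ =>
        ((aeval ((a : ℂ) + ε * ω) g) * (starRingEnd ℂ) (aeval ((a : ℂ) + ε * ω) f2)
          * (starRingEnd ℂ) (ω ^ m)).im)
      have h1 : ∀ p : ℝ[X], Continuous fun ε : ℝ => aeval ((a : ℂ) + ε * ω) p := by
        intro p
        exact (p.continuous_aeval).comp (by fun_prop)
      have := h1 g
      have := h1 f2
      have h3 : Continuous (starRingEnd ℂ) := Complex.continuous_conj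
      fun_prop
    have hle := le_of_tendsto hc (b := 0) (by
      filter_upwards [self_mem_nhdsWithin] with ε hε
      have hε' : (0:ℝ) < ε := hε
      have := h ((a : ℂ) + ε * ω) (by simp; positivity)
      have e : (aeval ((a : ℂ) + ε * ω) g) * (starRingEnd ℂ) (aeval ((a : ℂ) + ε * ω) ((X - C a) ^ m * f2))
        = ((ε ^ m : ℝ) : ℂ) * ((aeval ((a : ℂ) + ε * ω) g) * (starRingEnd ℂ) (aeval ((a : ℂ) + ε * ω) f2)
          * (starRingEnd ℂ) (ω ^ m)) := by
        simp [mul_pow]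
        ring
      rw [e, Complex.im_ofReal_mul] at this
      by_contra hcon
      push Not at hcon
      have : 0 < ε ^ m := by positivity
      nlinarith)
    have e2 : ∀ p : ℝ[X], aeval ((a : ℂ)) p = ((p.eval a : ℝ) : ℂ) := by
      intro p
      exact (Polynomial.aeval_algebraMap_apply_eq_algebraMap_eval (A := ℂ) a p)
    simp only [Complex.ofReal_zero, zero_mul, add_zero, e2, Complex.conj_ofReal] at hle
    rw [← Complex.ofReal_mul, ← hK, Complex.im_ofReal_mul, Complex.conj_im] at hle
    linarith
  have hm0 : (0:ℝ) < m := by exact_mod_cast hm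
  have kp : ∀ θ : ℝ, 0 < θ → θ < Real.pi → 0 ≤ K * Real.sin (m * θ) := by
    intro θ h0 h1
    have := key (Complex.exp (θ * Complex.I)) (by
      rw [Complex.exp_ofReal_mul_I_im]; exact Real.sin_pos_of_pos_of_lt_pi h0 h1)
    rw [← Complex.exp_nat_mul, ← mul_assoc] at this
    have e : ((m : ℂ) * (θ : ℂ)) = ((m * θ : ℝ) : ℂ) := by push_cast; rfl
    rw [e, Complex.exp_ofReal_mul_I_im] at this
    exact this
  have hpi := Real.pi_pos
  have hm1 : (1:ℝ) ≤ m := by exact_mod_cast hm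
  have k1 := kp (Real.pi / 2 / m) (by positivity) (by
    rw [div_lt_iff₀ hm0]; nlinarith)
  rw [mul_div_cancel₀ _ hm0.ne', Real.sin_pi_div_two, mul_one] at k1
  have hKp : 0 < K := lt_of_le_of_ne k1 (Ne.symm hK0)
  refine ⟨?_, hKp⟩
  by_contra hne
  have hm2 : (2:ℝ) ≤ m := by exact_mod_cast (by omega : 2 ≤ m)
  have k2 := kp ((Real.pi / 2 + Real.pi) / m) (by positivity) (by
    rw [div_lt_iff₀ hm0]; nlinarith)
  rw [mul_div_cancel₀ _ hm0.ne', Real.sin_add_pi, Real.sin_pi_div_two] at k2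
  linarith

lemma pf_main {ι : Type*} [DecidableEq ι] (a : ι → ℝ) : ∀ (N : ℕ) (s : Finset ι) (g : ℝ[X]), s.card = N →
    (∀ z : ℂ, 0 < z.im →
      ((aeval z g) * (starRingEnd ℂ) (aeval z (∏ i ∈ s, (X - C (a i))))).im ≤ 0) →
    ∃ (q : ℝ[X]) (m : ι → ℝ), (∀ i, 0 ≤ m i) ∧
      g = q * ∏ i ∈ s, (X - C (a i)) + ∑ i ∈ s, C (m i) * ∏ j ∈ s.erase i, (X - C (a j)) := by
  intro N
  induction N with
  | zero =>
    intro s g hs _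
    have : s = ∅ := Finset.card_eq_zero.mp hs
    subst this
    exact ⟨g, fun _ => 0, fun _ => le_rfl, by simp⟩
  | succ N ih =>
    intro s g hs h
    by_cases hc : ∃ i ∈ s, g.eval (a i) = 0
    · obtain ⟨i, hi, hgi⟩ := hc
      obtain ⟨g1, rfl⟩ := (dvd_iff_isRoot (p := g) (a := a i)).2 hgi
      obtain ⟨q, m, hm, he⟩ := ih (s.erase i) g1 (by rw [Finset.card_erase_of_mem hi]; omega) (by
        intro z hz
        have := h z hz
        rw [← Finset.mul_prod_erase s _ hi, map_mul, map_mul, map_mul] at this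
        have e : (aeval z) (X - C (a i)) * (aeval z) g1 *
          ((starRingEnd ℂ) ((aeval z) (X - C (a i))) *
            (starRingEnd ℂ) ((aeval z) (∏ x ∈ s.erase i, (X - C (a x)))))
          = ((Complex.normSq ((aeval z) (X - C (a i))) : ℝ) : ℂ) * ((aeval z) g1 *
            (starRingEnd ℂ) ((aeval z) (∏ x ∈ s.erase i, (X - C (a x))))) := by
          rw [Complex.normSq_eq_conj_mul_self]; ring
        rw [e, Complex.im_ofReal_mul] at this
        have hp : 0 < Complex.normSq ((aeval z) (X - C (a i))) := by
          rw [Complex.normSq_pos]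
          intro h0
          have := congrArg Complex.im h0
          simp at this
          linarith
        by_contra hcon
        push Not at hcon
        nlinarith)
      refine ⟨q, Function.update m i 0, ?_, ?_⟩
      · intro j
        by_cases hj : j = i
        · subst hj; simp
        · simp [hj, hm j]
      · rw [he]
        rw [← Finset.mul_prod_erase s _ hi, ← Finset.add_sum_erase s _ hi]
        simp only [Function.update_self, map_zero, zero_mul, zero_add]
        rw [mul_add, Finset.mul_sum]
        congr 1
        · ring
        · apply Finset.sum_congr rfl
          intro j hj
          have hji := Finset.ne_of_mem_erase hj
          rw [Function.update_of_ne hji]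
          have hi2 : i ∈ s.erase j := Finset.mem_erase.2 ⟨hji.symm, hi⟩
          rw [← Finset.mul_prod_erase (s.erase j) _ hi2, Finset.erase_right_comm]
          ring
    · push Not at hc
      have hf0 : (∏ i ∈ s, (X - C (a i))) ≠ 0 := Finset.prod_ne_zero_iff.2 fun i _ => X_sub_C_ne_zero _
      -- simple roots
      have hloc : ∀ i ∈ s, 0 < g.eval (a i) * (∏ j ∈ s.erase i, (X - C (a j))).eval (a i) := by
        intro i hi
        obtain ⟨f2, hf2, hnd⟩ := exists_eq_pow_rootMultiplicity_mul_and_not_dvd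
          (∏ i ∈ s, (X - C (a i))) hf0 (a i)
        have hroot : 1 ≤ rootMultiplicity (a i) (∏ i ∈ s, (X - C (a i))) := by
          rw [Nat.one_le_iff_ne_zero, ← Nat.pos_iff_ne_zero, rootMultiplicity_pos hf0]
          simp only [IsRoot.def, eval_prod]
          exact Finset.prod_eq_zero hi (by simp)
        have := pf_local g f2 (a i) _ hroot (hc i hi) (by
          intro h0; exact hnd (dvd_iff_isRoot.2 h0)) (by rw [← hf2]; exact h)
        obtain ⟨h1, h2⟩ := this
        rw [h1, pow_one, ← Finset.mul_prod_erase s _ hi] at hf2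
        have := mul_left_cancel₀ (X_sub_C_ne_zero _) hf2
        rw [this]; exact h2
      have hprodne : ∀ i ∈ s, (∏ j ∈ s.erase i, (X - C (a j))).eval (a i) ≠ 0 := by
        intro i hi h0
        have := hloc i hi
        rw [h0] at this; simp at this
      have hinj : Set.InjOn a s := by
        intro i hi j hj hij
        by_contra hne
        apply hprodne i hi
        rw [eval_prod]
        exact Finset.prod_eq_zero (Finset.mem_erase.2 ⟨Ne.symm hne, hj⟩) (by simp [hij])
      set m : ι → ℝ := fun i => if i ∈ s then
        g.eval (a i) / (∏ j ∈ s.erase i, (X - C (a j))).eval (a i) else 0 with hm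
      have hdvd : (∏ i ∈ s, (X - C (a i))) ∣
          g - ∑ i ∈ s, C (m i) * ∏ j ∈ s.erase i, (X - C (a j)) := by
        apply Finset.prod_dvd_of_coprime
        · intro i hi j hj hij
          apply isCoprime_X_sub_C_of_isUnit_sub
          rw [isUnit_iff_ne_zero, sub_ne_zero]
          intro h'
          exact hij (hinj hi hj h')
        · intro i hi
          rw [dvd_iff_isRoot, IsRoot.def, eval_sub, eval_finsetSum, sub_eq_zero]
          rw [Finset.sum_eq_single i]
          · rw [eval_mul, eval_C, hm]
            simp only [hi, if_true]
            rw [div_mul_cancel₀ _ (hprodne i hi)]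
          · intro j hj hji
            rw [eval_mul, eval_prod]
            rw [Finset.prod_eq_zero (Finset.mem_erase.2 ⟨Ne.symm hji, hi⟩) (by simp)]
            simp
          · intro h'; exact absurd hi h'
      obtain ⟨q, hq⟩ := hdvd
      refine ⟨q, m, ?_, ?_⟩
      · intro i
        simp only [hm]
        split_ifs with hi
        · have := hloc i hi
          rw [div_nonneg_iff]
          rcases mul_pos_iff.1 this with ⟨h1, h2⟩ | ⟨h1, h2⟩
          · left; exact ⟨h1.le, h2.le⟩
          · right; exact ⟨h1.le, h2.le⟩
        · exact le_rfl
      · rw [mul_comm q, ← hq]; ring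


lemma quartic_coeff_eq {a0 a1 a2 a3 a4 b0 b1 b2 b3 b4 : ℝ}
    (h : ∀ t : ℝ, a0 + a1 * t + a2 * t ^ 2 + a3 * t ^ 3 + a4 * t ^ 4
      = b0 + b1 * t + b2 * t ^ 2 + b3 * t ^ 3 + b4 * t ^ 4) :
    a0 = b0 ∧ a1 = b1 ∧ a2 = b2 ∧ a3 = b3 ∧ a4 = b4 := by
  have h0 := h 0
  have h1 := h 1
  have h2 := h (-1)
  have h3 := h 2
  have h4 := h (-2)
  norm_num at h0 h1 h2 h3 h4
  refine ⟨?_, ?_, ?_, ?_, ?_⟩ <;> linarith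

lemma quartic_roots (c0 c1 c2 c3 c4 : ℝ) (p0 : 0 < c0) (p1 : 0 < c1) (p2 : 0 < c2) (p3 : 0 < c3)
    (p4 : 0 < c4)
    (h0 : ∀ t : ℂ, 0 < t.im → (c0 : ℂ) + c1 * t + c2 * t ^ 2 + c3 * t ^ 3 + c4 * t ^ 4 ≠ 0) :
    ∃ u : Fin 4 → ℝ, (∀ i, 0 < u i) ∧
      ∀ t : ℝ, c0 + c1 * t + c2 * t ^ 2 + c3 * t ^ 3 + c4 * t ^ 4
        = c4 * ((t + u 0) * (t + u 1) * (t + u 2) * (t + u 3)) := by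
  set p : ℂ[X] := C (c4 : ℂ) * X ^ 4 + C (c3 : ℂ) * X ^ 3 + C (c2 : ℂ) * X ^ 2 + C (c1 : ℂ) * X
    + C (c0 : ℂ) with hp
  have hc4 : (c4 : ℂ) ≠ 0 := by exact_mod_cast p4.ne'
  have hdeg : p.natDegree = 4 := by rw [hp]; compute_degree!; exact p4.ne'
  have hlead : p.leadingCoeff = c4 := by
    rw [leadingCoeff, hdeg, hp]; simp [coeff_X]
  have hsp : p.Splits := IsAlgClosed.splits p
  have hfac := hsp.eq_prod_roots
  have hcard : p.roots.card = 4 := by rw [← hsp.natDegree_eq_card_roots, hdeg]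
  have hev : ∀ t, p.eval t = (c0 : ℂ) + c1 * t + c2 * t ^ 2 + c3 * t ^ 3 + c4 * t ^ 4 := by
    intro t; rw [hp]; simp; ring
  have hp0 : p ≠ 0 := by intro h; rw [h] at hdeg; simp at hdeg
  have hreal : ∀ τ ∈ p.roots, τ.im = 0 := by
    intro τ hτ
    have hr : p.eval τ = 0 := (mem_roots hp0).1 hτ
    rw [hev] at hr
    by_contra hne
    rcases lt_or_gt_of_ne hne with h | h
    · apply h0 ((starRingEnd ℂ) τ) (by simpa using h)
      have := congrArg (starRingEnd ℂ) hr
      simpa using this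
    · exact h0 τ h hr
  obtain ⟨l, hl⟩ : ∃ l : List ℂ, (l : Multiset ℂ) = p.roots := Quot.exists_rep p.roots
  rw [← hl] at hcard hfac hreal
  simp only [Multiset.coe_card] at hcard
  match l, hcard with
  | [a, b, c, d], _ =>
    have ha := hreal a (by simp)
    have hb := hreal b (by simp)
    have hc := hreal c (by simp)
    have hd := hreal d (by simp)
    have ea : a = (a.re : ℂ) := Complex.ext (by simp) (by simpa using ha)
    have eb : b = (b.re : ℂ) := Complex.ext (by simp) (by simpa using hb)
    have ec : c = (c.re : ℂ) := Complex.ext (by simp) (by simpa using hc)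
    have ed : d = (d.re : ℂ) := Complex.ext (by simp) (by simpa using hd)
    have hid : ∀ t : ℝ, c0 + c1 * t + c2 * t ^ 2 + c3 * t ^ 3 + c4 * t ^ 4
        = c4 * ((t + (-a.re)) * (t + (-b.re)) * (t + (-c.re)) * (t + (-d.re))) := by
      intro t
      have h1 := hev t
      rw [hfac, hlead] at h1
      simp only [Multiset.map_coe, List.map_cons, List.map_nil, Multiset.prod_coe, List.prod_cons,
        List.prod_nil, eval_mul, eval_C, eval_sub, eval_X, mul_one] at h1
      rw [ea, eb, ec, ed] at h1
      have h2 : ((c0 + c1 * t + c2 * t ^ 2 + c3 * t ^ 3 + c4 * t ^ 4 : ℝ) : ℂ)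
        = ((c4 * ((t + (-a.re)) * (t + (-b.re)) * (t + (-c.re)) * (t + (-d.re))) : ℝ) : ℂ) := by
        push_cast
        rw [← h1]; ring
      exact_mod_cast h2
    refine ⟨![-a.re, -b.re, -c.re, -d.re], ?_, ?_⟩
    · have hpos : ∀ r : ℝ, 0 ≤ r → c0 + c1 * r + c2 * r ^ 2 + c3 * r ^ 3 + c4 * r ^ 4 ≠ 0 := by
        intro r hr; positivity
      intro i
      by_contra hcon
      push Not at hcon
      fin_cases i
      · apply hpos a.re (by simpa using hcon); rw [hid]; ring
      · apply hpos b.re (by simpa using hcon); rw [hid]; ring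
      · apply hpos c.re (by simpa using hcon); rw [hid]; ring
      · apply hpos d.re (by simpa using hcon); rw [hid]; ring
    · intro t; simpa using hid t

/-- sum of three of the four quantities is at least `9 / (4 Φ)`. -/
lemma three_sum {x y z v Φ d : ℝ} (hx : 0 < x) (hy : 0 < y) (hz : 0 < z) (hv : 0 < v) (hΦ : 0 < Φ)
    (hd : 16 * Φ * d = 9) (h : 1 / x + 1 / y + 1 / z + 1 / v ≤ 4 * Φ) : 4 * d ≤ x + y + z := by
  have hv' : 0 < 1 / v := by positivity
  have h1 : 1 / x + 1 / y + 1 / z ≤ 4 * Φ := by linarith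
  have h2 : 9 ≤ (x + y + z) * (1 / x + 1 / y + 1 / z) := by
    have e : (x + y + z) * (1 / x + 1 / y + 1 / z) - 9
      = ((x - y) ^ 2 * z + (y - z) ^ 2 * x + (x - z) ^ 2 * y) / (x * y * z) := by
      field_simp; ring
    have : 0 ≤ ((x - y) ^ 2 * z + (y - z) ^ 2 * x + (x - z) ^ 2 * y) / (x * y * z) := by positivity
    linarith
  have h3 : (x + y + z) * (1 / x + 1 / y + 1 / z) ≤ (x + y + z) * (4 * Φ) := by gcongr
  have h4 : (4 * Φ) * (4 * d) ≤ (4 * Φ) * (x + y + z) := by linarith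
  exact le_of_mul_le_mul_left h4 (by positivity)

set_option maxHeartbeats 1000000 in
lemma quartic_barrier (c0 c1 c2 c3 c4 Φ d : ℝ)
    (p0 : 0 < c0) (p1 : 0 < c1) (p2 : 0 < c2) (p3 : 0 < c3) (p4 : 0 < c4) (hΦ : 0 < Φ)
    (hd : 16 * Φ * d = 9)
    (h0 : ∀ t : ℂ, 0 < t.im → (c0 : ℂ) + c1 * t + c2 * t ^ 2 + c3 * t ^ 3 + c4 * t ^ 4 ≠ 0)
    (h1 : c1 ≤ 4 * Φ * c0) :
    0 < c3 - 4 * d * c4 ∧ ∀ e0 e1 e2 e3 e4 : ℝ,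
      (∀ t w : ℂ, 0 < t.im → 0 < w.im → (c0 : ℂ) + c1 * t + c2 * t ^ 2 + c3 * t ^ 3 + c4 * t ^ 4
        + w * ((e0 : ℂ) + e1 * t + e2 * t ^ 2 + e3 * t ^ 3 + e4 * t ^ 4) ≠ 0) →
      e0 ≤ Φ * c0 → e3 - 4 * d * e4 ≤ Φ * (c3 - 4 * d * c4) := by
  obtain ⟨u, hu, hid⟩ := quartic_roots c0 c1 c2 c3 c4 p0 p1 p2 p3 p4 h0
  obtain ⟨k0, k1, k2, k3, -⟩ := quartic_coeff_eq (a0 := c0) (a1 := c1) (a2 := c2) (a3 := c3) (a4 := c4)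
    (b0 := c4 * (u 0 * u 1 * u 2 * u 3))
    (b1 := c4 * (u 1 * u 2 * u 3 + u 0 * u 2 * u 3 + u 0 * u 1 * u 3 + u 0 * u 1 * u 2))
    (b2 := c4 * (u 0 * u 1 + u 0 * u 2 + u 0 * u 3 + u 1 * u 2 + u 1 * u 3 + u 2 * u 3))
    (b3 := c4 * (u 0 + u 1 + u 2 + u 3)) (b4 := c4) (by intro t; rw [hid]; ring)
  have u0 := hu 0
  have u1 := hu 1
  have u2 := hu 2
  have u3 := hu 3
  have hsum : 1 / u 0 + 1 / u 1 + 1 / u 2 + 1 / u 3 ≤ 4 * Φ := by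
    have : 1 / u 0 + 1 / u 1 + 1 / u 2 + 1 / u 3 = c1 / c0 := by
      rw [k1, k0]; field_simp
    rw [this, div_le_iff₀ p0]; exact h1
  have t3 : 4 * d ≤ u 0 + u 1 + u 2 := three_sum u0 u1 u2 u3 hΦ hd hsum
  have t2 : 4 * d ≤ u 0 + u 1 + u 3 := three_sum u0 u1 u3 u2 hΦ hd (by linarith)
  have t1 : 4 * d ≤ u 0 + u 2 + u 3 := three_sum u0 u2 u3 u1 hΦ hd (by linarith)
  have t0 : 4 * d ≤ u 1 + u 2 + u 3 := three_sum u1 u2 u3 u0 hΦ hd (by linarith)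
  have hpos : 0 < c3 - 4 * d * c4 := by
    rw [k3]; nlinarith
  refine ⟨hpos, ?_⟩
  intro e0 e1 e2 e3 e4 hw he0
  set g : ℝ[X] := C e4 * X ^ 4 + C e3 * X ^ 3 + C e2 * X ^ 2 + C e1 * X + C e0 with hg
  have hidC : ∀ t : ℂ, (c0 : ℂ) + c1 * t + c2 * t ^ 2 + c3 * t ^ 3 + c4 * t ^ 4
      = c4 * ((t + u 0) * (t + u 1) * (t + u 2) * (t + u 3)) := by
    intro t; rw [k0, k1, k2, k3]; push_cast; ring
  obtain ⟨q, m, hm, hge⟩ := pf_main (fun i : Fin 4 => - u i) 4 Finset.univ g (by simp) (by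
    intro z hz
    have hgz : aeval z g = (e0 : ℂ) + e1 * z + e2 * z ^ 2 + e3 * z ^ 3 + e4 * z ^ 4 := by
      rw [hg]; simp; ring
    have hfz : aeval z (∏ i : Fin 4, (X - C (- u i))) = (z + u 0) * (z + u 1) * (z + u 2) * (z + u 3) := by
      simp [Fin.prod_univ_four]
    have hw' := hw z
    have hf0 := h0 z hz
    simp only [hidC] at hw' hf0
    rw [hgz, hfz]
    set G := (e0 : ℂ) + e1 * z + e2 * z ^ 2 + e3 * z ^ 3 + e4 * z ^ 4
    set f := (z + u 0) * (z + u 1) * (z + u 2) * (z + u 3)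
    by_contra hcon
    push Not at hcon
    have hG : G ≠ 0 := by
      intro h; rw [h] at hcon; simp at hcon
    apply hw' (- (c4 * f / G)) hz ?_ ?_
    · have hn : 0 < Complex.normSq G := Complex.normSq_pos.2 hG
      have : - (c4 * f / G) = ((c4 / Complex.normSq G : ℝ) : ℂ) * (- (f * (starRingEnd ℂ) G)) := by
        rw [Complex.ofReal_div, Complex.normSq_eq_conj_mul_self]
        have : (starRingEnd ℂ) G ≠ 0 := by simpa using hG
        field_simp
      rw [this, Complex.im_ofReal_mul]
      apply mul_pos (by positivity)
      have e : (-(f * (starRingEnd ℂ) G)).im = (G * (starRingEnd ℂ) f).im := by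
        simp [Complex.mul_im]; ring
      rw [e]; exact hcon
    · field_simp; ring)
  -- `q` is constant
  have hsumE : ∑ i : Fin 4, C (m i) * ∏ j ∈ Finset.univ.erase i, (X - C (- u j))
      = C (m 0) * ((X + C (u 1)) * (X + C (u 2)) * (X + C (u 3)))
      + C (m 1) * ((X + C (u 0)) * (X + C (u 2)) * (X + C (u 3)))
      + C (m 2) * ((X + C (u 0)) * (X + C (u 1)) * (X + C (u 3)))
      + C (m 3) * ((X + C (u 0)) * (X + C (u 1)) * (X + C (u 2))) := by
    have a0 : (Finset.univ.erase (0 : Fin 4)) = {1, 2, 3} := by decide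
    have a1 : (Finset.univ.erase (1 : Fin 4)) = {0, 2, 3} := by decide
    have a2 : (Finset.univ.erase (2 : Fin 4)) = {0, 1, 3} := by decide
    have a3 : (Finset.univ.erase (3 : Fin 4)) = {0, 1, 2} := by decide
    rw [Fin.sum_univ_four, a0, a1, a2, a3]
    simp [Finset.prod_insert, mul_assoc]
  have hge' : g = q * ((X + C (u 0)) * (X + C (u 1)) * (X + C (u 2)) * (X + C (u 3)))
      + (C (m 0) * ((X + C (u 1)) * (X + C (u 2)) * (X + C (u 3)))
      + C (m 1) * ((X + C (u 0)) * (X + C (u 2)) * (X + C (u 3)))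
      + C (m 2) * ((X + C (u 0)) * (X + C (u 1)) * (X + C (u 3)))
      + C (m 3) * ((X + C (u 0)) * (X + C (u 1)) * (X + C (u 2)))) := by
    rw [← hsumE]
    have : ∏ i : Fin 4, (X - C (- u i)) = (X + C (u 0)) * (X + C (u 1)) * (X + C (u 2)) * (X + C (u 3)) := by
      simp [Fin.prod_univ_four]
    rw [← this]
    exact hge
  have hqdeg : q.natDegree = 0 := by
    set f : ℝ[X] := (X + C (u 0)) * (X + C (u 1)) * (X + C (u 2)) * (X + C (u 3)) with hf
    have hfm : f.Monic := by
      rw [hf]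
      exact (((monic_X_add_C _).mul (monic_X_add_C _)).mul (monic_X_add_C _)).mul (monic_X_add_C _)
    have hfd : f.natDegree = 4 := by rw [hf]; compute_degree!
    have h5 : (q * f).natDegree ≤ 4 := by
      have : q * f = g - (C (m 0) * ((X + C (u 1)) * (X + C (u 2)) * (X + C (u 3)))
      + C (m 1) * ((X + C (u 0)) * (X + C (u 2)) * (X + C (u 3)))
      + C (m 2) * ((X + C (u 0)) * (X + C (u 1)) * (X + C (u 3)))
      + C (m 3) * ((X + C (u 0)) * (X + C (u 1)) * (X + C (u 2)))) := by rw [hge']; ring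
      rw [this, hg]
      compute_degree
    by_cases hq0 : q = 0
    · simp [hq0]
    · rw [mul_comm, hfm.natDegree_mul' hq0, hfd] at h5
      omega
  obtain ⟨r, rfl⟩ := natDegree_eq_zero.1 hqdeg
  have hev : ∀ t : ℝ, e0 + e1 * t + e2 * t ^ 2 + e3 * t ^ 3 + e4 * t ^ 4
      = r * ((t + u 0) * (t + u 1) * (t + u 2) * (t + u 3)) + (m 0 * ((t + u 1) * (t + u 2) * (t + u 3))
       + m 1 * ((t + u 0) * (t + u 2) * (t + u 3)) + m 2 * ((t + u 0) * (t + u 1) * (t + u 3))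
       + m 3 * ((t + u 0) * (t + u 1) * (t + u 2))) := by
    intro t
    have := congrArg (eval t) hge'
    rw [hg] at this
    simp at this
    rw [← this]; ring
  obtain ⟨l0, l1, l2, l3, l4⟩ := quartic_coeff_eq
    (b0 := r * (u 0 * u 1 * u 2 * u 3) + (m 0 * (u 1 * u 2 * u 3) + m 1 * (u 0 * u 2 * u 3)
      + m 2 * (u 0 * u 1 * u 3) + m 3 * (u 0 * u 1 * u 2)))
    (b1 := r * (u 1 * u 2 * u 3 + u 0 * u 2 * u 3 + u 0 * u 1 * u 3 + u 0 * u 1 * u 2)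
      + (m 0 * (u 1 * u 2 + u 1 * u 3 + u 2 * u 3) + m 1 * (u 0 * u 2 + u 0 * u 3 + u 2 * u 3)
      + m 2 * (u 0 * u 1 + u 0 * u 3 + u 1 * u 3) + m 3 * (u 0 * u 1 + u 0 * u 2 + u 1 * u 2)))
    (b2 := r * (u 0 * u 1 + u 0 * u 2 + u 0 * u 3 + u 1 * u 2 + u 1 * u 3 + u 2 * u 3)
      + (m 0 * (u 1 + u 2 + u 3) + m 1 * (u 0 + u 2 + u 3)
      + m 2 * (u 0 + u 1 + u 3) + m 3 * (u 0 + u 1 + u 2)))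
    (b3 := r * (u 0 + u 1 + u 2 + u 3) + (m 0 + m 1 + m 2 + m 3)) (b4 := r)
    (fun t => (hev t).trans (by ring))
  -- final estimate
  set W := u 0 + u 1 + u 2 + u 3 - 4 * d with hW
  have hWp : 0 < W := by
    rw [k3] at hpos
    have : c4 * (u 0 + u 1 + u 2 + u 3) - 4 * d * c4 = c4 * W := by rw [hW]; ring
    rw [this] at hpos
    exact (mul_pos_iff_of_pos_left p4).1 hpos
  have hr : r + (m 0 / u 0 + m 1 / u 1 + m 2 / u 2 + m 3 / u 3) ≤ c4 * Φ := by
    have e : r + (m 0 / u 0 + m 1 / u 1 + m 2 / u 2 + m 3 / u 3) = e0 / (u 0 * u 1 * u 2 * u 3) := by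
      rw [l0]; field_simp
    rw [e, div_le_iff₀ (by positivity)]
    rw [k0] at he0
    linarith
  have hs : ∀ i, m i * 1 ≤ m i / u i * W := by
    intro i
    have hle : u i ≤ W := by
      fin_cases i <;> simp [hW] <;> linarith
    rw [div_mul_eq_mul_div, mul_one, le_div_iff₀ (hu i)]
    exact mul_le_mul_of_nonneg_left hle (hm i)
  have s0 := hs 0
  have s1 := hs 1
  have s2 := hs 2
  have s3 := hs 3
  have hfin := mul_le_mul_of_nonneg_right hr hWp.le
  calc e3 - 4 * d * e4 = r * W + (m 0 + m 1 + m 2 + m 3) := by rw [l3, l4, hW]; ring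
    _ ≤ (r + (m 0 / u 0 + m 1 / u 1 + m 2 / u 2 + m 3 / u 3)) * W := by nlinarith
    _ ≤ c4 * Φ * W := hfin
    _ = Φ * (c3 - 4 * d * c4) := by rw [k3, hW]; ring


section ops
open Function

/-- Derivative in the coordinate `k` of a multi-affine function. -/
def DD {ι : Type*} [DecidableEq ι] (k : ι) (F : (ι → ℂ) → ℂ) : (ι → ℂ) → ℂ :=
  fun z => F (update z k 1) - F (update z k 0)

/-- Multi-affine functions. -/
def MA {ι : Type*} [DecidableEq ι] (F : (ι → ℂ) → ℂ) : Prop :=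
  ∀ z k t, F (update z k t) = F (update z k 0) + t * DD k F z

def DL {ι : Type*} [DecidableEq ι] (L : List ι) (F : (ι → ℂ) → ℂ) : (ι → ℂ) → ℂ :=
  L.foldr DD F

def Stab {ι : Type*} (F : (ι → ℂ) → ℂ) : Prop :=
  ∀ z : ι → ℂ, (∀ k, 0 < (z k).im) → F z ≠ 0

lemma DL_nil {ι : Type*} [DecidableEq ι] (F : (ι → ℂ) → ℂ) : DL [] F = F := rfl

lemma DL_cons {ι : Type*} [DecidableEq ι] (k : ι) (L : List ι) (F : (ι → ℂ) → ℂ) :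
    DL (k :: L) F = DD k (DL L F) := rfl

lemma DL_append {ι : Type*} [DecidableEq ι] (L L' : List ι) (F : (ι → ℂ) → ℂ) :
    DL (L ++ L') F = DL L (DL L' F) := by simp [DL]

lemma DD_comm {ι : Type*} [DecidableEq ι] (j k : ι) (F : (ι → ℂ) → ℂ) :
    DD j (DD k F) = DD k (DD j F) := by
  by_cases h : j = k
  · rw [h]
  · funext z
    simp only [DD]
    rw [update_comm h, update_comm h, update_comm h, update_comm h]
    ring

lemma DL_perm {ι : Type*} [DecidableEq ι] {L L' : List ι} (h : L.Perm L') (F : (ι → ℂ) → ℂ) :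
    DL L F = DL L' F := by
  induction h with
  | nil => rfl
  | cons x _ ih => rw [DL_cons, DL_cons, ih]
  | swap x y l => simp only [DL_cons]; rw [DD_comm]
  | trans _ _ h1 h2 => rw [h1, h2]

lemma DD_update {ι : Type*} [DecidableEq ι] (k : ι) (F : (ι → ℂ) → ℂ) (z : ι → ℂ) (t : ℂ) :
    DD k F (update z k t) = DD k F z := by
  simp [DD]

lemma MA.dd {ι : Type*} [DecidableEq ι] {F : (ι → ℂ) → ℂ} (h : MA F) (j : ι) : MA (DD j F) := by
  intro z k t
  by_cases hjk : j = k
  · subst hjk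
    have : DD j (DD j F) z = 0 := by
      rw [DD, DD_update, DD_update, sub_self]
    rw [this, DD_update, DD_update]; ring
  · have e : ∀ s : ℂ, DD j F (update z k s) = F (update (update z j 1) k s) - F (update (update z j 0) k s) := by
      intro s
      simp only [DD]
      rw [update_comm (Ne.symm hjk), update_comm (Ne.symm hjk)]
    rw [e t, e 0, h _ k t, h _ k t, DD_comm]
    simp only [DD]; ring

lemma MA.dl {ι : Type*} [DecidableEq ι] {F : (ι → ℂ) → ℂ} (h : MA F) (L : List ι) : MA (DL L F) := by
  induction L with
  | nil => exact h
  | cons k L ih => exact ih.dd k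

lemma MA.shift {ι : Type*} [DecidableEq ι] {F : (ι → ℂ) → ℂ} (h : MA F) (z : ι → ℂ) (k : ι) (t : ℂ) :
    F (update z k (z k + t)) = F z + t * DD k F z := by
  have h1 := h z k (z k)
  rw [update_eq_self] at h1
  rw [h z k (z k + t), h1]; ring

lemma diff_dd {ι : Type*} [Fintype ι] [DecidableEq ι] {F : (ι → ℂ) → ℂ} (h : Differentiable ℂ F) (k : ι) :
    Differentiable ℂ (DD k F) := by
  have e : ∀ c : ℂ, Differentiable ℂ (fun z : ι → ℂ => update z k c) := by
    intro c
    rw [differentiable_pi]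
    intro i
    by_cases hi : i = k
    · subst hi; simp
    · simp only [update_of_ne hi]; fun_prop
  exact (h.comp (e 1)).sub (h.comp (e 0))

lemma diff_dl {ι : Type*} [Fintype ι] [DecidableEq ι] {F : (ι → ℂ) → ℂ} (h : Differentiable ℂ F) (L : List ι) :
    Differentiable ℂ (DL L F) := by
  induction L with
  | nil => exact h
  | cons k L ih => exact diff_dd ih k

def RealF {ι : Type*} (F : (ι → ℂ) → ℂ) : Prop :=
  ∀ z : ι → ℂ, F (fun k => (starRingEnd ℂ) (z k)) = (starRingEnd ℂ) (F z)

lemma real_dd {ι : Type*} [DecidableEq ι] {F : (ι → ℂ) → ℂ} (h : RealF F) (k : ι) : RealF (DD k F) := by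
  intro z
  have e : ∀ c : ℝ, update (fun k => (starRingEnd ℂ) (z k)) k (c : ℂ)
      = fun j => (starRingEnd ℂ) (update z k (c : ℂ) j) := by
    intro c
    funext j
    by_cases hj : j = k
    · subst hj; simp
    · simp [update_of_ne hj]
  have e1 := e 1
  have e0 := e 0
  simp only [Complex.ofReal_one, Complex.ofReal_zero] at e1 e0
  simp only [DD]
  rw [e1, e0, h, h, map_sub]

lemma real_dl {ι : Type*} [DecidableEq ι] {F : (ι → ℂ) → ℂ} (h : RealF F) (L : List ι) : RealF (DL L F) := by
  induction L with
  | nil => exact h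
  | cons k L ih => exact real_dd ih k

lemma RealF.im_eq {ι : Type*} {F : (ι → ℂ) → ℂ} (h : RealF F) (x : ι → ℝ) :
    (F fun k => (x k : ℂ)).im = 0 := by
  have := h (fun k => (x k : ℂ))
  simp only [Complex.conj_ofReal] at this
  exact Complex.conj_eq_iff_im.1 this.symm

lemma im_ratio {ι : Type*} [DecidableEq ι] {G : (ι → ℂ) → ℂ} (h : MA G) (hs : Stab G) (κ : ι) (z : ι → ℂ)
    (hz : ∀ k, 0 < (z k).im) (hd : DD κ G z ≠ 0) : (z κ).im ≤ (G z / DD κ G z).im := by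
  by_contra hcon
  push Not at hcon
  apply hs (update z κ (z κ + (-(G z / DD κ G z))))
  · intro k
    by_cases hk : k = κ
    · subst hk; simp; simpa using hcon
    · rw [update_of_ne hk]; exact hz k
  · rw [h.shift]; field_simp; ring

lemma norm_lower {ι : Type*} [DecidableEq ι] {G : (ι → ℂ) → ℂ} (h : MA G) (hs : Stab G) (κ : ι) (z : ι → ℂ)
    (hz : ∀ k, 0 < (z k).im) : ‖DD κ G z‖ * (z κ).im ≤ ‖G z‖ := by
  by_cases hd : DD κ G z = 0
  · simp [hd]
  · have h1 := im_ratio h hs κ z hz hd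
    have h2 : (G z / DD κ G z).im ≤ ‖G z / DD κ G z‖ := (le_abs_self _).trans (Complex.abs_im_le_norm _)
    rw [norm_div] at h2
    have h3 : 0 < ‖DD κ G z‖ := norm_pos_iff.2 hd
    have h4 : (z κ).im ≤ ‖G z‖ / ‖DD κ G z‖ := h1.trans h2
    rw [le_div_iff₀ h3] at h4
    linarith

/-- keep only copy `j` of the variable `i` -/
def EE {n : ℕ} (i : Fin n) (j : Fin 4) (F : (Fin n × Fin 4 → ℂ) → ℂ) : (Fin n × Fin 4 → ℂ) → ℂ :=
  DL [(i, j + 1), (i, j + 2), (i, j + 3)] F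

def D4 {n : ℕ} (i : Fin n) (F : (Fin n × Fin 4 → ℂ) → ℂ) : (Fin n × Fin 4 → ℂ) → ℂ :=
  DL [(i, 0), (i, 1), (i, 2), (i, 3)] F

def TT {n : ℕ} (i : Fin n) (F : (Fin n × Fin 4 → ℂ) → ℂ) : (Fin n × Fin 4 → ℂ) → ℂ :=
  fun z => ∑ j, EE i j F z

lemma DD_EE {n : ℕ} (i : Fin n) (j : Fin 4) (F : (Fin n × Fin 4 → ℂ) → ℂ) :
    DD (i, j) (EE i j F) = D4 i F := by
  have : DD (i, j) (EE i j F) = DL [(i, j), (i, j + 1), (i, j + 2), (i, j + 3)] F := rfl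
  rw [this, D4]
  apply DL_perm
  have h : ([j, j + 1, j + 2, j + 3] : List (Fin 4)).Perm [0, 1, 2, 3] := by
    clear this; revert j; decide
  exact h.map (fun k => (i, k))

lemma DL_DL_comm {ι : Type*} [DecidableEq ι] (L L' : List ι) (F : (ι → ℂ) → ℂ) :
    DL L (DL L' F) = DL L' (DL L F) := by
  rw [← DL_append, ← DL_append]
  exact DL_perm List.perm_append_comm F

lemma DD_TT {n : ℕ} (i : Fin n) (k : Fin n × Fin 4) (F : (Fin n × Fin 4 → ℂ) → ℂ) :
    DD k (TT i F) = TT i (DD k F) := by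
  funext z
  have : ∀ j, EE i j (DD k F) = DD k (EE i j F) := fun j => DL_DL_comm _ [k] F
  simp only [TT, this]
  simp only [DD, Finset.sum_sub_distrib, TT]

lemma DL_TT {n : ℕ} (i : Fin n) (L : List (Fin n × Fin 4)) (F : (Fin n × Fin 4 → ℂ) → ℂ) :
    DL L (TT i F) = TT i (DL L F) := by
  induction L with
  | nil => rfl
  | cons k L ih => rw [DL_cons, ih, DD_TT, DL_cons]

/-- The class of functions we work with; `S` is the set of unprocessed indices. -/
structure Cls {n : ℕ} (R : ℝ) (S : Set (Fin n)) (F : (Fin n × Fin 4 → ℂ) → ℂ) : Prop where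
  diff : Differentiable ℂ F
  ma : MA F
  real : RealF F
  st : ∀ L : List (Fin n × Fin 4), L.Nodup → (∀ k ∈ L, k.1 ∈ S) → Stab (DL L F)
  pos : ∀ L : List (Fin n × Fin 4), L.Nodup → (∀ k ∈ L, k.1 ∈ S) → ∀ x : ℝ, R ≤ x →
    0 < DL L F (fun _ => (x : ℂ))

lemma nodup3 {n : ℕ} (i : Fin n) (j : Fin 4) :
    ([(i, j + 1), (i, j + 2), (i, j + 3)] : List (Fin n × Fin 4)).Nodup := by
  have h : ([j + 1, j + 2, j + 3] : List (Fin 4)).Nodup := by revert j; decide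
  exact h.map (f := fun k => (i, k)) (fun a b h => by simpa using h)

lemma nodup4 {n : ℕ} (i : Fin n) :
    ([(i, 0), (i, 1), (i, 2), (i, 3)] : List (Fin n × Fin 4)).Nodup := by
  have h : ([0, 1, 2, 3] : List (Fin 4)).Nodup := by decide
  exact h.map (f := fun k => (i, k)) (fun a b h => by simpa using h)

lemma nodup_app {n : ℕ} {i : Fin n} {S : Set (Fin n)} {L' L : List (Fin n × Fin 4)} (hL : L.Nodup)
    (hLS : ∀ k ∈ L, k.1 ∈ S \ {i}) (hL' : L'.Nodup) (hi : ∀ k ∈ L', k.1 = i) : (L' ++ L).Nodup := by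
  rw [List.nodup_append']
  refine ⟨hL', hL, ?_⟩
  intro k hk hk'
  exact (hLS k hk').2 (hi k hk)

lemma mem_app {n : ℕ} {i : Fin n} {S : Set (Fin n)} (hiS : i ∈ S) {L' L : List (Fin n × Fin 4)}
    (hLS : ∀ k ∈ L, k.1 ∈ S \ {i}) (hi : ∀ k ∈ L', k.1 = i) : ∀ k ∈ L' ++ L, k.1 ∈ S := by
  intro k hk
  rcases List.mem_append.1 hk with h | h
  · rw [hi k h]; exact hiS
  · exact (hLS k h).1

lemma Cls.EE {n : ℕ} {R : ℝ} {S : Set (Fin n)} {F : (Fin n × Fin 4 → ℂ) → ℂ} (h : Cls R S F)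
    (i : Fin n) (hi : i ∈ S) (j : Fin 4) : Cls R (S \ {i}) (EE i j F) where
  diff := diff_dl h.diff _
  ma := h.ma.dl _
  real := real_dl h.real _
  st := by
    intro L hL hLS
    rw [_root_.EE, DL_DL_comm, ← DL_append]
    exact h.st _ (nodup_app hL hLS (nodup3 i j) (by simp)) (mem_app hi hLS (by simp))
  pos := by
    intro L hL hLS
    rw [_root_.EE, DL_DL_comm, ← DL_append]
    exact h.pos _ (nodup_app hL hLS (nodup3 i j) (by simp)) (mem_app hi hLS (by simp))

lemma stab_TT {n : ℕ} (i : Fin n) {G : (Fin n × Fin 4 → ℂ) → ℂ} (hma : MA G)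
    (hE : ∀ j, Stab (EE i j G)) (h4 : Stab (D4 i G)) : Stab (TT i G) := by
  intro z hz h0
  have hd := h4 z hz
  have h1 : ∀ j, (z (i, j)).im ≤ (EE i j G z / D4 i G z).im := by
    intro j
    have := im_ratio (G := EE i j G) (hma.dl _) (hE j) (i, j) z hz (by rw [DD_EE]; exact hd)
    rwa [DD_EE] at this
  have h2 : (∑ j, EE i j G z / D4 i G z) = 0 := by
    rw [← Finset.sum_div]
    have : (∑ j, EE i j G z) = 0 := h0
    rw [this, zero_div]
  have h3 := congrArg Complex.im h2
  rw [Complex.im_sum] at h3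
  have h4 : 0 < ∑ j, (EE i j G z / D4 i G z).im :=
    Finset.sum_pos (fun j _ => lt_of_lt_of_le (hz _) (h1 j)) ⟨0, by simp⟩
  rw [h3] at h4
  simp at h4

lemma Cls.TT {n : ℕ} {R : ℝ} {S : Set (Fin n)} {F : (Fin n × Fin 4 → ℂ) → ℂ} (h : Cls R S F)
    (i : Fin n) (hi : i ∈ S) : Cls R (S \ {i}) (TT i F) where
  diff := by
    have : ∀ j ∈ (Finset.univ : Finset (Fin 4)), Differentiable ℂ (_root_.EE i j F) :=
      fun j _ => diff_dl h.diff _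
    exact Differentiable.fun_sum this
  ma := by
    intro z k t
    have hh : ∀ j, MA (_root_.EE i j F) := fun j => h.ma.dl _
    rw [DD_TT]
    have e : ∀ j, _root_.EE i j (DD k F) = DD k (_root_.EE i j F) := fun j => DL_DL_comm _ [k] F
    simp only [_root_.TT, e]
    rw [Finset.mul_sum, ← Finset.sum_add_distrib]
    exact Finset.sum_congr rfl fun j _ => hh j z k t
  real := by
    intro z
    simp only [_root_.TT]
    rw [map_sum]
    exact Finset.sum_congr rfl fun j _ => real_dl h.real _ z
  st := by
    intro L hL hLS
    rw [DL_TT]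
    apply stab_TT i (h.ma.dl L)
    · intro j
      rw [_root_.EE, ← DL_append]
      exact h.st _ (nodup_app hL hLS (nodup3 i j) (by simp)) (mem_app hi hLS (by simp))
    · rw [D4, ← DL_append]
      exact h.st _ (nodup_app hL hLS (nodup4 i) (by simp)) (mem_app hi hLS (by simp))
  pos := by
    intro L hL hLS x hx
    rw [DL_TT]
    apply Finset.sum_pos _ ⟨0, by simp⟩
    intro j _
    rw [_root_.EE, ← DL_append]
    exact h.pos _ (nodup_app hL hLS (nodup3 i j) (by simp)) (mem_app hi hLS (by simp)) x hx

end ops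


section interlace
open Function

lemma mono_ratio {h a : ℂ → ℂ} (hh : Differentiable ℂ h) (ha : Differentiable ℂ a)
    (hr : ∀ x : ℝ, (h x).im = 0) (ar : ∀ x : ℝ, (a x).im = 0)
    (him : ∀ z : ℂ, 0 < z.im → 0 ≤ (h z / a z).im) {p q : ℝ} (hpq : p ≤ q)
    (hne : ∀ x : ℝ, p ≤ x → x ≤ q → a x ≠ 0) : (h p / a p).re ≤ (h q / a q).re := by
  have hd : ∀ x : ℝ, p ≤ x → x ≤ q → HasDerivAt (fun z => h z / a z) (deriv (fun z => h z / a z) (x : ℂ)) (x : ℂ) := by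
    intro x h1 h2
    exact ((hh x).div (ha x) (hne x h1 h2)).hasDerivAt
  have hd' : ∀ x : ℝ, p ≤ x → x ≤ q → HasDerivAt (fun y : ℝ => (h y / a y).re)
      (deriv (fun z => h z / a z) (x : ℂ)).re x := fun x h1 h2 => (hd x h1 h2).real_of_complex
  have hmono : MonotoneOn (fun y : ℝ => (h y / a y).re) (Set.Icc p q) := by
    apply monotoneOn_of_deriv_nonneg (convex_Icc p q)
    · intro x hx
      exact (hd' x hx.1 hx.2).continuousAt.continuousWithinAt
    · intro x hx
      rw [interior_Icc] at hx
      exact (hd' x hx.1.le hx.2.le).differentiableAt.differentiableWithinAt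
    · intro x hx
      rw [interior_Icc] at hx
      rw [(hd' x hx.1.le hx.2.le).deriv]
      set D := deriv (fun z => h z / a z) (x : ℂ)
      have h1 : HasDerivAt (fun t : ℝ => (x : ℂ) + t * Complex.I) Complex.I 0 := by
        have := ((Complex.ofRealCLM.hasDerivAt (x := (0:ℝ))).mul_const Complex.I).const_add (x : ℂ)
        simpa using this
      have h2 : HasDerivAt (fun t : ℝ => h ((x : ℂ) + t * Complex.I) / a ((x : ℂ) + t * Complex.I))
          (D * Complex.I) 0 := by
        have h3 := hd x hx.1.le hx.2.le
        have h4 : HasDerivAt (fun z => h z / a z) D ((x : ℂ) + ((0:ℝ) : ℂ) * Complex.I) := by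
          have e : (x : ℂ) + ((0:ℝ) : ℂ) * Complex.I = (x : ℂ) := by simp
          rw [e]; exact h3
        exact HasDerivAt.comp (h₂ := fun z => h z / a z) (h := fun t : ℝ => (x : ℂ) + t * Complex.I) (0 : ℝ) h4 h1
      have h5 : HasDerivAt (fun t : ℝ => (h ((x : ℂ) + t * Complex.I) / a ((x : ℂ) + t * Complex.I)).im)
          (D * Complex.I).im 0 := by
        exact Complex.imCLM.hasFDerivAt.comp_hasDerivAt (0:ℝ) h2
      have h6 := h5.hasDerivWithinAt (s := Set.Ioi 0)
      rw [hasDerivWithinAt_iff_tendsto_slope' (by simp)] at h6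
      have h7 : (D * Complex.I).im = D.re := by simp
      rw [h7] at h6
      apply ge_of_tendsto h6
      filter_upwards [self_mem_nhdsWithin] with t ht
      have ht' : (0:ℝ) < t := ht
      rw [slope_def_field]
      have e0 : (h ((x : ℂ) + ((0:ℝ):ℂ) * Complex.I) / a ((x : ℂ) + ((0:ℝ):ℂ) * Complex.I)).im = 0 := by
        simp [Complex.div_im, hr, ar]
      rw [e0, sub_zero, sub_zero]
      apply div_nonneg _ ht'.le
      apply him
      simpa using ht'
  exact hmono ⟨le_rfl, hpq⟩ ⟨hpq, le_rfl⟩ hpq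

lemma interlace_step {n : ℕ} {R : ℝ} {S : Set (Fin n)} {H : (Fin n × Fin 4 → ℂ) → ℂ} (hH : Cls R S H)
    (i : Fin n) (hi : i ∈ S) (M : ℝ) (hpos : ∀ x : ℝ, M ≤ x → 0 < TT i H (fun _ => (x : ℂ))) :
    ∃ j, ∀ x : ℝ, M ≤ x → 0 < EE i j H (fun _ => (x : ℂ)) := by
  set a : ℂ → ℂ := fun ζ => D4 i H (fun _ => ζ) with ha
  set h : ℂ → ℂ := fun ζ => TT i H (fun _ => ζ) with hh
  have hdiag : Differentiable ℂ (fun ζ : ℂ => (fun _ => ζ : Fin n × Fin 4 → ℂ)) := by fun_prop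
  have da : Differentiable ℂ a := (diff_dl hH.diff _).comp hdiag
  have dh : Differentiable ℂ h := (hH.TT i hi).diff.comp hdiag
  have dE : ∀ j, Differentiable ℂ (fun ζ => EE i j H (fun _ => ζ)) := fun j =>
    (diff_dl hH.diff _).comp hdiag
  have ra : ∀ x : ℝ, (a x).im = 0 := fun x => (real_dl hH.real _).im_eq (fun _ => x)
  have rh : ∀ x : ℝ, (h x).im = 0 := fun x => (hH.TT i hi).real.im_eq (fun _ => x)
  have rE : ∀ j, ∀ x : ℝ, (EE i j H (fun _ => (x : ℂ))).im = 0 := fun j x =>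
    (real_dl hH.real _).im_eq (fun _ => x)
  have imE : ∀ j, ∀ z : ℂ, 0 < z.im → 0 ≤ (EE i j H (fun _ => z) / a z).im := by
    intro j z hz
    have h4 : D4 i H (fun _ => z) ≠ 0 := hH.st _ (nodup4 i) (by simp [hi]) _ (fun _ => hz)
    have := im_ratio (G := EE i j H) (hH.ma.dl _) (hH.st _ (nodup3 i j) (by simp [hi])) (i, j)
      (fun _ => z) (fun _ => hz) (by rw [DD_EE]; exact h4)
    rw [DD_EE] at this
    exact hz.le.trans this
  have imh : ∀ z : ℂ, 0 < z.im → 0 ≤ (h z / a z).im := by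
    intro z hz
    have : h z / a z = ∑ j, EE i j H (fun _ => z) / a z := by
      rw [← Finset.sum_div]; rfl
    rw [this, Complex.im_sum]
    exact Finset.sum_nonneg fun j _ => imE j z hz
  have apos : ∀ x : ℝ, R ≤ x → 0 < (a x).re := fun x hx =>
    (Complex.pos_iff.1 (hH.pos _ (nodup4 i) (by simp [hi]) x hx)).1
  have hpos' : ∀ x : ℝ, M ≤ x → 0 < (h x).re := fun x hx => (Complex.pos_iff.1 (hpos x hx)).1
  have cre : ∀ f : ℂ → ℂ, Differentiable ℂ f → Continuous fun x : ℝ => (f x).re := by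
    intro f hf
    exact Complex.continuous_re.comp (hf.continuous.comp Complex.continuous_ofReal)
  have divre : ∀ u v : ℂ, v.im = 0 → u.im = 0 → (u / v).re = u.re / v.re := by
    intro u v hv hu
    have e1 : u = (u.re : ℂ) := Complex.ext (by simp) (by simpa using hu)
    have e2 : v = (v.re : ℂ) := Complex.ext (by simp) (by simpa using hv)
    rw [e1, e2, ← Complex.ofReal_div]; simp
  have claim : ∀ x : ℝ, M ≤ x → 0 < (a x).re := by
    intro x1 hx1
    by_contra hcon
    push Not at hcon
    have hx1R : x1 < R := by
      by_contra h'
      push Not at h'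
      linarith [apos x1 h']
    have hcomp : IsCompact (Set.Icc x1 R ∩ {x : ℝ | (a x).re ≤ 0}) :=
      isCompact_Icc.inter_right (isClosed_le (cre a da) continuous_const)
    obtain ⟨x0, hx0, hmax⟩ := hcomp.exists_isGreatest ⟨x1, ⟨le_rfl, hx1R.le⟩, hcon⟩
    have hx0R : x0 < R := by
      by_contra h'
      push Not at h'
      have := apos x0 h'
      have : (a x0).re ≤ 0 := hx0.2
      linarith
    have hap : ∀ y : ℝ, x0 < y → 0 < (a y).re := by
      intro y hy
      by_contra h'
      push Not at h'
      by_cases hyR : y ≤ R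
      · have := hmax ⟨⟨hx0.1.1.trans hy.le, hyR⟩, h'⟩
        linarith
      · push Not at hyR
        linarith [apos y hyR.le]
    set Cc := (h R).re / (a R).re with hCc
    have hCpos : 0 < Cc := div_pos (hpos' R (hx1.trans hx1R.le)) (apos R le_rfl)
    have hlim : (h x0).re ≤ Cc * (a x0).re := by
      have t1 : Filter.Tendsto (fun y : ℝ => (h y).re) (nhdsWithin x0 (Set.Ioi x0)) (nhds (h x0).re) :=
        ((cre h dh).tendsto x0).mono_left nhdsWithin_le_nhds
      have t2 : Filter.Tendsto (fun y : ℝ => Cc * (a y).re) (nhdsWithin x0 (Set.Ioi x0)) (nhds (Cc * (a x0).re)) :=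
        ((continuous_const.mul (cre a da)).tendsto x0).mono_left nhdsWithin_le_nhds
      apply le_of_tendsto_of_tendsto t1 t2
      filter_upwards [Ioo_mem_nhdsGT hx0R] with y hy
      have := mono_ratio dh da rh ra imh hy.2.le (by
        intro x hx _ h0
        have := hap x (lt_of_lt_of_le hy.1 hx)
        rw [h0] at this; simp at this)
      rw [divre _ _ (ra y) (rh y), divre _ _ (ra R) (rh R), ← hCc, div_le_iff₀ (hap y hy.1)] at this
      exact this
    have h1 := hpos' x0 (hx1.trans hx0.1.1)
    have h2 : (a x0).re ≤ 0 := hx0.2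
    nlinarith
  have hM : 0 < (h M).re := hpos' M le_rfl
  have hsum : (h M).re = ∑ j, (EE i j H (fun _ => (M : ℂ))).re := by
    rw [← Complex.re_sum]; rfl
  rw [hsum] at hM
  obtain ⟨j, -, hj⟩ := Finset.exists_lt_of_sum_lt (s := Finset.univ) (f := fun _ : Fin 4 => (0:ℝ))
    (g := fun j => (EE i j H (fun _ => (M : ℂ))).re) (by simpa using hM)
  refine ⟨j, fun x hx => ?_⟩
  have := mono_ratio (dE j) da (rE j) ra (imE j) hx (by
        intro y hy _ h0
        have := claim y hy
        rw [h0] at this; simp at this)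
  rw [divre _ _ (ra M) (rE j M), divre _ _ (ra x) (rE j x)] at this
  have h1 : 0 < (EE i j H (fun _ => (M : ℂ))).re / (a M).re := div_pos hj (claim M le_rfl)
  have h2 := lt_of_lt_of_le h1 this
  rw [Complex.pos_iff]
  exact ⟨(div_pos_iff_of_pos_right (claim x hx)).1 h2, (rE j x).symm⟩

def TL {n : ℕ} (l : List (Fin n)) (F : (Fin n × Fin 4 → ℂ) → ℂ) : (Fin n × Fin 4 → ℂ) → ℂ :=
  l.foldr TT F

lemma TL_cons {n : ℕ} (i : Fin n) (l : List (Fin n)) (F : (Fin n × Fin 4 → ℂ) → ℂ) :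
    TL (i :: l) F = TT i (TL l F) := rfl

lemma DL_TL {n : ℕ} (l : List (Fin n)) (L : List (Fin n × Fin 4)) (F : (Fin n × Fin 4 → ℂ) → ℂ) :
    DL L (TL l F) = TL l (DL L F) := by
  induction l with
  | nil => rfl
  | cons i l ih => rw [TL_cons, DL_TT, ih, TL_cons]

lemma Cls.TL {n : ℕ} {R : ℝ} {S : Set (Fin n)} {F : (Fin n × Fin 4 → ℂ) → ℂ} (h : Cls R S F)
    (l : List (Fin n)) (hl : l.Nodup) (hS : ∀ i ∈ l, i ∈ S) : Cls R (S \ {i | i ∈ l}) (TL l F) := by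
  induction l with
  | nil => simpa [_root_.TL] using h
  | cons i l ih =>
    have h1 := ih (List.nodup_cons.1 hl).2 (fun k hk => hS k (List.mem_cons_of_mem _ hk))
    have h2 := h1.TT i ⟨hS i (by simp), (List.nodup_cons.1 hl).1⟩
    rw [TL_cons]
    have : S \ {k | k ∈ i :: l} = (S \ {k | k ∈ l}) \ {i} := by
      ext k; simp; tauto
    rw [this]; exact h2

def flat {n : ℕ} (l : List (Fin n)) (c : Fin n → Fin 4) : List (Fin n × Fin 4) :=
  l.flatMap fun i => [(i, c i + 1), (i, c i + 2), (i, c i + 3)]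

lemma interlace {n : ℕ} {R : ℝ} (M : ℝ) (l : List (Fin n)) (hl : l.Nodup) :
    ∀ (S : Set (Fin n)) (F : (Fin n × Fin 4 → ℂ) → ℂ), Cls R S F → (∀ i ∈ l, i ∈ S) →
    (∀ x : ℝ, M ≤ x → 0 < TL l F (fun _ => (x : ℂ))) →
    ∃ c : Fin n → Fin 4, ∀ x : ℝ, M ≤ x → 0 < DL (flat l c) F (fun _ => (x : ℂ)) := by
  induction l with
  | nil => intro S F _ _ h; exact ⟨fun _ => 0, h⟩
  | cons i l ih =>
    intro S F hF hS h
    obtain ⟨hil, hl'⟩ := List.nodup_cons.1 hl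
    have hS' : ∀ k ∈ l, k ∈ S := fun k hk => hS k (List.mem_cons_of_mem _ hk)
    obtain ⟨j, hj⟩ := interlace_step (hF.TL l hl' hS') i ⟨hS i (by simp), hil⟩ M h
    have e : EE i j (TL l F) = TL l (EE i j F) := DL_TL l _ F
    rw [e] at hj
    obtain ⟨c, hc⟩ := ih hl' (S \ {i}) (EE i j F) (hF.EE i (hS i (by simp)) j)
      (fun k hk => ⟨hS' k hk, by rintro rfl; exact hil hk⟩) hj
    refine ⟨update c i j, ?_⟩
    have e1 : flat l (update c i j) = flat l c := by
      simp only [flat]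
      apply List.flatMap_congr
      intro k hk
      have : k ≠ i := by rintro rfl; exact hil hk
      rw [update_of_ne this]
    have e2 : flat (i :: l) (update c i j) = [(i, j + 1), (i, j + 2), (i, j + 3)] ++ flat l c := by
      rw [← e1]; simp [flat]
    rw [e2, DL_append, DL_DL_comm]
    exact hc

end interlace


section barrier
open Function

lemma DL_congr_off {ι : Type*} [DecidableEq ι] (L : List ι) (F : (ι → ℂ) → ℂ) :
    ∀ z w : ι → ℂ, (∀ k, k ∉ L → z k = w k) → DL L F z = DL L F w := by
  induction L with
  | nil => intro z w h; rw [show z = w from funext fun k => h k (by simp)]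
  | cons a L ih =>
    intro z w h
    rw [DL_cons]
    simp only [DD]
    have : ∀ c : ℂ, DL L F (update z a c) = DL L F (update w a c) := by
      intro c
      apply ih
      intro k hk
      by_cases hka : k = a
      · subst hka; simp
      · rw [update_of_ne hka, update_of_ne hka]
        exact h k (by simp [hka, hk])
    rw [this, this]

/-- shift the copies of variable `i` by `v` -/
def shv {n : ℕ} (i : Fin n) (v : Fin 4 → ℂ) (z : Fin n × Fin 4 → ℂ) : Fin n × Fin 4 → ℂ :=
  fun k => if k.1 = i then z k + v k.2 else z k

lemma EE_shv {n : ℕ} (i : Fin n) (j : Fin 4) {G : (Fin n × Fin 4 → ℂ) → ℂ} (hG : MA G)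
    (v : Fin 4 → ℂ) (z : Fin n × Fin 4 → ℂ) :
    EE i j G (shv i v z) = EE i j G z + v j * D4 i G z := by
  have h1 : EE i j G (shv i v z) = EE i j G (update z (i, j) (z (i, j) + v j)) := by
    apply DL_congr_off
    rintro ⟨a, l⟩ hk
    by_cases ha : a = i
    · subst ha
      have hl : l = j := by
        have : ∀ l j : Fin 4, ¬(l = j + 1 ∨ l = j + 2 ∨ l = j + 3) → l = j := by decide
        apply this
        simpa using hk
      subst hl
      simp [shv]
    · rw [update_of_ne (by simp [ha])]
      simp [shv, ha]
  rw [h1]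
  have hE : MA (EE i j G) := hG.dl _
  rw [hE.shift, DD_EE]

lemma TT_shv {n : ℕ} (i : Fin n) {G : (Fin n × Fin 4 → ℂ) → ℂ} (hG : MA G)
    (v : Fin 4 → ℂ) (z : Fin n × Fin 4 → ℂ) :
    TT i G (shv i v z) = TT i G z + (∑ j, v j) * D4 i G z := by
  simp only [TT, EE_shv i _ hG]
  rw [Finset.sum_add_distrib, Finset.sum_mul]

lemma D4_shv {n : ℕ} (i : Fin n) (G : (Fin n × Fin 4 → ℂ) → ℂ)
    (v : Fin 4 → ℂ) (z : Fin n × Fin 4 → ℂ) :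
    D4 i G (shv i v z) = D4 i G z := by
  apply DL_congr_off
  rintro ⟨a, l⟩ hk
  have ha : a ≠ i := by
    rintro rfl
    apply hk
    have : ∀ l : Fin 4, l = 0 ∨ l = 1 ∨ l = 2 ∨ l = 3 := by decide
    simpa using this l
  simp [shv, ha]

def C1 {n : ℕ} (i : Fin n) (G : (Fin n × Fin 4 → ℂ) → ℂ) : (Fin n × Fin 4 → ℂ) → ℂ := fun z =>
  DL [(i, 0)] G z + DL [(i, 1)] G z + DL [(i, 2)] G z + DL [(i, 3)] G z

def C2 {n : ℕ} (i : Fin n) (G : (Fin n × Fin 4 → ℂ) → ℂ) : (Fin n × Fin 4 → ℂ) → ℂ := fun z =>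
  DL [(i, 0), (i, 1)] G z + DL [(i, 0), (i, 2)] G z + DL [(i, 0), (i, 3)] G z +
  DL [(i, 1), (i, 2)] G z + DL [(i, 1), (i, 3)] G z + DL [(i, 2), (i, 3)] G z

lemma TT_eq {n : ℕ} (i : Fin n) (G : (Fin n × Fin 4 → ℂ) → ℂ) (z : Fin n × Fin 4 → ℂ) :
    TT i G z = DL [(i, 1), (i, 2), (i, 3)] G z + DL [(i, 0), (i, 2), (i, 3)] G z +
      DL [(i, 0), (i, 1), (i, 3)] G z + DL [(i, 0), (i, 1), (i, 2)] G z := by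
  have e0 : EE i 0 G = DL [(i, 1), (i, 2), (i, 3)] G := rfl
  have e1 : EE i 1 G = DL [(i, 0), (i, 2), (i, 3)] G := by
    apply DL_perm
    have h : ([1 + 1, 1 + 2, 1 + 3] : List (Fin 4)).Perm [0, 2, 3] := by decide
    exact h.map (fun k => (i, k))
  have e2 : EE i 2 G = DL [(i, 0), (i, 1), (i, 3)] G := by
    apply DL_perm
    have h : ([2 + 1, 2 + 2, 2 + 3] : List (Fin 4)).Perm [0, 1, 3] := by decide
    exact h.map (fun k => (i, k))
  have e3 : EE i 3 G = DL [(i, 0), (i, 1), (i, 2)] G := by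
    apply DL_perm
    have h : ([3 + 1, 3 + 2, 3 + 3] : List (Fin 4)).Perm [0, 1, 2] := by decide
    exact h.map (fun k => (i, k))
  simp only [TT, Fin.sum_univ_four]
  rw [e0, e1, e2, e3]

lemma expand_t {n : ℕ} (i : Fin n) {G : (Fin n × Fin 4 → ℂ) → ℂ} (hG : MA G)
    (t : ℂ) (z : Fin n × Fin 4 → ℂ) :
    G (shv i (fun _ => t) z) = G z + C1 i G z * t + C2 i G z * t ^ 2 + TT i G z * t ^ 3
      + D4 i G z * t ^ 4 := by
  obtain ⟨w1, hw1⟩ : ∃ w, w = update z (i, 0) (z (i, 0) + t) := ⟨_, rfl⟩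
  obtain ⟨w2, hw2⟩ : ∃ w, w = update w1 (i, 1) (w1 (i, 1) + t) := ⟨_, rfl⟩
  obtain ⟨w3, hw3⟩ : ∃ w, w = update w2 (i, 2) (w2 (i, 2) + t) := ⟨_, rfl⟩
  obtain ⟨w4, hw4⟩ : ∃ w, w = update w3 (i, 3) (w3 (i, 3) + t) := ⟨_, rfl⟩
  have s1 : ∀ L, DL L G w1 = DL L G z + t * DL ((i, 0) :: L) G z := by
    intro L; rw [hw1]; exact (hG.dl L).shift _ _ _
  have s2 : ∀ L, DL L G w2 = DL L G w1 + t * DL ((i, 1) :: L) G w1 := by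
    intro L; rw [hw2]; exact (hG.dl L).shift _ _ _
  have s3 : ∀ L, DL L G w3 = DL L G w2 + t * DL ((i, 2) :: L) G w2 := by
    intro L; rw [hw3]; exact (hG.dl L).shift _ _ _
  have s4 : ∀ L, DL L G w4 = DL L G w3 + t * DL ((i, 3) :: L) G w3 := by
    intro L; rw [hw4]; exact (hG.dl L).shift _ _ _
  have hw : shv i (fun _ => t) z = w4 := by
    rw [hw4, hw3, hw2, hw1]
    funext ⟨a, l⟩
    by_cases ha : a = i
    · subst ha
      fin_cases l <;> simp [shv, update_apply]
    · simp [shv, ha, update_apply]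
  rw [hw]
  have := s4 []
  rw [DL_nil] at this
  rw [this, TT_eq, C1, C2, D4]
  have e : G z = DL [] G z := rfl
  have e3 : G w3 = DL [] G w3 := rfl
  rw [e, e3]
  simp only [s3, s2, s1]
  ring

lemma lower4 {n : ℕ} (i : Fin n) {G : (Fin n × Fin 4 → ℂ) → ℂ} (hG : MA G)
    (hd : Differentiable ℂ G)
    (hs : ∀ L : List (Fin n × Fin 4), L.Nodup → (∀ k ∈ L, k.1 = i) → Stab (DL L G))
    (z : Fin n × Fin 4 → ℂ) (hz : ∀ k, 0 ≤ (z k).im) :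
    ‖D4 i G z‖ * ((z (i, 0)).im * (z (i, 1)).im * (z (i, 2)).im * (z (i, 3)).im) ≤ ‖G z‖ := by
  have key : ∀ z : Fin n × Fin 4 → ℂ, (∀ k, 0 < (z k).im) →
      ‖D4 i G z‖ * ((z (i, 0)).im * (z (i, 1)).im * (z (i, 2)).im * (z (i, 3)).im) ≤ ‖G z‖ := by
    intro z hz
    have n1 : ‖DL [(i, 3)] G z‖ * (z (i, 3)).im ≤ ‖G z‖ :=
      norm_lower hG (hs [] (by simp) (by simp)) (i, 3) z hz
    have n2 : ‖DL [(i, 2), (i, 3)] G z‖ * (z (i, 2)).im ≤ ‖DL [(i, 3)] G z‖ :=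
      norm_lower (hG.dl _) (hs [(i, 3)] (by simp) (by simp)) (i, 2) z hz
    have n3 : ‖DL [(i, 1), (i, 2), (i, 3)] G z‖ * (z (i, 1)).im ≤ ‖DL [(i, 2), (i, 3)] G z‖ :=
      norm_lower (hG.dl _) (hs [(i, 2), (i, 3)] (by simp) (by simp)) (i, 1) z hz
    have n4 : ‖D4 i G z‖ * (z (i, 0)).im ≤ ‖DL [(i, 1), (i, 2), (i, 3)] G z‖ :=
      norm_lower (hG.dl _) (hs [(i, 1), (i, 2), (i, 3)] (by simp) (by simp)) (i, 0) z hz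
    have p1 := (hz (i, 1)).le
    have p2 := (hz (i, 2)).le
    have p3 := (hz (i, 3)).le
    calc _ = ((‖D4 i G z‖ * (z (i, 0)).im) * (z (i, 1)).im) * (z (i, 2)).im * (z (i, 3)).im := by ring
      _ ≤ (‖DL [(i, 1), (i, 2), (i, 3)] G z‖ * (z (i, 1)).im) * (z (i, 2)).im * (z (i, 3)).im := by gcongr
      _ ≤ ‖DL [(i, 2), (i, 3)] G z‖ * (z (i, 2)).im * (z (i, 3)).im := by gcongr
      _ ≤ ‖DL [(i, 3)] G z‖ * (z (i, 3)).im := by gcongr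
      _ ≤ _ := n1
  have hc : Continuous (fun ε : ℝ => (fun k => z k + ε * Complex.I : Fin n × Fin 4 → ℂ)) := by
    fun_prop
  have c1 : Continuous (fun ε : ℝ => ‖G (fun k => z k + ε * Complex.I)‖) :=
    (hd.continuous.comp hc).norm
  have c4 : Continuous (fun ε : ℝ => ‖D4 i G (fun k => z k + ε * Complex.I)‖) :=
    ((diff_dl hd _).continuous.comp hc).norm
  have ci : ∀ k, Continuous (fun ε : ℝ => (z k + ε * Complex.I).im) := by
    intro k; fun_prop
  have t1 := (c1.tendsto 0).mono_left (nhdsWithin_le_nhds (s := Set.Ioi 0))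
  have t2 := (((c4.mul ((((ci (i, 0)).mul (ci (i, 1))).mul (ci (i, 2))).mul (ci (i, 3))))).tendsto 0).mono_left (nhdsWithin_le_nhds (s := Set.Ioi 0))
  have := le_of_tendsto_of_tendsto t2 t1 (by
    filter_upwards [self_mem_nhdsWithin] with ε hε
    apply key
    intro k
    have h1 : (0:ℝ) < ε := hε
    have := hz k
    simp
    linarith)
  simpa using this

lemma nonvan {n : ℕ} (i : Fin n) {G : (Fin n × Fin 4 → ℂ) → ℂ} (hG : MA G)
    (hd : Differentiable ℂ G)
    (hs : ∀ L : List (Fin n × Fin 4), L.Nodup → (∀ k ∈ L, k.1 = i) → Stab (DL L G))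
    (z : Fin n × Fin 4 → ℂ) (hz : ∀ k, 0 ≤ (z k).im) (t : ℂ) (ht : 0 < t.im)
    (h4 : D4 i G z ≠ 0) : G (shv i (fun _ => t) z) ≠ 0 := by
  intro h0
  have h := lower4 i hG hd hs (shv i (fun _ => t) z) (by
    intro k
    simp only [shv]
    split_ifs
    · have := hz k
      simp; linarith
    · exact hz k)
  rw [h0, D4_shv, norm_zero] at h
  have p : ∀ l, 0 < (shv i (fun _ => t) z (i, l)).im := by
    intro l
    have := hz (i, l)
    simp [shv]; linarith
  have := p 0
  have := p 1
  have := p 2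
  have := p 3
  have : 0 < ‖D4 i G z‖ := norm_pos_iff.2 h4
  have : 0 < ‖D4 i G z‖ * ((shv i (fun _ => t) z (i, 0)).im * (shv i (fun _ => t) z (i, 1)).im *
    (shv i (fun _ => t) z (i, 2)).im * (shv i (fun _ => t) z (i, 3)).im) := by positivity
  linarith

def Bar {n : ℕ} (Φ : ℝ) (S : Set (Fin n)) (β : Fin n → ℝ) (F : (Fin n × Fin 4 → ℂ) → ℂ) : Prop :=
  ∀ L : List (Fin n × Fin 4), L.Nodup → (∀ k ∈ L, k.1 ∈ S) → ∀ x : Fin n × Fin 4 → ℝ,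
    (∀ k, β k.1 ≤ x k) → 0 < (DL L F (fun k => (x k : ℂ))).re ∧
      ∀ κ, κ ∉ L → κ.1 ∈ S → (DL (κ :: L) F (fun k => (x k : ℂ))).re ≤ Φ * (DL L F (fun k => (x k : ℂ))).re

end barrier


section barrier2
open Function

lemma Bar.TT {n : ℕ} {R Φ d : ℝ} {S : Set (Fin n)} {β : Fin n → ℝ} {F : (Fin n × Fin 4 → ℂ) → ℂ}
    (hΦ : 0 < Φ) (hd : 16 * Φ * d = 9) (hC : Cls R S F) (hB : Bar Φ S β F) (i : Fin n) (hi : i ∈ S) :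
    Bar Φ (S \ {i}) (update β i (β i - d)) (TT i F) := by
  intro L hL hLS x hx
  obtain ⟨G, hGdef⟩ : ∃ G, G = DL L F := ⟨_, rfl⟩
  have hG : MA G := by rw [hGdef]; exact hC.ma.dl L
  have hGr : RealF G := by rw [hGdef]; exact real_dl hC.real L
  have hGd : Differentiable ℂ G := by rw [hGdef]; exact diff_dl hC.diff L
  have hGs : ∀ L' : List (Fin n × Fin 4), L'.Nodup → (∀ k ∈ L', k.1 = i) → Stab (DL L' G) := by
    intro L' h1 h2
    rw [hGdef, ← DL_append]
    exact hC.st _ (nodup_app hL hLS h1 h2) (mem_app hi hLS h2)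
  obtain ⟨bt, hbt⟩ : ∃ b, b = (x (i, 0) + x (i, 1) + x (i, 2) + x (i, 3)) / 4 + d := ⟨_, rfl⟩
  have hbti : β i ≤ bt := by
    have h : ∀ l, β i - d ≤ x (i, l) := by
      intro l; have := hx (i, l); simpa using this
    linarith [h 0, h 1, h 2, h 3]
  obtain ⟨xt, hxt⟩ : ∃ y : Fin n × Fin 4 → ℝ, y = fun k => if k.1 = i then bt else x k := ⟨_, rfl⟩
  have hxtβ : ∀ k, β k.1 ≤ xt k := by
    intro k
    rw [hxt]
    by_cases hk : k.1 = i
    · simp [hk, hbti]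
    · have := hx k
      simp only [hk, if_false]
      rwa [update_of_ne hk] at this
  obtain ⟨X, hX⟩ : ∃ X : Fin n × Fin 4 → ℂ, X = fun k => (xt k : ℂ) := ⟨_, rfl⟩
  have hXim : ∀ k, (X k).im = 0 := by intro k; simp [hX]
  have hxe : (fun k => (x k : ℂ)) = shv i (fun l => ((x (i, l) - bt : ℝ) : ℂ)) X := by
    funext ⟨a, l⟩
    by_cases ha : a = i
    · subst ha; simp [shv, hX, hxt]
    · simp [shv, hX, hxt, ha]
  have im0 : ∀ H, RealF H → ∀ L', (DL L' H X).im = 0 := by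
    intro H hH L'
    rw [hX]; exact (real_dl hH L').im_eq xt
  have imC : ∀ H, RealF H → (H X).im = 0 ∧ (C1 i H X).im = 0 ∧ (C2 i H X).im = 0 ∧ (_root_.TT i H X).im = 0
      ∧ (D4 i H X).im = 0 := by
    intro H hH
    have h := im0 H hH
    refine ⟨h [], ?_, ?_, ?_, h _⟩
    · simp [C1, h]
    · simp [C2, h]
    · rw [TT_eq]; simp [h]
  have toR : ∀ u : ℂ, u.im = 0 → u = (u.re : ℂ) := fun u hu => Complex.ext (by simp) (by simpa using hu)
  have expR : ∀ H, MA H → RealF H → ∀ t : ℂ, H (shv i (fun _ => t) X) =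
      ((H X).re : ℂ) + ((C1 i H X).re : ℂ) * t + ((C2 i H X).re : ℂ) * t ^ 2 + ((_root_.TT i H X).re : ℂ) * t ^ 3
      + ((D4 i H X).re : ℂ) * t ^ 4 := by
    intro H hH hr t
    obtain ⟨h0, h1, h2, h3, h4⟩ := imC H hr
    rw [expand_t i hH, ← toR _ h0, ← toR _ h1, ← toR _ h2, ← toR _ h3, ← toR _ h4]
  have TTx : ∀ H, MA H → RealF H → (_root_.TT i H (fun k => (x k : ℂ))).re =
      (_root_.TT i H X).re - 4 * d * (D4 i H X).re := by
    intro H hH hr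
    obtain ⟨h0, h1, h2, h3, h4⟩ := imC H hr
    rw [hxe, TT_shv i hH]
    have : (∑ j : Fin 4, ((x (i, j) - bt : ℝ) : ℂ)) = ((-4 * d : ℝ) : ℂ) := by
      rw [← Complex.ofReal_sum, Fin.sum_univ_four, hbt]
      congr 1; ring
    rw [this, Complex.add_re, Complex.re_ofReal_mul]
    ring
  have hp : ∀ L' : List (Fin n × Fin 4), L'.Nodup → (∀ k ∈ L', k.1 = i) → 0 < (DL L' G X).re := by
    intro L' h1 h2
    rw [hGdef, ← DL_append, hX]
    exact (hB _ (nodup_app hL hLS h1 h2) (mem_app hi hLS h2) xt hxtβ).1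
  have hfst : ∀ L' : List (Fin 4), L'.Nodup → 0 < (DL (L'.map fun l => (i, l)) G X).re := by
    intro L' h
    apply hp
    · exact h.map (fun a b h => by simpa using h)
    · intro k hk
      obtain ⟨l, -, rfl⟩ := List.mem_map.1 hk
      rfl
  have p0 : 0 < (G X).re := hfst [] (by decide)
  have p1 : 0 < (C1 i G X).re := by
    have a0 := hfst [0] (by decide)
    have a1 := hfst [1] (by decide)
    have a2 := hfst [2] (by decide)
    have a3 := hfst [3] (by decide)
    simp only [List.map] at a0 a1 a2 a3
    simp only [C1, Complex.add_re]
    linarith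
  have p2 : 0 < (C2 i G X).re := by
    have a0 := hfst [0, 1] (by decide)
    have a1 := hfst [0, 2] (by decide)
    have a2 := hfst [0, 3] (by decide)
    have a3 := hfst [1, 2] (by decide)
    have a4 := hfst [1, 3] (by decide)
    have a5 := hfst [2, 3] (by decide)
    simp only [List.map] at a0 a1 a2 a3 a4 a5
    simp only [C2, Complex.add_re]
    linarith
  have p3 : 0 < (_root_.TT i G X).re := by
    have a0 := hfst [0, 1, 2] (by decide)
    have a1 := hfst [0, 1, 3] (by decide)
    have a2 := hfst [0, 2, 3] (by decide)
    have a3 := hfst [1, 2, 3] (by decide)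
    simp only [List.map] at a0 a1 a2 a3
    rw [TT_eq]
    simp only [Complex.add_re]
    linarith
  have p4 : 0 < (D4 i G X).re := hfst [0, 1, 2, 3] (by decide)
  have hGB := hB L hL (fun k hk => (hLS k hk).1) xt hxtβ
  have h1 : (C1 i G X).re ≤ 4 * Φ * (G X).re := by
    have h : ∀ l, (DL [(i, l)] G X).re ≤ Φ * (G X).re := by
      intro l
      rw [hGdef, ← DL_append, hX]
      exact hGB.2 (i, l) (fun hk => (hLS _ hk).2 rfl) hi
    simp only [C1, Complex.add_re]
    linarith [h 0, h 1, h 2, h 3]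
  have h0 : ∀ t : ℂ, 0 < t.im → ((G X).re : ℂ) + ((C1 i G X).re : ℂ) * t + ((C2 i G X).re : ℂ) * t ^ 2
      + ((_root_.TT i G X).re : ℂ) * t ^ 3 + ((D4 i G X).re : ℂ) * t ^ 4 ≠ 0 := by
    intro t ht
    rw [← expR G hG hGr t]
    apply nonvan i hG hGd hGs X (fun k => (hXim k).ge) t ht
    intro h; rw [h] at p4; simp at p4
  obtain ⟨q1, q2⟩ := quartic_barrier _ _ _ _ _ Φ d p0 p1 p2 p3 p4 hΦ hd h0 h1
  have hTG : DL L (_root_.TT i F) = _root_.TT i G := by rw [DL_TT, hGdef]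
  refine ⟨?_, ?_⟩
  · rw [hTG, TTx G hG hGr]; exact q1
  · intro κ hκL hκS
    have hG' : MA (DD κ G) := hG.dd κ
    have hGr' : RealF (DD κ G) := real_dd hGr κ
    have e : DL (κ :: L) (_root_.TT i F) = _root_.TT i (DD κ G) := by
      rw [DL_TT, hGdef]; rfl
    rw [e, hTG, TTx G hG hGr, TTx _ hG' hGr']
    have hκi : κ.1 ≠ i := hκS.2
    apply q2 _ (C1 i (DD κ G) X).re (C2 i (DD κ G) X).re
    · intro t w ht hw
      rw [← expR G hG hGr t, ← expR _ hG' hGr' t]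
      have e1 : G (shv i (fun _ => t) X) + w * DD κ G (shv i (fun _ => t) X) =
          G (shv i (fun _ => t) (update X κ (X κ + w))) := by
        rw [← hG.shift]
        congr 1
        funext k
        by_cases hk : k = κ
        · subst hk; simp [shv, hκi]
        · simp [shv, update_of_ne hk]
      rw [e1]
      apply nonvan i hG hGd hGs _ _ t ht
      · have e2 : D4 i G (update X κ (X κ + w)) = D4 i G X + w * D4 i (DD κ G) X := by
          have h : MA (D4 i G) := hG.dl _
          rw [h.shift]
          congr 2
          exact congrFun (DL_DL_comm [κ] _ G) X
        rw [e2]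
        have pe : 0 < (D4 i (DD κ G) X).re := by
          have : D4 i (DD κ G) = DL ([(i, 0), (i, 1), (i, 2), (i, 3)] ++ (κ :: L)) F := by
            rw [DL_append, hGdef]; rfl
          rw [this, hX]
          have hL2 : (κ :: L).Nodup := List.nodup_cons.2 ⟨hκL, hL⟩
          have hLS2 : ∀ k ∈ κ :: L, k.1 ∈ S \ {i} := by
            intro k hk
            rcases List.mem_cons.1 hk with h | h
            · rw [h]; exact hκS
            · exact hLS k h
          exact (hB _ (nodup_app hL2 hLS2 (nodup4 i) (by simp)) (mem_app hi hLS2 (by simp)) xt hxtβ).1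
        intro h
        have h' := congrArg Complex.im h
        rw [toR _ (imC G hGr).2.2.2.2, toR _ (imC _ hGr').2.2.2.2] at h'
        simp at h'
        rcases h' with h' | h'
        · linarith
        · linarith
      · intro k
        by_cases hk : k = κ
        · subst hk; simp [hXim, hw.le]
        · rw [update_of_ne hk]; exact (hXim k).ge
    · have := hGB.2 κ hκL hκS.1
      rw [hGdef, hX]; exact this

lemma Bar.TL {n : ℕ} {R Φ d b : ℝ} {S : Set (Fin n)} {F : (Fin n × Fin 4 → ℂ) → ℂ}
    (hΦ : 0 < Φ) (hd : 16 * Φ * d = 9) (hC : Cls R S F) (hB : Bar Φ S (fun _ => b) F)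
    (l : List (Fin n)) (hl : l.Nodup) (hS : ∀ i ∈ l, i ∈ S) :
    Bar Φ (S \ {i | i ∈ l}) (fun i => if i ∈ l then b - d else b) (TL l F) := by
  induction l with
  | nil => simpa [_root_.TL] using hB
  | cons i l ih =>
    have hl1 := (List.nodup_cons.1 hl).1
    have hl2 := (List.nodup_cons.1 hl).2
    have hS2 : ∀ k ∈ l, k ∈ S := fun k hk => hS k (List.mem_cons_of_mem _ hk)
    have h1 := ih hl2 hS2
    have h2 := Bar.TT hΦ hd (hC.TL l hl2 hS2) h1 i ⟨hS i (by simp), hl1⟩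
    rw [TL_cons]
    have e1 : S \ {k | k ∈ i :: l} = (S \ {k | k ∈ l}) \ {i} := by
      ext k; simp; tauto
    have e2 : (fun k => if k ∈ i :: l then b - d else b) =
        update (fun k => if k ∈ l then b - d else b) i ((if i ∈ l then b - d else b) - d) := by
      funext k
      by_cases hk : k = i
      · subst hk; simp [hl1]
      · simp [hk]
    rw [e1, e2]; exact h2

lemma TL_pos {n : ℕ} {R Φ d b : ℝ} {F : (Fin n × Fin 4 → ℂ) → ℂ}
    (hΦ : 0 < Φ) (hd : 16 * Φ * d = 9) (hC : Cls R Set.univ F) (hB : Bar Φ Set.univ (fun _ => b) F)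
    (x : ℝ) (hx : b - d ≤ x) : 0 < TL (List.finRange n) F (fun _ => (x : ℂ)) := by
  have h := (Bar.TL hΦ hd hC hB (List.finRange n) (List.nodup_finRange n) (by simp)) [] (by simp) (by simp)
    (fun _ => x) (by simpa using fun _ => hx)
  have hr := (hC.TL (List.finRange n) (List.nodup_finRange n) (by simp)).real.im_eq (fun _ => x)
  rw [Complex.pos_iff]
  exact ⟨h.1, hr.symm⟩

lemma coloring {n : ℕ} {R Φ d b : ℝ} {F : (Fin n × Fin 4 → ℂ) → ℂ}
    (hΦ : 0 < Φ) (hd : 16 * Φ * d = 9) (hC : Cls R Set.univ F) (hB : Bar Φ Set.univ (fun _ => b) F) :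
    ∃ c : Fin n → Fin 4, ∀ x : ℝ, b - d ≤ x → 0 < DL (flat (List.finRange n) c) F (fun _ => (x : ℂ)) :=
  interlace (b - d) (List.finRange n) (List.nodup_finRange n) Set.univ F hC (by simp)
    (TL_pos hΦ hd hC hB)

end barrier2


section mats

lemma quad_ineq {n : ℕ} {C : Matrix (Fin n) (Fin n) ℂ} (hC : C.PosSemidef) (u e : Fin n → ℂ) (s : ℝ) (hs : 0 < s) :
    2 * (star u ⬝ᵥ (C *ᵥ e)).re ≤ s * (star u ⬝ᵥ (C *ᵥ u)).re + s⁻¹ * (star e ⬝ᵥ (C *ᵥ e)).re := by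
  have h := hC.re_dotProduct_nonneg ((s : ℂ) • u - e)
  have hsym : (star e ⬝ᵥ (C *ᵥ u)).re = (star u ⬝ᵥ (C *ᵥ e)).re := by
    have h1 : star (star e ⬝ᵥ (C *ᵥ u)) = star u ⬝ᵥ (C *ᵥ e) := by
      rw [Matrix.star_dotProduct, star_mulVec, hC.isHermitian.eq, ← Matrix.dotProduct_mulVec, star_star]
    rw [← h1]; simp
  simp only [Matrix.mulVec_sub, Matrix.mulVec_smul, star_sub, star_smul, sub_dotProduct, dotProduct_sub,
    smul_dotProduct, dotProduct_smul, smul_eq_mul] at h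
  simp at h
  rw [hsym] at h
  have : 0 ≤ s * (s * (star u ⬝ᵥ (C *ᵥ u)).re + s⁻¹ * (star e ⬝ᵥ (C *ᵥ e)).re - 2 * (star u ⬝ᵥ (C *ᵥ e)).re) := by
    have e1 : s * s⁻¹ = 1 := mul_inv_cancel₀ hs.ne'
    have e2 : s * (s * (star u ⬝ᵥ (C *ᵥ u)).re + s⁻¹ * (star e ⬝ᵥ (C *ᵥ e)).re - 2 * (star u ⬝ᵥ (C *ᵥ e)).re)
        = s * (s * (star u ⬝ᵥ (C *ᵥ u)).re) + (s * s⁻¹) * (star e ⬝ᵥ (C *ᵥ e)).re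
          - 2 * (s * (star u ⬝ᵥ (C *ᵥ e)).re) := by ring
    rw [e2, e1]
    linarith
  have := nonneg_of_mul_nonneg_right this hs
  linarith

/-- `diag y - A` with the rows in `Y` replaced by those of the identity. -/
def M1 {n : ℕ} (A : Matrix (Fin n) (Fin n) ℂ) (Y : Finset (Fin n)) (y : Fin n → ℂ) : Matrix (Fin n) (Fin n) ℂ :=
  Matrix.of fun i k => if i ∈ Y then (1 : Matrix (Fin n) (Fin n) ℂ) i k else (Matrix.diagonal y - A) i k

lemma M1_mulVec {n : ℕ} (A : Matrix (Fin n) (Fin n) ℂ) (Y : Finset (Fin n)) (y u : Fin n → ℂ) (i : Fin n) :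
    (M1 A Y y *ᵥ u) i = if i ∈ Y then u i else y i * u i - (A *ᵥ u) i := by
  by_cases h : i ∈ Y
  · have : (M1 A Y y *ᵥ u) i = ((1 : Matrix (Fin n) (Fin n) ℂ) *ᵥ u) i := by
      simp [M1, Matrix.mulVec, h]
    rw [this]; simp [h]
  · have : (M1 A Y y *ᵥ u) i = ((Matrix.diagonal y - A) *ᵥ u) i := by
      simp [M1, Matrix.mulVec, h]
    rw [this]; simp [h, Matrix.sub_mulVec, Matrix.mulVec_diagonal]

lemma M1_form {n : ℕ} (A : Matrix (Fin n) (Fin n) ℂ) (Y : Finset (Fin n)) (y u : Fin n → ℂ)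
    (hY : ∀ i ∈ Y, u i = 0) :
    star u ⬝ᵥ (A *ᵥ u) = ∑ i, y i * (Complex.normSq (u i) : ℂ) - star u ⬝ᵥ (M1 A Y y *ᵥ u) := by
  simp only [dotProduct]
  rw [← Finset.sum_sub_distrib]
  apply Finset.sum_congr rfl
  intro i _
  rw [M1_mulVec]
  by_cases h : i ∈ Y
  · simp [hY i h]
  · rw [if_neg h, ← Complex.mul_conj]
    simp only [Pi.star_apply, RCLike.star_def]
    ring

lemma M1_det_ne {n : ℕ} {A : Matrix (Fin n) (Fin n) ℂ} (hA : A.PosSemidef) (Y : Finset (Fin n)) (y : Fin n → ℂ)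
    (hy : ∀ i, 0 < (y i).im) : (M1 A Y y).det ≠ 0 := by
  intro h0
  obtain ⟨v, hv, hv0⟩ := Matrix.exists_mulVec_eq_zero_iff.2 h0
  have hY : ∀ i ∈ Y, v i = 0 := by
    intro i hi
    have := congrFun hv0 i
    rw [M1_mulVec] at this
    simpa [hi] using this
  have hf := M1_form A Y y v hY
  rw [hv0, dotProduct_zero, sub_zero] at hf
  have him : (star v ⬝ᵥ (A *ᵥ v)).im = 0 := by
    have := hA.dotProduct_mulVec_nonneg v
    exact (Complex.nonneg_iff.1 this).2.symm
  rw [hf, Complex.im_sum] at him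
  apply hv
  funext i
  have h1 := (Finset.sum_eq_zero_iff_of_nonneg (by
    intro i _
    simp only [Complex.im_mul_ofReal]
    exact mul_nonneg (hy i).le (Complex.normSq_nonneg _))).1 him i (Finset.mem_univ _)
  simp only [Complex.im_mul_ofReal] at h1
  rcases mul_eq_zero.1 h1 with h | h
  · exact absurd h (hy i).ne'
  · simpa using h

lemma updateRow_M1 {n : ℕ} (A : Matrix (Fin n) (Fin n) ℂ) (Y : Finset (Fin n)) (y : Fin n → ℂ) (k : Fin n) :
    (M1 A Y y).updateRow k (Pi.single k 1) = M1 A (insert k Y) y := by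
  ext i j
  by_cases h : i = k
  · subst h
    simp [M1, Matrix.one_apply, Pi.single_apply, eq_comm]
  · simp [M1, Matrix.updateRow_ne h, h]

lemma form_ge {n : ℕ} {A : Matrix (Fin n) (Fin n) ℂ} (hA1 : ((1 : Matrix (Fin n) (Fin n) ℂ) - A).PosSemidef)
    (u : Fin n → ℂ) : (star u ⬝ᵥ (A *ᵥ u)).re ≤ ∑ i, Complex.normSq (u i) := by
  have h := hA1.re_dotProduct_nonneg u
  rw [Matrix.sub_mulVec, dotProduct_sub, Matrix.one_mulVec] at h
  have e : star u ⬝ᵥ u = ((∑ i, Complex.normSq (u i) : ℝ) : ℂ) := by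
    simp only [dotProduct]
    rw [Complex.ofReal_sum]
    apply Finset.sum_congr rfl
    intro i _
    rw [← Complex.mul_conj]; simp [mul_comm]
  rw [e] at h
  simp at h
  simpa using h

lemma ratio_lemma {n : ℕ} {A : Matrix (Fin n) (Fin n) ℂ} (hA : A.PosSemidef)
    (hA1 : ((1 : Matrix (Fin n) (Fin n) ℂ) - A).PosSemidef) {b : ℝ} (hb : 1 < b)
    (Y : Finset (Fin n)) (x : Fin n → ℝ) (hx : ∀ i, b ≤ x i) (k : Fin n) (hk : k ∉ Y) :
    ∃ ρ : ℝ, 0 < ρ ∧ ρ ≤ (1 - (A k k).re) / b + (A k k).re / (b - 1) ∧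
      (M1 A (insert k Y) (fun i => (x i : ℂ))).det = (ρ : ℂ) * (M1 A Y (fun i => (x i : ℂ))).det := by
  obtain ⟨y, hy⟩ : ∃ y : Fin n → ℂ, y = fun i => (x i : ℂ) := ⟨_, rfl⟩
  rw [← hy]
  have sumre : ∀ u : Fin n → ℂ, (∑ i, y i * (Complex.normSq (u i) : ℂ)) =
      ((∑ i, x i * Complex.normSq (u i) : ℝ) : ℂ) := by
    intro u; rw [hy]; push_cast; rfl
  have sumge : ∀ u : Fin n → ℂ, b * ∑ i, Complex.normSq (u i) ≤ ∑ i, x i * Complex.normSq (u i) := by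
    intro u
    rw [Finset.mul_sum]
    exact Finset.sum_le_sum fun i _ => mul_le_mul_of_nonneg_right (hx i) (Complex.normSq_nonneg _)
  have nspos : ∀ u : Fin n → ℂ, u ≠ 0 → 0 < ∑ i, Complex.normSq (u i) := by
    intro u hu
    obtain ⟨i, hi⟩ := Function.ne_iff.1 hu
    exact Finset.sum_pos' (fun i _ => Complex.normSq_nonneg _) ⟨i, Finset.mem_univ _, Complex.normSq_pos.2 hi⟩
  have hdet : (M1 A Y y).det ≠ 0 := by
    intro h0
    obtain ⟨v, hv, hv0⟩ := Matrix.exists_mulVec_eq_zero_iff.2 h0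
    have hY : ∀ i ∈ Y, v i = 0 := by
      intro i hi
      have := congrFun hv0 i
      rw [M1_mulVec] at this
      simpa [hi] using this
    have hf := M1_form A Y y v hY
    rw [hv0, dotProduct_zero, sub_zero, sumre] at hf
    have h1 := form_ge hA1 v
    rw [hf, Complex.ofReal_re] at h1
    have h2 := sumge v
    have h3 := nspos v hv
    nlinarith
  have hu : ∃ u, M1 A Y y *ᵥ u = Pi.single k 1 := by
    refine ⟨(M1 A Y y)⁻¹ *ᵥ Pi.single k 1, ?_⟩
    rw [Matrix.mulVec_mulVec, Matrix.mul_nonsing_inv _ (isUnit_iff_ne_zero.2 hdet), Matrix.one_mulVec]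
  obtain ⟨u, hu⟩ := hu
  have hdu : (M1 A (insert k Y) y).det = u k * (M1 A Y y).det := by
    rw [← updateRow_M1, ← Matrix.adjugate_apply]
    have h1 : (M1 A Y y).adjugate *ᵥ (M1 A Y y *ᵥ u) = (M1 A Y y).det • u := by
      rw [Matrix.mulVec_mulVec, Matrix.adjugate_mul, Matrix.smul_mulVec, Matrix.one_mulVec]
    rw [hu] at h1
    have h2 := congrFun h1 k
    simp at h2
    rw [h2, mul_comm]
  have hY : ∀ i ∈ Y, u i = 0 := by
    intro i hi
    have := congrFun hu i
    rw [M1_mulVec, if_pos hi] at this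
    rw [this]
    have : i ≠ k := by rintro rfl; exact hk hi
    simp [this]
  have hf := M1_form A Y y u hY
  rw [hu, sumre] at hf
  have e1 : star u ⬝ᵥ (Pi.single k 1 : Fin n → ℂ) = star (u k) := by simp
  rw [e1] at hf
  have him : (star u ⬝ᵥ (A *ᵥ u)).im = 0 :=
    (Complex.nonneg_iff.1 (hA.dotProduct_mulVec_nonneg u)).2.symm
  have hukim : (u k).im = 0 := by
    have := congrArg Complex.im hf
    rw [him] at this
    simpa using this.symm
  have hukre : (star u ⬝ᵥ (A *ᵥ u)).re = ∑ i, x i * Complex.normSq (u i) - (u k).re := by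
    have := congrArg Complex.re hf
    simpa using this
  have huk : u k = ((u k).re : ℂ) := Complex.ext (by simp) (by simpa using hukim)
  have hne : u ≠ 0 := by
    rintro rfl
    have := congrFun hu k
    simp at this
  have g1 := form_ge hA1 u
  have g2 := sumge u
  have g3 := nspos u hne
  refine ⟨(u k).re, by nlinarith, ?_, by rw [← huk]; exact hdu⟩
  have q1 := quad_ineq hA1 u (Pi.single k 1) b (by linarith)
  have q2 := quad_ineq hA u (Pi.single k 1) (b - 1) (by linarith)
  have e2 : (star u ⬝ᵥ ((1 - A) *ᵥ (Pi.single k 1 : Fin n → ℂ))).re = (u k).re - (star u ⬝ᵥ (A *ᵥ (Pi.single k 1 : Fin n → ℂ))).re := by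
    rw [Matrix.sub_mulVec, dotProduct_sub, Matrix.one_mulVec, e1]; simp
  have e3 : (star u ⬝ᵥ ((1 - A) *ᵥ u)).re = ∑ i, Complex.normSq (u i) - (star u ⬝ᵥ (A *ᵥ u)).re := by
    rw [Matrix.sub_mulVec, dotProduct_sub, Matrix.one_mulVec]
    have e : star u ⬝ᵥ u = ((∑ i, Complex.normSq (u i) : ℝ) : ℂ) := by
      simp only [dotProduct]
      rw [Complex.ofReal_sum]
      apply Finset.sum_congr rfl
      intro i _
      rw [← Complex.mul_conj]; simp [mul_comm]
    rw [e, Complex.sub_re, Complex.ofReal_re]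
  have e4 : (star (Pi.single k 1 : Fin n → ℂ) ⬝ᵥ (A *ᵥ (Pi.single k 1 : Fin n → ℂ))) = A k k := by
    rw [← Pi.single_star]; simp
  have e5 : (star (Pi.single k 1 : Fin n → ℂ) ⬝ᵥ ((1 - A) *ᵥ (Pi.single k 1 : Fin n → ℂ))) = 1 - A k k := by
    rw [← Pi.single_star]; simp
  rw [e2, e3, e5] at q1
  rw [e4] at q2
  simp only [Complex.sub_re, Complex.one_re] at q1
  rw [div_eq_inv_mul, div_eq_inv_mul]
  nlinarith

lemma M1_pos {n : ℕ} {A : Matrix (Fin n) (Fin n) ℂ} (hA : A.PosSemidef)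
    (hA1 : ((1 : Matrix (Fin n) (Fin n) ℂ) - A).PosSemidef) {b : ℝ} (hb : 1 < b)
    (x : Fin n → ℝ) (hx : ∀ i, b ≤ x i) :
    ∀ (m : ℕ) (Y : Finset (Fin n)), Yᶜ.card = m → 0 < (M1 A Y (fun i => (x i : ℂ))).det := by
  intro m
  induction m with
  | zero =>
    intro Y hY
    have : Y = Finset.univ := by
      rw [Finset.card_eq_zero] at hY
      simpa using hY
    have h1 : M1 A Y (fun i => (x i : ℂ)) = 1 := by
      ext i j; simp [M1, this]
    rw [h1]; simp
  | succ m ih =>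
    intro Y hY
    obtain ⟨k, hk⟩ : Yᶜ.Nonempty := by
      rw [← Finset.card_pos]; omega
    have hk' : k ∉ Y := by simpa using hk
    obtain ⟨ρ, h1, -, h2⟩ := ratio_lemma hA hA1 hb Y x hx k hk'
    have h3 := ih (insert k Y) (by
      rw [Finset.compl_insert, Finset.card_erase_of_mem hk]; omega)
    rw [h2] at h3
    have h4 : (M1 A Y (fun i => (x i : ℂ))).det = ((ρ⁻¹ : ℝ) : ℂ) * ((ρ : ℂ) * (M1 A Y (fun i => (x i : ℂ))).det) := by
      rw [← mul_assoc, ← Complex.ofReal_mul, inv_mul_cancel₀ h1.ne']; simp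
    rw [h4]
    exact mul_pos (by exact_mod_cast inv_pos.2 h1) h3

end mats


section poly
open Function

def YS {n : ℕ} (V : Finset (Fin n × Fin 4)) (j : Fin 4) : Finset (Fin n) :=
  Finset.univ.filter fun i => (i, j) ∈ V

def PV {n : ℕ} (A : Matrix (Fin n) (Fin n) ℂ) (V : Finset (Fin n × Fin 4)) (z : Fin n × Fin 4 → ℂ) : ℂ :=
  ∏ j, (M1 A (YS V j) (fun i => z (i, j))).det

lemma YS_insert_ne {n : ℕ} (V : Finset (Fin n × Fin 4)) (k : Fin n) (l j : Fin 4) (h : j ≠ l) :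
    YS (insert (k, l) V) j = YS V j := by
  ext i; simp [YS, h]

lemma YS_insert_eq {n : ℕ} (V : Finset (Fin n × Fin 4)) (k : Fin n) (l : Fin 4) :
    YS (insert (k, l) V) l = insert k (YS V l) := by
  ext i; simp [YS]

lemma M1_update_mem {n : ℕ} (A : Matrix (Fin n) (Fin n) ℂ) (Y : Finset (Fin n)) (y : Fin n → ℂ) (k : Fin n)
    (hk : k ∈ Y) (t : ℂ) : M1 A Y (update y k t) = M1 A Y y := by
  ext i j
  by_cases hi : i ∈ Y
  · simp [M1, hi]
  · have : i ≠ k := by rintro rfl; exact hi hk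
    simp [M1, hi, Matrix.diagonal_apply, update_of_ne this]

lemma M1_det_update {n : ℕ} (A : Matrix (Fin n) (Fin n) ℂ) (Y : Finset (Fin n)) (y : Fin n → ℂ) (k : Fin n)
    (hk : k ∉ Y) (t : ℂ) : (M1 A Y (update y k t)).det =
      (M1 A Y (update y k 0)).det + t * (M1 A (insert k Y) y).det := by
  have e : ∀ s : ℂ, M1 A Y (update y k s) = (M1 A Y y).updateRow k ((-(A k)) + s • Pi.single k 1) := by
    intro s
    ext i j
    by_cases hi : i = k
    · subst hi
      by_cases hij : i = j
      · subst hij; simp [M1, hk]; ring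
      · simp [M1, hk, Matrix.diagonal_apply, hij, Ne.symm hij]
    · simp [M1, hi, Matrix.diagonal_apply, update_of_ne hi]
  rw [e t, e 0, Matrix.det_updateRow_add, Matrix.det_updateRow_smul, zero_smul, add_zero, updateRow_M1]

lemma PV_update_mem {n : ℕ} (A : Matrix (Fin n) (Fin n) ℂ) (V : Finset (Fin n × Fin 4)) (z : Fin n × Fin 4 → ℂ)
    (κ : Fin n × Fin 4) (hκ : κ ∈ V) (t : ℂ) : PV A V (update z κ t) = PV A V z := by
  obtain ⟨k, l⟩ := κ
  apply Finset.prod_congr rfl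
  intro j _
  by_cases hj : j = l
  · subst hj
    have : (fun i => update z (k, j) t (i, j)) = update (fun i => z (i, j)) k t := by
      funext i; by_cases hi : i = k
      · subst hi; simp
      · rw [update_of_ne hi, update_of_ne (by simp [hi])]
    rw [this, M1_update_mem _ _ _ _ (by simpa [YS] using hκ)]
  · have : (fun i => update z (k, l) t (i, j)) = (fun i => z (i, j)) := by
      funext i; rw [update_of_ne (by simp [hj])]
    rw [this]

lemma PV_update {n : ℕ} (A : Matrix (Fin n) (Fin n) ℂ) (V : Finset (Fin n × Fin 4)) (z : Fin n × Fin 4 → ℂ)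
    (κ : Fin n × Fin 4) (hκ : κ ∉ V) (t : ℂ) :
    PV A V (update z κ t) = PV A V (update z κ 0) + t * PV A (insert κ V) z := by
  obtain ⟨k, l⟩ := κ
  have h1 : ∀ s : ℂ, (fun i => update z (k, l) s (i, l)) = update (fun i => z (i, l)) k s := by
    intro s
    funext i; by_cases hi : i = k
    · subst hi; simp
    · rw [update_of_ne hi, update_of_ne (by simp [hi])]
  have h2 : ∀ s : ℂ, ∀ j, j ≠ l → (fun i => update z (k, l) s (i, j)) = (fun i => z (i, j)) := by
    intro s j hj
    funext i; rw [update_of_ne (by simp [hj])]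
  have h3 : ∀ s : ℂ, PV A V (update z (k, l) s) = (M1 A (YS V l) (update (fun i => z (i, l)) k s)).det *
      ∏ j ∈ Finset.univ.erase l, (M1 A (YS V j) (fun i => z (i, j))).det := by
    intro s
    rw [PV, ← Finset.mul_prod_erase _ _ (Finset.mem_univ l), h1]
    congr 1
    apply Finset.prod_congr rfl
    intro j hj
    rw [h2 s j (Finset.ne_of_mem_erase hj)]
  have h4 : PV A (insert (k, l) V) z = (M1 A (insert k (YS V l)) (fun i => z (i, l))).det *
      ∏ j ∈ Finset.univ.erase l, (M1 A (YS V j) (fun i => z (i, j))).det := by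
    rw [PV, ← Finset.mul_prod_erase _ _ (Finset.mem_univ l), YS_insert_eq]
    congr 1
    apply Finset.prod_congr rfl
    intro j hj
    rw [YS_insert_ne _ _ _ _ (Finset.ne_of_mem_erase hj)]
  rw [h3 t, h3 0, h4, M1_det_update _ _ _ _ (by simpa [YS] using hκ)]
  ring

lemma DD_PV {n : ℕ} (A : Matrix (Fin n) (Fin n) ℂ) (V : Finset (Fin n × Fin 4)) (κ : Fin n × Fin 4) (hκ : κ ∉ V) :
    DD κ (PV A V) = PV A (insert κ V) := by
  funext z
  rw [DD, PV_update A V z κ hκ 1]; ring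

lemma MA_PV {n : ℕ} (A : Matrix (Fin n) (Fin n) ℂ) (V : Finset (Fin n × Fin 4)) : MA (PV A V) := by
  intro z k t
  by_cases hk : k ∈ V
  · rw [DD, PV_update_mem _ _ _ _ hk, PV_update_mem _ _ _ _ hk, PV_update_mem _ _ _ _ hk]; ring
  · rw [DD_PV _ _ _ hk, PV_update _ _ _ _ hk]

lemma DL_PV {n : ℕ} (A : Matrix (Fin n) (Fin n) ℂ) (L : List (Fin n × Fin 4)) (hL : L.Nodup) :
    DL L (PV A ∅) = PV A L.toFinset := by
  induction L with
  | nil => rfl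
  | cons k L ih =>
    obtain ⟨h1, h2⟩ := List.nodup_cons.1 hL
    rw [DL_cons, ih h2, DD_PV _ _ _ (by simpa using h1), List.toFinset_cons]

lemma diff_prod {E : Type*} [NormedAddCommGroup E] [NormedSpace ℂ E] {ι : Type*} (s : Finset ι) (f : ι → E → ℂ)
    (h : ∀ i ∈ s, Differentiable ℂ (f i)) : Differentiable ℂ (fun z => ∏ i ∈ s, f i z) := by
  classical
  induction s using Finset.induction_on with
  | empty => simp
  | insert a s ha ih =>
    simp only [Finset.prod_insert ha]
    exact (h a (by simp)).mul (ih fun i hi => h i (by simp [hi]))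

lemma diff_PV {n : ℕ} (A : Matrix (Fin n) (Fin n) ℂ) (V : Finset (Fin n × Fin 4)) : Differentiable ℂ (PV A V) := by
  have h : ∀ j ∈ (Finset.univ : Finset (Fin 4)),
      Differentiable ℂ (fun z : Fin n × Fin 4 → ℂ => (M1 A (YS V j) (fun i => z (i, j))).det) := by
    intro j _
    simp only [Matrix.det_apply]
    apply Differentiable.fun_sum
    intro σ _
    apply Differentiable.const_smul
    apply diff_prod
    intro i _
    by_cases hi : σ i ∈ YS V j
    · simp [M1, hi]
    · by_cases hd : σ i = i
      · rw [hd] at hi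
        simp [M1, hi, hd]; fun_prop
      · simp [M1, hi, Matrix.diagonal_apply, hd]
  exact diff_prod _ _ h

lemma real_PV {n : ℕ} {A : Matrix (Fin n) (Fin n) ℂ} (hA : A.IsHermitian) : RealF (PV A ∅) := by
  intro z
  simp only [PV]
  rw [map_prod]
  apply Finset.prod_congr rfl
  intro j _
  have e : ∀ y : Fin n → ℂ, M1 A (YS ∅ j) y = Matrix.diagonal y - A := by
    intro y; ext i k; simp [M1, YS]
  rw [e, e]
  have h : Matrix.diagonal (fun i => (starRingEnd ℂ) (z (i, j))) - A = (Matrix.diagonal (fun i => z (i, j)) - A)ᴴ := by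
    rw [Matrix.conjTranspose_sub, hA.eq, Matrix.diagonal_conjTranspose]; rfl
  rw [h, Matrix.det_conjTranspose]; rfl

lemma PV_pos {n : ℕ} {A : Matrix (Fin n) (Fin n) ℂ} (hA : A.PosSemidef)
    (hA1 : ((1 : Matrix (Fin n) (Fin n) ℂ) - A).PosSemidef) {b : ℝ} (hb : 1 < b)
    (x : Fin n × Fin 4 → ℝ) (hx : ∀ i, b ≤ x i) (V : Finset (Fin n × Fin 4)) :
    0 < PV A V (fun k => (x k : ℂ)) := by
  apply Finset.prod_pos
  intro j _
  exact M1_pos hA hA1 hb (fun i => x (i, j)) (fun i => hx _) _ _ rfl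

lemma PV_bar {n : ℕ} {A : Matrix (Fin n) (Fin n) ℂ} (hA : A.PosSemidef)
    (hA1 : ((1 : Matrix (Fin n) (Fin n) ℂ) - A).PosSemidef) {b Φ : ℝ} (hb : 1 < b)
    (hΦ : ∀ k, (1 - (A k k).re) / b + (A k k).re / (b - 1) ≤ Φ)
    (x : Fin n × Fin 4 → ℝ) (hx : ∀ i, b ≤ x i) (V : Finset (Fin n × Fin 4)) (κ : Fin n × Fin 4) (hκ : κ ∉ V) :
    (PV A (insert κ V) (fun k => (x k : ℂ))).re ≤ Φ * (PV A V (fun k => (x k : ℂ))).re := by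
  obtain ⟨k, l⟩ := κ
  obtain ⟨ρ, h1, h2, h3⟩ := ratio_lemma hA hA1 hb (YS V l) (fun i => x (i, l)) (fun i => hx _) k (by simpa [YS] using hκ)
  have h4 : PV A (insert (k, l) V) (fun k => (x k : ℂ)) = (ρ : ℂ) * PV A V (fun k => (x k : ℂ)) := by
    rw [PV, PV, ← Finset.mul_prod_erase _ _ (Finset.mem_univ l), ← Finset.mul_prod_erase _ _ (Finset.mem_univ l),
      YS_insert_eq, h3, mul_assoc]
    congr 2
    apply Finset.prod_congr rfl
    intro j hj
    rw [YS_insert_ne _ _ _ _ (Finset.ne_of_mem_erase hj)]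
  rw [h4, Complex.re_ofReal_mul]
  have h5 := (Complex.pos_iff.1 (PV_pos hA hA1 hb x hx V)).1
  exact mul_le_mul_of_nonneg_right (h2.trans (hΦ k)) h5.le

lemma Cls_PV {n : ℕ} {A : Matrix (Fin n) (Fin n) ℂ} (hA : A.PosSemidef)
    (hA1 : ((1 : Matrix (Fin n) (Fin n) ℂ) - A).PosSemidef) {b : ℝ} (hb : 1 < b) :
    Cls b Set.univ (PV A ∅) where
  diff := diff_PV A ∅
  ma := MA_PV A ∅
  real := real_PV hA.isHermitian
  st := by
    intro L hL _
    rw [DL_PV _ _ hL]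
    intro z hz
    exact Finset.prod_ne_zero_iff.2 fun j _ => M1_det_ne hA _ _ fun i => hz _
  pos := by
    intro L hL _ x hx
    rw [DL_PV _ _ hL]
    exact PV_pos hA hA1 hb (fun _ => x) (fun _ => hx) _

lemma Bar_PV {n : ℕ} {A : Matrix (Fin n) (Fin n) ℂ} (hA : A.PosSemidef)
    (hA1 : ((1 : Matrix (Fin n) (Fin n) ℂ) - A).PosSemidef) {b Φ : ℝ} (hb : 1 < b)
    (hΦ : ∀ k, (1 - (A k k).re) / b + (A k k).re / (b - 1) ≤ Φ) :
    Bar Φ Set.univ (fun _ => b) (PV A ∅) := by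
  intro L hL _ x hx
  rw [DL_PV _ _ hL]
  refine ⟨(Complex.pos_iff.1 (PV_pos hA hA1 hb x hx _)).1, ?_⟩
  intro κ hκ _
  rw [DL_PV _ _ (List.nodup_cons.2 ⟨hκ, hL⟩), List.toFinset_cons]
  exact PV_bar hA hA1 hb hΦ x hx _ κ (by simpa using hκ)

lemma flat_nodup {n : ℕ} (c : Fin n → Fin 4) (l : List (Fin n)) (hl : l.Nodup) : (flat l c).Nodup := by
  rw [flat, List.nodup_flatMap]
  refine ⟨fun i _ => nodup3 i (c i), ?_⟩
  apply hl.imp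
  intro a b hab
  simp only [Function.onFun, List.Disjoint]
  intro k h1 h2
  apply hab
  have e1 : k.1 = a := by
    simp at h1; rcases h1 with h | h | h <;> rw [h]
  have e2 : k.1 = b := by
    simp at h2; rcases h2 with h | h | h <;> rw [h]
  rw [← e1, e2]

lemma mem_flat {n : ℕ} (c : Fin n → Fin 4) (i : Fin n) (j : Fin 4) :
    (i, j) ∈ flat (List.finRange n) c ↔ j ≠ c i := by
  have : ∀ a j : Fin 4, (j = a + 1 ∨ j = a + 2 ∨ j = a + 3) ↔ j ≠ a := by decide
  rw [← this]
  simp only [flat, List.mem_flatMap, List.mem_finRange, true_and]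
  constructor
  · rintro ⟨a, h⟩
    simp at h
    rcases h with h | h | h <;> (obtain ⟨rfl, h⟩ := h; simp [h])
  · intro h
    exact ⟨i, by simpa using h⟩

lemma paving_core {n : ℕ} {A : Matrix (Fin n) (Fin n) ℂ} (hA : A.PosSemidef)
    (hA1 : ((1 : Matrix (Fin n) (Fin n) ℂ) - A).PosSemidef) {b Φ d : ℝ} (hb : 1 < b)
    (hΦ0 : 0 < Φ) (hd : 16 * Φ * d = 9)
    (hΦ : ∀ k, (1 - (A k k).re) / b + (A k k).re / (b - 1) ≤ Φ) :
    ∃ c : Fin n → Fin 4, ∀ x : ℝ, b - d ≤ x → ∀ j,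
      (M1 A (Finset.univ.filter fun i => c i ≠ j) (fun _ => (x : ℂ))).det ≠ 0 := by
  obtain ⟨c, hc⟩ := coloring hΦ0 hd (Cls_PV hA hA1 hb) (Bar_PV hA hA1 hb hΦ)
  refine ⟨c, fun x hx j => ?_⟩
  have h := (hc x hx).ne'
  rw [DL_PV _ _ (flat_nodup _ _ (List.nodup_finRange n))] at h
  have h2 := Finset.prod_ne_zero_iff.1 h j (Finset.mem_univ _)
  have e : YS (flat (List.finRange n) c).toFinset j = Finset.univ.filter fun i => c i ≠ j := by
    ext i
    simp [YS, mem_flat, eq_comm]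
  rw [e] at h2
  exact h2

end poly


section final

lemma psd_of_coloring {n : ℕ} {A : Matrix (Fin n) (Fin n) ℂ} (hA : A.PosSemidef) (M : ℝ) (c : Fin n → Fin 4)
    (hc : ∀ x : ℝ, M ≤ x → ∀ j, (M1 A (Finset.univ.filter fun i => c i ≠ j) (fun _ => (x : ℂ))).det ≠ 0) :
    ((M : ℂ) • (1 : Matrix (Fin n) (Fin n) ℂ)
      - Matrix.of fun i k => if c i = c k then A i k else 0).PosSemidef := by
  obtain ⟨T, hT⟩ : ∃ T : Matrix (Fin n) (Fin n) ℂ, T = Matrix.of fun i k => if c i = c k then A i k else 0 := ⟨_, rfl⟩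
  rw [← hT]
  have hTh : T.IsHermitian := by
    ext i k
    rw [hT]
    simp only [Matrix.conjTranspose_apply, Matrix.of_apply]
    by_cases h : c k = c i
    · rw [if_pos h, if_pos h.symm]
      exact hA.isHermitian.apply i k
    · rw [if_neg h, if_neg (Ne.symm h)]; simp
  have hK : ((M : ℂ) • (1 : Matrix (Fin n) (Fin n) ℂ) - T).IsHermitian := by
    apply Matrix.IsHermitian.sub _ hTh
    rw [Matrix.IsHermitian, Matrix.conjTranspose_smul]
    simp
  rw [hK.posSemidef_iff_eigenvalues_nonneg]
  intro m
  by_contra hneg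
  simp only [Pi.zero_apply, not_le] at hneg
  obtain ⟨μ, hμ⟩ : ∃ μ, μ = hK.eigenvalues m := ⟨_, rfl⟩
  rw [← hμ] at hneg
  obtain ⟨v, hv⟩ : ∃ v : Fin n → ℂ, v = (hK.eigenvectorBasis m).ofLp := ⟨_, rfl⟩
  have hKv : ((M : ℂ) • (1 : Matrix (Fin n) (Fin n) ℂ) - T) *ᵥ v = (μ : ℂ) • v := by
    rw [hv, hμ]
    have := hK.mulVec_eigenvectorBasis m
    simpa using this
  have hv0 : v ≠ 0 := by
    intro h
    have h1 : hK.eigenvectorBasis m = 0 := by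
      ext i
      have := congrFun h i
      rw [hv] at this
      simpa using this
    exact hK.eigenvectorBasis.orthonormal.ne_zero m h1
  obtain ⟨i0, hi0⟩ := Function.ne_iff.1 hv0
  have hTv : ∀ i, (T *ᵥ v) i = ((M - μ : ℝ) : ℂ) * v i := by
    intro i
    have := congrFun hKv i
    simp [Matrix.sub_mulVec, Matrix.smul_mulVec] at this
    push_cast
    linear_combination -this
  apply hc (M - μ) (by linarith) (c i0)
  rw [← Matrix.exists_mulVec_eq_zero_iff]
  refine ⟨fun i => if c i = c i0 then v i else 0, ?_, ?_⟩
  · intro h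
    have := congrFun h i0
    simp at this
    exact hi0 this
  · funext i
    rw [M1_mulVec]
    by_cases hi : c i = c i0
    · have e : (A *ᵥ fun i => if c i = c i0 then v i else 0) i = (T *ᵥ v) i := by
        simp only [Matrix.mulVec, dotProduct]
        apply Finset.sum_congr rfl
        intro k _
        rw [hT]
        simp only [Matrix.of_apply, hi]
        by_cases hk : c k = c i0
        · simp [hk]
        · simp [hk, Ne.symm hk]
      rw [e, hTv]
      simp [hi]
    · simp [hi]

lemma proj_sum {n : ℕ} (A : Matrix (Fin n) (Fin n) ℂ) (c : Fin n → Fin 4) :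
    proj (Finset.univ.filter fun i => c i = 0) * A * proj (Finset.univ.filter fun i => c i = 0) +
    proj (Finset.univ.filter fun i => c i = 1) * A * proj (Finset.univ.filter fun i => c i = 1) +
    proj (Finset.univ.filter fun i => c i = 2) * A * proj (Finset.univ.filter fun i => c i = 2) +
    proj (Finset.univ.filter fun i => c i = 3) * A * proj (Finset.univ.filter fun i => c i = 3) =
    Matrix.of fun i k => if c i = c k then A i k else 0 := by
  ext i k
  simp only [proj, Matrix.add_apply, Matrix.mul_diagonal, Matrix.diagonal_mul, Matrix.of_apply,
    Finset.mem_filter, Finset.mem_univ, true_and]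
  generalize c i = a
  generalize c k = b
  fin_cases a <;> fin_cases b <;> simp

lemma exists_of_coloring {n : ℕ} {A : Matrix (Fin n) (Fin n) ℂ} (hA : A.PosSemidef) (M : ℝ) (c : Fin n → Fin 4)
    (hc : ∀ x : ℝ, M ≤ x → ∀ j, (M1 A (Finset.univ.filter fun i => c i ≠ j) (fun _ => (x : ℂ))).det ≠ 0) :
    ∃ X₁ X₂ X₃ X₄ : Finset (Fin n),
      Disjoint X₁ X₂ ∧ Disjoint X₁ X₃ ∧ Disjoint X₁ X₄ ∧
      Disjoint X₂ X₃ ∧ Disjoint X₂ X₄ ∧ Disjoint X₃ X₄ ∧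
      X₁ ∪ X₂ ∪ X₃ ∪ X₄ = Finset.univ ∧
      (((M : ℂ) • (1 : Matrix (Fin n) (Fin n) ℂ)
          - (proj X₁ * A * proj X₁ + proj X₂ * A * proj X₂ +
              proj X₃ * A * proj X₃ + proj X₄ * A * proj X₄)).PosSemidef) := by
  have dj : ∀ a b : Fin 4, a ≠ b →
      Disjoint (Finset.univ.filter fun i => c i = a) (Finset.univ.filter fun i => c i = b) := by
    intro a b hab
    rw [Finset.disjoint_left]
    intro i h1 h2
    simp only [Finset.mem_filter, Finset.mem_univ, true_and] at h1 h2
    exact hab (h1.symm.trans h2)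
  refine ⟨Finset.univ.filter fun i => c i = 0, Finset.univ.filter fun i => c i = 1,
    Finset.univ.filter fun i => c i = 2, Finset.univ.filter fun i => c i = 3,
    dj _ _ (by decide), dj _ _ (by decide), dj _ _ (by decide), dj _ _ (by decide), dj _ _ (by decide),
    dj _ _ (by decide), ?_, ?_⟩
  · ext i
    simp only [Finset.mem_union, Finset.mem_filter, Finset.mem_univ, true_and, iff_true]
    generalize c i = a
    revert a; decide
  · rw [proj_sum]
    exact psd_of_coloring hA M c hc

lemma exists_trivial {n : ℕ} {A : Matrix (Fin n) (Fin n) ℂ} (M : ℝ)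
    (h : ((M : ℂ) • (1 : Matrix (Fin n) (Fin n) ℂ) - A).PosSemidef) :
    ∃ X₁ X₂ X₃ X₄ : Finset (Fin n),
      Disjoint X₁ X₂ ∧ Disjoint X₁ X₃ ∧ Disjoint X₁ X₄ ∧
      Disjoint X₂ X₃ ∧ Disjoint X₂ X₄ ∧ Disjoint X₃ X₄ ∧
      X₁ ∪ X₂ ∪ X₃ ∪ X₄ = Finset.univ ∧
      (((M : ℂ) • (1 : Matrix (Fin n) (Fin n) ℂ)
          - (proj X₁ * A * proj X₁ + proj X₂ * A * proj X₂ +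
              proj X₃ * A * proj X₃ + proj X₄ * A * proj X₄)).PosSemidef) := by
  refine ⟨Finset.univ, ∅, ∅, ∅, by simp, by simp, by simp, by simp, by simp, by simp, by simp, ?_⟩
  have e1 : proj (Finset.univ : Finset (Fin n)) = 1 := by simp [proj]
  have e2 : proj (∅ : Finset (Fin n)) = 0 := by simp [proj]
  rw [e1, e2]
  simpa using h

lemma paving_exists {n : ℕ} (δ : ℝ) (hδ0 : 0 ≤ δ) (hδ1 : δ ≤ 9/16)
    (A : Matrix (Fin n) (Fin n) ℂ)
    (hA : A.PosSemidef) (hA1 : ((1 : Matrix (Fin n) (Fin n) ℂ) - A).PosSemidef)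
    (hdiag : ∀ i, (A i i).re ≤ δ) :
    ∃ X₁ X₂ X₃ X₄ : Finset (Fin n),
      Disjoint X₁ X₂ ∧ Disjoint X₁ X₃ ∧ Disjoint X₁ X₄ ∧
      Disjoint X₂ X₃ ∧ Disjoint X₂ X₄ ∧ Disjoint X₃ X₄ ∧
      X₁ ∪ X₂ ∪ X₃ ∪ X₄ = Finset.univ ∧
      ((((1/16 * (Real.sqrt (7*(1-δ)) + 3 * Real.sqrt δ)^2 : ℝ) : ℂ) •
            (1 : Matrix (Fin n) (Fin n) ℂ)
          - (proj X₁ * A * proj X₁ + proj X₂ * A * proj X₂ +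
              proj X₃ * A * proj X₃ + proj X₄ * A * proj X₄)).PosSemidef) := by
  rcases hδ0.eq_or_lt with h0 | h0
  · apply exists_trivial
    have hA0 : A = 0 := by
      rw [← hA.trace_eq_zero_iff, Matrix.trace]
      apply Finset.sum_eq_zero
      intro i _
      have h1 := Complex.nonneg_iff.1 (hA.diag_nonneg (i := i))
      have h2 := hdiag i
      apply Complex.ext
      · simp only [Matrix.diag_apply, Complex.zero_re]; linarith [h1.1]
      · simp only [Matrix.diag_apply, Complex.zero_im]; exact h1.2.symm
    rw [hA0, sub_zero]
    apply Matrix.PosSemidef.one.smul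
    rw [Complex.zero_le_real]
    positivity
  rcases hδ1.eq_or_lt with h1 | h1
  · apply exists_trivial
    have e1 : Real.sqrt (7*(1-δ)) = 7/4 := by
      rw [h1, show (7*(1-9/16) : ℝ) = (7/4)^2 by norm_num]
      exact Real.sqrt_sq (by norm_num)
    have e2 : Real.sqrt δ = 3/4 := by
      rw [h1, show (9/16 : ℝ) = (3/4)^2 by norm_num]
      exact Real.sqrt_sq (by norm_num)
    rw [e1, e2]
    have : (1/16 * (7/4 + 3 * (3/4))^2 : ℝ) = 1 := by norm_num
    rw [this]
    simpa using hA1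
  · obtain ⟨P, hP⟩ : ∃ P, P = Real.sqrt (7*(1-δ)) := ⟨_, rfl⟩
    obtain ⟨Q, hQ⟩ : ∃ Q, Q = Real.sqrt δ := ⟨_, rfl⟩
    rw [← hP, ← hQ]
    have hP2 : P ^ 2 = 7 * (1 - δ) := by rw [hP]; exact Real.sq_sqrt (by linarith)
    have hQ2 : Q ^ 2 = δ := by rw [hQ]; exact Real.sq_sqrt (by linarith)
    have hPp : 0 < P := by rw [hP]; exact Real.sqrt_pos.2 (by linarith)
    have hQp : 0 < Q := by rw [hQ]; exact Real.sqrt_pos.2 h0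
    obtain ⟨c, hc⟩ : ∃ c, c = 3 * (P * Q) / 7 := ⟨_, rfl⟩
    have hcp : 0 < c := by rw [hc]; positivity
    have hc2 : 7 * c ^ 2 = 9 * (δ * (1 - δ)) := by
      have : 7 * c ^ 2 = 9 / 7 * (P ^ 2 * Q ^ 2) := by rw [hc]; ring
      rw [this, hP2, hQ2]; ring
    have hcδ : δ < c := by
      by_contra hcon
      push Not at hcon
      nlinarith
    have hM : 1/16 * (P + 3 * Q)^2 = (1 - δ + c) - (2 * c + 9 - 18 * δ) / 16 := by
      have : (P + 3 * Q)^2 = P ^ 2 + 6 * (P * Q) + 9 * Q ^ 2 := by ring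
      rw [this, hP2, hQ2, hc]; ring
    rw [hM]
    have hb : 1 < 1 - δ + c := by linarith
    have hΦe : (1 - δ) / (1 - δ + c) + δ / (1 - δ + c - 1) = c / ((1 - δ + c) * (c - δ)) := by
      have n1 : 1 - δ + c ≠ 0 := by linarith
      have n2 : c - δ ≠ 0 := by linarith
      have n3 : 1 - δ + c - 1 = c - δ := by ring
      rw [n3]
      field_simp
      ring
    have hΦ0 : 0 < c / ((1 - δ + c) * (c - δ)) :=
      div_pos hcp (mul_pos (by linarith) (by linarith))
    obtain ⟨col, hcol⟩ := paving_core (Φ := c / ((1 - δ + c) * (c - δ))) (d := (2 * c + 9 - 18 * δ) / 16)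
      hA hA1 hb hΦ0 (by
        have n1 : 1 - δ + c ≠ 0 := by linarith
        have n2 : c - δ ≠ 0 := by linarith
        field_simp
        linear_combination (-1) * hc2 + 0 * hc2) (by
        intro k
        rw [← hΦe]
        have h2 := hdiag k
        have b1 : 0 < 1 - δ + c := by linarith
        have b2 : 0 < 1 - δ + c - 1 := by linarith
        have b3 : (1 - δ + c)⁻¹ ≤ (1 - δ + c - 1)⁻¹ := inv_anti₀ b2 (by linarith)
        simp only [div_eq_mul_inv]
        nlinarith)
    exact exists_of_coloring hA _ col hcol

lemma half_bound : 1/16 * (Real.sqrt (7*(1-(1/2 : ℝ))) + 3 * Real.sqrt (1/2))^2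
      = (3 + Real.sqrt 7)^2/32 := by
  have e : Real.sqrt (7*(1-(1/2 : ℝ))) = Real.sqrt 7 * Real.sqrt (1/2) := by
    rw [← Real.sqrt_mul (by norm_num)]; norm_num
  rw [e]
  have h : Real.sqrt (1/2) ^ 2 = 1/2 := Real.sq_sqrt (by norm_num)
  linear_combination (1/16 * (Real.sqrt 7 + 3)^2) * h

end final

/-- Any positive contraction with diagonal entries at most `δ ≤ 9/16` admits a four-paving
whose largest eigenvalue is at most `(1/16)(√(7(1-δ)) + 3√δ)²`; for `δ = 1/2` this bound
equals `(3+√7)²/32`. -/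
theorem four_paving_estimate {n : ℕ} (δ : ℝ) (hδ0 : 0 ≤ δ) (hδ1 : δ ≤ 9/16)
    (A : Matrix (Fin n) (Fin n) ℂ)
    (hA : A.PosSemidef) (hA1 : ((1 : Matrix (Fin n) (Fin n) ℂ) - A).PosSemidef)
    (hdiag : ∀ i, (A i i).re ≤ δ) :
    (∃ X₁ X₂ X₃ X₄ : Finset (Fin n),
      Disjoint X₁ X₂ ∧ Disjoint X₁ X₃ ∧ Disjoint X₁ X₄ ∧
      Disjoint X₂ X₃ ∧ Disjoint X₂ X₄ ∧ Disjoint X₃ X₄ ∧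
      X₁ ∪ X₂ ∪ X₃ ∪ X₄ = Finset.univ ∧
      ((((1/16 * (Real.sqrt (7*(1-δ)) + 3 * Real.sqrt δ)^2 : ℝ) : ℂ) •
            (1 : Matrix (Fin n) (Fin n) ℂ)
          - (proj X₁ * A * proj X₁ + proj X₂ * A * proj X₂ +
              proj X₃ * A * proj X₃ + proj X₄ * A * proj X₄)).PosSemidef)) ∧
    (1/16 * (Real.sqrt (7*(1-(1/2 : ℝ))) + 3 * Real.sqrt (1/2))^2
      = (3 + Real.sqrt 7)^2/32) := by
  exact ⟨paving_exists δ hδ0 hδ1 A hA hA1 hdiag, half_bound⟩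
end

section
/- Let A be an n×n complex Hermitian matrix with n ≥ 1 and let r ≥ 1 be an integer. Then the polynomial f(x) = Σ_{X ∈ P_r} χ[A_X](x), the sum of the characteristic polynomials of all r-pavings of A, has all of its complex roots real; moreover there exists an ordered partition X ∈ P_r such that the largest root of χ[A_X] is at most the largest root of f. -/
open Polynomial Matrix

/-- The `r`-paving of `A` determined by the colouring `c : Fin n → Fin r` (i.e. by the
ordered partition of `{1,…,n}` into the fibres of `c`): entries within a block are kept,
all other entries are set to zero. -/
def paving {n r : ℕ} (A : Matrix (Fin n) (Fin n) ℂ) (c : Fin n → Fin r) :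
    Matrix (Fin n) (Fin n) ℂ :=
  Matrix.of fun i j => if c i = c j then A i j else 0

/-- rows of `diag z - B` for indices in `Y`, identity rows otherwise -/
noncomputable def rowMat {ι : Type} [Fintype ι] [DecidableEq ι] (B : Matrix ι ι ℂ) (z : ι → ℂ)
    (Y : Finset ι) : Matrix ι ι ℂ :=
  Matrix.of fun p q => if p ∈ Y then (Matrix.diagonal z - B) p q else (1 : Matrix ι ι ℂ) p q

noncomputable def minorG {ι : Type} [Fintype ι] [DecidableEq ι] (B : Matrix ι ι ℂ) (z : ι → ℂ)
    (Y : Finset ι) : ℂ := (rowMat B z Y).det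

lemma minorG_update {ι : Type} [Fintype ι] [DecidableEq ι] (B : Matrix ι ι ℂ) (z : ι → ℂ)
    (Y : Finset ι) (p : ι) (hp : p ∉ Y) (t : ℂ) :
    minorG B (Function.update z p t) (insert p Y)
      = minorG B z (insert p Y) + (t - z p) * minorG B z Y := by
  have h1 : rowMat B (Function.update z p t) (insert p Y)
      = (rowMat B z (insert p Y)).updateRow p
        ((rowMat B z (insert p Y)) p + (t - z p) • (1 : Matrix ι ι ℂ) p) := by
    ext a b
    by_cases ha : a = p
    · subst ha
      simp only [rowMat, Matrix.updateRow_self, Matrix.of_apply, Pi.add_apply, Pi.smul_apply,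
        Finset.mem_insert_self, if_true, Matrix.sub_apply, Matrix.diagonal_apply, Matrix.one_apply,
        smul_eq_mul, Function.update_self]
      split_ifs <;> ring
    · rw [Matrix.updateRow_ne ha]
      simp [rowMat, ha, Matrix.diagonal_apply]
  have h2 : (rowMat B z (insert p Y)).updateRow p ((1 : Matrix ι ι ℂ) p) = rowMat B z Y := by
    ext a b
    by_cases ha : a = p
    · subst ha
      simp [rowMat, hp]
    · rw [Matrix.updateRow_ne ha]
      simp [rowMat, ha]
  unfold minorG
  rw [h1, Matrix.det_updateRow_add, Matrix.det_updateRow_smul, h2, Matrix.updateRow_eq_self]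

lemma minorG_ne_zero {ι : Type} [Fintype ι] [DecidableEq ι] (B : Matrix ι ι ℂ)
    (hB : B.IsHermitian) (z : ι → ℂ) (hz : ∀ p, 0 < (z p).im) (Y : Finset ι) :
    minorG B z Y ≠ 0 := by
  intro h
  obtain ⟨v, hv0, hv⟩ := Matrix.exists_mulVec_eq_zero_iff.mpr h
  have hout : ∀ p, p ∉ Y → v p = 0 := by
    intro p hp
    have := congrFun hv p
    simpa [rowMat, Matrix.mulVec, dotProduct, hp, Matrix.one_apply] using this
  have hin : ∀ p, star (v p) * (z p * v p - (B *ᵥ v) p) = 0 := by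
    intro p
    by_cases hp : p ∈ Y
    · have := congrFun hv p
      have h3 : (rowMat B z Y *ᵥ v) p = z p * v p - (B *ᵥ v) p := by
        have : (rowMat B z Y *ᵥ v) p = ((Matrix.diagonal z - B) *ᵥ v) p := by
          simp [rowMat, Matrix.mulVec, dotProduct, hp]
        rw [this, Matrix.sub_mulVec, Pi.sub_apply, Matrix.mulVec_diagonal]
      rw [← h3, this]; simp
    · simp [hout p hp]
  have hsum : ∑ p, star (v p) * (z p * v p) = star v ⬝ᵥ (B *ᵥ v) := by
    rw [dotProduct, ← sub_eq_zero, ← Finset.sum_sub_distrib]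
    refine Finset.sum_eq_zero fun p _ => ?_
    rw [← hin p, Pi.star_apply]; ring
  have him : (star v ⬝ᵥ (B *ᵥ v)).im = 0 := by
    have := hB.im_star_dotProduct_mulVec_self v
    simpa using this
  have h5 : ∑ p, (z p).im * Complex.normSq (v p) = 0 := by
    rw [← him, ← hsum, Complex.im_sum]
    refine Finset.sum_congr rfl fun p _ => ?_
    simp [Complex.normSq_apply]; ring
  apply hv0
  ext p
  have := (Finset.sum_eq_zero_iff_of_nonneg
    (fun p _ => mul_nonneg (hz p).le (Complex.normSq_nonneg (v p)))).mp h5 p (Finset.mem_univ _)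
  rcases mul_eq_zero.mp this with h | h
  · exact absurd h (hz p).ne'
  · simpa using h

lemma minorG_const {ι : Type} [Fintype ι] [DecidableEq ι] (B : Matrix ι ι ℂ) (x : ℂ)
    (Y : Finset ι) : minorG B (fun _ => x) Y
      = (B.submatrix (Subtype.val : {p // p ∈ Y} → ι) Subtype.val).charpoly.eval x := by
  unfold minorG
  rw [Matrix.eval_charpoly, Matrix.twoBlockTriangular_det _ (fun p => p ∈ Y)]
  · have h1 : (Matrix.toSquareBlockProp (rowMat B (fun _ => x) Y) (fun p => ¬ p ∈ Y)) = 1 := by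
      ext a b
      have ha : (a : ι) ∉ Y := a.2
      rw [Matrix.toSquareBlockProp_def, Matrix.of_apply, rowMat, Matrix.of_apply, if_neg ha,
        Matrix.one_apply, Matrix.one_apply]
      simp only [Subtype.ext_iff]
    have h2 : (Matrix.toSquareBlockProp (rowMat B (fun _ => x) Y) (fun p => p ∈ Y))
        = Matrix.scalar _ x - B.submatrix (Subtype.val : {p // p ∈ Y} → ι) Subtype.val := by
      ext a b
      have ha : (a : ι) ∈ Y := a.2
      rw [Matrix.toSquareBlockProp_def, Matrix.of_apply, rowMat, Matrix.of_apply, if_pos ha,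
        Matrix.sub_apply, Matrix.sub_apply, Matrix.scalar_apply, Matrix.diagonal_apply,
        Matrix.diagonal_apply, Matrix.submatrix_apply]
      simp only [Subtype.ext_iff]
    rw [h1, Matrix.det_one, mul_one, h2]
    congr!
  · intro i hi j hj
    have hij : i ≠ j := fun h => hi (h ▸ hj)
    simp [rowMat, hi, hij]

/-- iterated sum -/
def itSum {n r : ℕ} {R : Type} [AddCommMonoid R] (G : Finset (Fin n × Fin r) → R) :
    List (Fin n) → Finset (Fin n × Fin r) → R
  | [], Y => G Y
  | j :: L, Y => ∑ k : Fin r, itSum G L (insert (j, k) Y)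

lemma itSum_map {n r : ℕ} {R S : Type} [AddCommMonoid R] [AddCommMonoid S] (φ : R →+ S)
    (G : Finset (Fin n × Fin r) → R) (L : List (Fin n)) (Y : Finset (Fin n × Fin r)) :
    φ (itSum G L Y) = itSum (fun Y => φ (G Y)) L Y := by
  induction L generalizing Y with
  | nil => rfl
  | cons j L ih => simp [itSum, map_sum, ih]

lemma itSum_update {n r : ℕ} (B : Matrix (Fin n × Fin r) (Fin n × Fin r) ℂ)
    (z : Fin n × Fin r → ℂ) (p : Fin n × Fin r) (t : ℂ) (L : List (Fin n)) (hL : p.1 ∉ L)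
    (Y : Finset (Fin n × Fin r)) (hp : p ∉ Y) :
    itSum (minorG B (Function.update z p t)) L (insert p Y)
      = itSum (minorG B z) L (insert p Y) + (t - z p) * itSum (minorG B z) L Y := by
  induction L generalizing Y with
  | nil => exact minorG_update B z Y p hp t
  | cons j L ih =>
    simp only [List.mem_cons, not_or] at hL
    simp only [itSum, Finset.mul_sum, ← Finset.sum_add_distrib]
    refine Finset.sum_congr rfl fun k _ => ?_
    rw [Finset.insert_comm, ih hL.2]
    simp only [Finset.mem_insert, not_or]
    exact ⟨fun h => hL.1 (by rw [h]), hp⟩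

lemma ratio_pos {n r : ℕ} (B : Matrix (Fin n × Fin r) (Fin n × Fin r) ℂ)
    (L : List (Fin n)) (Y : Finset (Fin n × Fin r))
    (hNV : ∀ z : Fin n × Fin r → ℂ, (∀ p, 0 < (z p).im) → ∀ Y : Finset (Fin n × Fin r),
      (∀ p ∈ Y, p.1 ∉ L) → itSum (minorG B z) L Y ≠ 0)
    (hY : ∀ p ∈ Y, p.1 ∉ L) (p : Fin n × Fin r) (hpL : p.1 ∉ L) (hp : p ∉ Y)
    (z : Fin n × Fin r → ℂ) (hz : ∀ p, 0 < (z p).im) :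
    0 < (itSum (minorG B z) L (insert p Y) / itSum (minorG B z) L Y).im := by
  by_contra hcon
  push Not at hcon
  set R := itSum (minorG B z) L (insert p Y) / itSum (minorG B z) L Y with hR
  have hb := hNV z hz Y hY
  refine hNV (Function.update z p (z p - R)) ?_ (insert p Y) ?_ ?_
  · intro q
    by_cases hq : q = p
    · subst hq
      have := hz q
      simp only [Function.update_self, Complex.sub_im]; linarith
    · simpa [hq] using hz q
  · intro q hq
    rcases Finset.mem_insert.mp hq with rfl | h
    · exact hpL
    · exact hY q h
  · rw [itSum_update B z p _ L hpL Y hp, hR]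
    field_simp
    ring

lemma itSum_ne_zero {n r : ℕ} (hr : 1 ≤ r) (B : Matrix (Fin n × Fin r) (Fin n × Fin r) ℂ)
    (hB : B.IsHermitian) (L : List (Fin n)) (hL : L.Nodup) :
    ∀ z : Fin n × Fin r → ℂ, (∀ p, 0 < (z p).im) → ∀ Y : Finset (Fin n × Fin r),
      (∀ p ∈ Y, p.1 ∉ L) → itSum (minorG B z) L Y ≠ 0 := by
  induction L with
  | nil => intro z hz Y _; exact minorG_ne_zero B hB z hz Y
  | cons j L ih =>
    intro z hz Y hY h0
    rw [List.nodup_cons] at hL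
    have hY' : ∀ p ∈ Y, p.1 ∉ L := fun p hp h => hY p hp (List.mem_cons_of_mem _ h)
    have key : ∀ k : Fin r, 0 < (itSum (minorG B z) L (insert (j, k) Y)
        / itSum (minorG B z) L Y).im := fun k =>
      ratio_pos B L Y (ih hL.2) hY' (j, k) hL.1 (fun h => hY _ h List.mem_cons_self) z hz
    have : 0 < (itSum (minorG B z) (j :: L) Y / itSum (minorG B z) L Y).im := by
      simp only [itSum]
      rw [Finset.sum_div, Complex.im_sum]
      exact Finset.sum_pos (fun k _ => key k) ⟨⟨0, hr⟩, Finset.mem_univ _⟩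
    rw [h0] at this
    simp at this

lemma itSum_unroll {n r : ℕ} {R : Type} [AddCommMonoid R] (G : Finset (Fin n × Fin r) → R)
    (L : List (Fin n)) (hL : L.Nodup) (Y : Finset (Fin n × Fin r)) (c₀ : Fin n → Fin r) :
    itSum G L Y = ∑ c ∈ Finset.univ.filter (fun c : Fin n → Fin r => ∀ i, i ∉ L → c i = c₀ i),
      G (Y ∪ L.toFinset.image (fun i => (i, c i))) := by
  induction L generalizing Y c₀ with
  | nil =>
    have : Finset.univ.filter (fun c : Fin n → Fin r => ∀ i, i ∉ ([] : List (Fin n)) → c i = c₀ i)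
        = {c₀} := by
      ext c; simp [funext_iff]
    rw [this]; simp [itSum]
  | cons j L ih =>
    rw [List.nodup_cons] at hL
    simp only [itSum]
    rw [← Finset.sum_fiberwise _ (fun c : Fin n → Fin r => c j)]
    refine Finset.sum_congr rfl fun k _ => ?_
    rw [ih hL.2 _ (Function.update c₀ j k), Finset.filter_filter]
    have : Finset.univ.filter (fun c : Fin n → Fin r => (∀ i, i ∉ j :: L → c i = c₀ i) ∧ c j = k)
        = Finset.univ.filter (fun c : Fin n → Fin r =>
          ∀ i, i ∉ L → c i = Function.update c₀ j k i) := by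
      ext c
      simp only [Finset.mem_filter, Finset.mem_univ, true_and, List.mem_cons, not_or]
      constructor
      · rintro ⟨h1, h2⟩ i hi
        by_cases hij : i = j
        · subst hij; simpa using h2
        · simpa [hij] using h1 i ⟨hij, hi⟩
      · intro h
        refine ⟨fun i hi => by simpa [hi.1] using h i hi.2, by simpa using h j hL.1⟩
    rw [this]
    refine Finset.sum_congr rfl fun c hc => ?_
    have hcj : c j = k := by simpa using (Finset.mem_filter.mp hc).2 j hL.1
    congr 1
    ext q
    simp [hcj]

lemma wronskian_nonneg (f b : ℝ[X])
    (h : ∀ z : ℂ, 0 < z.im → 0 < (aeval z f / aeval z b).im) (x : ℝ) :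
    0 ≤ f.derivative.eval x * b.eval x - f.eval x * b.derivative.eval x := by
  have ev : ∀ q : ℝ[X], (q.map (algebraMap ℝ ℂ)).eval (x : ℂ) = ((q.eval x : ℝ) : ℂ) := by
    intro q
    exact Polynomial.eval_map_apply (algebraMap ℝ ℂ) x
  set F := f.map (algebraMap ℝ ℂ) with hF
  set G := b.map (algebraMap ℝ ℂ) with hG
  have l1 : HasDerivAt (fun t : ℝ => (x : ℂ) + (t : ℂ) * Complex.I) Complex.I 0 := by
    simpa using ((Complex.ofRealCLM.hasDerivAt (x := (0 : ℝ))).mul_const Complex.I).const_add (x : ℂ)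
  have l2 : HasDerivAt (fun t : ℝ => (x : ℂ) + (t : ℂ) * (-Complex.I)) (-Complex.I) 0 := by
    simpa using ((Complex.ofRealCLM.hasDerivAt (x := (0 : ℝ))).mul_const (-Complex.I)).const_add (x : ℂ)
  have d1 : HasDerivAt (fun t : ℝ => F.eval ((x : ℂ) + (t : ℂ) * Complex.I))
      (F.derivative.eval (x : ℂ) * Complex.I) 0 := by
    have := F.hasDerivAt ((x : ℂ) + ((0 : ℝ) : ℂ) * Complex.I)
    have := HasDerivAt.comp (0 : ℝ) this l1
    simpa [Function.comp_def] using this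
  have d2 : HasDerivAt (fun t : ℝ => G.eval ((x : ℂ) + (t : ℂ) * (-Complex.I)))
      (G.derivative.eval (x : ℂ) * (-Complex.I)) 0 := by
    have := G.hasDerivAt ((x : ℂ) + ((0 : ℝ) : ℂ) * (-Complex.I))
    have := HasDerivAt.comp (0 : ℝ) this l2
    simpa [Function.comp_def] using this
  have d3 := Complex.imCLM.hasFDerivAt.comp_hasDerivAt (0 : ℝ) (d1.mul d2)
  have hv : Complex.imCLM (F.derivative.eval (x : ℂ) * Complex.I
        * G.eval ((x : ℂ) + ((0 : ℝ) : ℂ) * (-Complex.I))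
      + F.eval ((x : ℂ) + ((0 : ℝ) : ℂ) * Complex.I) * (G.derivative.eval (x : ℂ) * (-Complex.I)))
      = f.derivative.eval x * b.eval x - f.eval x * b.derivative.eval x := by
    rw [hF, hG, Polynomial.derivative_map, Polynomial.derivative_map]
    simp only [Complex.ofReal_zero, zero_mul, add_zero, ev]
    simp
    ring
  have d4 := d3.hasDerivWithinAt (s := Set.Ioi 0)
  rw [hasDerivWithinAt_iff_tendsto_slope' (by simp)] at d4
  rw [← hv]
  refine ge_of_tendsto d4 ?_
  filter_upwards [self_mem_nhdsWithin] with t ht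
  have ht : 0 < t := ht
  have hz := h ((x : ℂ) + (t : ℂ) * Complex.I) (by simpa using ht)
  have hconj : G.eval ((x : ℂ) + (t : ℂ) * (-Complex.I))
      = (starRingEnd ℂ) (aeval ((x : ℂ) + (t : ℂ) * Complex.I) b) := by
    rw [← Polynomial.aeval_conj, hG, Polynomial.eval_map_algebraMap]
    simp
  have hFz : F.eval ((x : ℂ) + (t : ℂ) * Complex.I)
      = aeval ((x : ℂ) + (t : ℂ) * Complex.I) f := by
    rw [hF, Polynomial.eval_map_algebraMap]
  have h0 : (F.eval ((x : ℂ) + ((0 : ℝ) : ℂ) * Complex.I)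
      * G.eval ((x : ℂ) + ((0 : ℝ) : ℂ) * (-Complex.I))).im = 0 := by
    simp only [Complex.ofReal_zero, zero_mul, add_zero, hF, hG, ev]
    simp
  rw [slope_def_field]
  apply div_nonneg _ (by linarith)
  simp only [Function.comp, Pi.mul_apply, Complex.imCLM_apply]
  rw [h0, hconj, hFz, sub_zero]
  set u := aeval ((x : ℂ) + (t : ℂ) * Complex.I) f
  set v := aeval ((x : ℂ) + (t : ℂ) * Complex.I) b
  have hv0 : v ≠ 0 := by
    intro h0; rw [h0] at hz; simp at hz
  have : u * (starRingEnd ℂ) v = (u / v) * ((Complex.normSq v : ℝ) : ℂ) := by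
    rw [← Complex.mul_conj]; field_simp
  rw [this, Complex.im_mul_ofReal]
  exact mul_nonneg hz.le (Complex.normSq_nonneg _)

lemma cross_mono (f b : ℝ[X])
    (h : ∀ z : ℂ, 0 < z.im → 0 < (aeval z f / aeval z b).im) (g : ℝ)
    (hb : ∀ x, g < x → 0 < b.eval x) (x y : ℝ) (hx : g < x) (hxy : x ≤ y) :
    f.eval x / b.eval x ≤ f.eval y / b.eval y := by
  have hd : ∀ x ∈ Set.Ioi g, HasDerivAt (fun x => f.eval x / b.eval x)
      ((f.derivative.eval x * b.eval x - f.eval x * b.derivative.eval x) / (b.eval x)^2) x :=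
    fun x hx => (f.hasDerivAt x).div (b.hasDerivAt x) (hb x hx).ne'
  have hm : MonotoneOn (fun x => f.eval x / b.eval x) (Set.Ioi g) := by
    apply monotoneOn_of_deriv_nonneg (convex_Ioi g)
    · exact fun x hx => (hd x hx).continuousAt.continuousWithinAt
    · intro x hx
      rw [interior_Ioi] at hx
      exact (hd x hx).differentiableAt.differentiableWithinAt
    · intro x hx
      rw [interior_Ioi] at hx
      rw [(hd x hx).deriv]
      exact div_nonneg (wronskian_nonneg f b h x) (sq_nonneg _)
  exact hm hx (lt_of_lt_of_le hx hxy) hxy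

lemma pos_above (q : ℝ[X]) (hq : ∀ᶠ x in Filter.atTop, 0 < q.eval x) (a : ℝ)
    (h : ∀ x, a < x → q.eval x ≠ 0) (x : ℝ) (hx : a < x) : 0 < q.eval x := by
  by_contra hcon
  push Not at hcon
  obtain ⟨y, hy, hxy⟩ := (hq.and (Filter.eventually_ge_atTop x)).exists
  obtain ⟨c, hc, hc0⟩ := intermediate_value_Icc hxy q.continuous.continuousOn
    (show (0 : ℝ) ∈ Set.Icc _ _ from ⟨hcon, hy.le⟩)
  exact h c (lt_of_lt_of_le hx hc.1) hc0

/-- The key interlacing step. -/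
lemma step {r : ℕ} (hr : 1 ≤ r) (f : Fin r → ℝ[X]) (b : ℝ[X])
    (h : ∀ k, ∀ z : ℂ, 0 < z.im → 0 < (aeval z (f k) / aeval z b).im)
    (hb : ∀ᶠ x in Filter.atTop, 0 < b.eval x)
    (hf : ∀ᶠ x in Filter.atTop, 0 < (∑ k, f k).eval x) :
    ∃ k, ∀ x, (f k).eval x = 0 → ∃ y, (∑ k, f k).eval y = 0 ∧ x ≤ y := by
  by_contra hcon
  push Not at hcon
  choose x hx hxF using hcon
  have : Nonempty (Fin r) := ⟨⟨0, hr⟩⟩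
  obtain ⟨k0, hk0⟩ := Finite.exists_min x
  set β := x k0
  have hFpos : ∀ y, β ≤ y → 0 < (∑ k, f k).eval y := by
    intro y hy
    by_contra hc
    push Not at hc
    obtain ⟨w, hw, hyw⟩ := (hf.and (Filter.eventually_ge_atTop y)).exists
    obtain ⟨c, hc, hc0⟩ := intermediate_value_Icc hyw (∑ k, f k).continuous.continuousOn
      (show (0 : ℝ) ∈ Set.Icc _ _ from ⟨hc, hw.le⟩)
    exact absurd (hxF k0 c hc0) (not_lt.mpr (hy.trans hc.1))
  have contra : ∀ y, β ≤ y → ¬ ∀ k, (f k).eval y ≤ 0 := by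
    intro y hy hk
    have := hFpos y hy
    rw [Polynomial.eval_finsetSum] at this
    exact absurd this (not_lt.mpr (Finset.sum_nonpos fun k _ => hk k))
  have hb0 : b ≠ 0 := by
    rintro rfl
    obtain ⟨y, hy⟩ := hb.exists
    simp at hy
  by_cases hroot : ∃ y, β < y ∧ b.eval y = 0
  · obtain ⟨y0, hy0, hy0r⟩ := hroot
    have hne : b.roots.toFinset.Nonempty := ⟨y0, by simp [hb0, hy0r]⟩
    set g := b.roots.toFinset.max' hne with hg
    have hgr : b.eval g = 0 := by
      have := b.roots.toFinset.max'_mem hne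
      rw [Multiset.mem_toFinset, mem_roots hb0] at this
      exact this
    have hmax : ∀ y, b.eval y = 0 → y ≤ g := fun y hy =>
      Finset.le_max' _ _ (by simp [hb0, hy])
    have hpos := pos_above b hb g (fun y hy h0 => absurd (hmax y h0) (not_le.mpr hy))
    refine contra g (hy0.le.trans (hmax y0 hy0r)) fun k => ?_
    set s := (f k).eval (g + 1) / b.eval (g + 1)
    have hle : ∀ᶠ y in nhdsWithin g (Set.Ioi g), (f k).eval y ≤ s * b.eval y := by
      filter_upwards [Ioc_mem_nhdsGT (show g < g + 1 by linarith)] with y hy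
      have := cross_mono (f k) b (h k) g hpos y (g + 1) hy.1 hy.2
      rwa [div_le_iff₀ (hpos y hy.1)] at this
    have t1 : Filter.Tendsto (fun y => (f k).eval y) (nhdsWithin g (Set.Ioi g))
        (nhds ((f k).eval g)) := (f k).continuous.continuousAt.tendsto.mono_left nhdsWithin_le_nhds
    have t2 : Filter.Tendsto (fun y => s * b.eval y) (nhdsWithin g (Set.Ioi g))
        (nhds (s * b.eval g)) :=
      (continuous_const.mul b.continuous).continuousAt.tendsto.mono_left nhdsWithin_le_nhds
    have := le_of_tendsto_of_tendsto t1 t2 hle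
    rwa [hgr, mul_zero] at this
  · push Not at hroot
    have hpos := pos_above b hb β hroot
    refine contra β le_rfl fun k => ?_
    rcases (hk0 k).eq_or_lt with he | hlt
    · have := hx k
      rw [← he] at this
      exact this.le
    have hle : ∀ᶠ y in nhdsWithin β (Set.Ioi β), (f k).eval y ≤ 0 := by
      filter_upwards [Ioc_mem_nhdsGT hlt] with y hy
      have := cross_mono (f k) b (h k) β hpos y (x k) hy.1 hy.2
      rw [hx k, zero_div, div_le_iff₀ (hpos y hy.1), zero_mul] at this
      exact this
    exact le_of_tendsto
      ((f k).continuous.continuousAt.tendsto.mono_left nhdsWithin_le_nhds) hle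

lemma exists_real {ι : Type} [Fintype ι] [DecidableEq ι] (B : Matrix ι ι ℂ)
    (hB : B.IsHermitian) : ∃ Q : Finset ι → ℝ[X],
      (∀ Y x, aeval x (Q Y) = minorG B (fun _ => x) Y) ∧
      ∀ Y, ∀ᶠ x in Filter.atTop, 0 < (Q Y).eval x := by
  refine ⟨fun Y => ∏ i, (X - C ((hB.submatrix (Subtype.val : {p // p ∈ Y} → ι)).eigenvalues i)),
    fun Y x => ?_, fun Y => ?_⟩
  · rw [minorG_const, (hB.submatrix (Subtype.val : {p // p ∈ Y} → ι)).charpoly_eq]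
    simp [Polynomial.eval_prod]
  · have : ∀ᶠ x in Filter.atTop, ∀ i,
        (hB.submatrix (Subtype.val : {p // p ∈ Y} → ι)).eigenvalues i < x :=
      Filter.eventually_all.mpr fun i => Filter.eventually_gt_atTop _
    filter_upwards [this] with x hx
    rw [Polynomial.eval_prod]
    exact Finset.prod_pos fun i _ => by simpa using hx i

lemma itSum_pos {n r : ℕ} (hr : 1 ≤ r) (Q : Finset (Fin n × Fin r) → ℝ[X])
    (hQ : ∀ Y, ∀ᶠ x in Filter.atTop, 0 < (Q Y).eval x) (L : List (Fin n))
    (Y : Finset (Fin n × Fin r)) : ∀ᶠ x in Filter.atTop, 0 < (itSum Q L Y).eval x := by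
  induction L generalizing Y with
  | nil => exact hQ Y
  | cons j L ih =>
    filter_upwards [Filter.eventually_all.mpr fun k => ih (insert (j, k) Y)] with x hx
    simp only [itSum]
    rw [Polynomial.eval_finsetSum]
    exact Finset.sum_pos (fun k _ => hx k) ⟨⟨0, hr⟩, Finset.mem_univ _⟩

lemma greedy {n r : ℕ} (hr : 1 ≤ r) (B : Matrix (Fin n × Fin r) (Fin n × Fin r) ℂ)
    (hB : B.IsHermitian) (Q : Finset (Fin n × Fin r) → ℝ[X])
    (hQB : ∀ L Y x, aeval x (itSum Q L Y) = itSum (minorG B (fun _ => x)) L Y)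
    (hQ : ∀ Y, ∀ᶠ x in Filter.atTop, 0 < (Q Y).eval x)
    (L : List (Fin n)) (hL : L.Nodup) (Y : Finset (Fin n × Fin r)) (hY : ∀ p ∈ Y, p.1 ∉ L) :
    ∃ c : Fin n → Fin r, ∀ x, (Q (Y ∪ L.toFinset.image (fun i => (i, c i)))).eval x = 0 →
      ∃ y, (itSum Q L Y).eval y = 0 ∧ x ≤ y := by
  induction L generalizing Y with
  | nil => exact ⟨fun _ => ⟨0, hr⟩, fun x hx => ⟨x, by simpa [itSum] using hx, le_rfl⟩⟩
  | cons j L ih =>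
    rw [List.nodup_cons] at hL
    have hY' : ∀ p ∈ Y, p.1 ∉ L := fun p hp h => hY p hp (List.mem_cons_of_mem _ h)
    obtain ⟨k, hk⟩ := step hr (fun k => itSum Q L (insert (j, k) Y)) (itSum Q L Y)
      (fun k z hz => by
        rw [hQB, hQB]
        exact ratio_pos B L Y (itSum_ne_zero hr B hB L hL.2) hY' (j, k) hL.1
          (fun h => hY _ h List.mem_cons_self) _ (fun _ => hz))
      (itSum_pos hr Q hQ L Y) (itSum_pos hr Q hQ (j :: L) Y)
    obtain ⟨c, hc⟩ := ih hL.2 (insert (j, k) Y) (by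
      intro p hp
      rcases Finset.mem_insert.mp hp with rfl | h
      · exact hL.1
      · exact hY' p h)
    refine ⟨Function.update c j k, fun x hx => ?_⟩
    have hset : Y ∪ (j :: L).toFinset.image (fun i => (i, Function.update c j k i))
        = insert (j, k) Y ∪ L.toFinset.image (fun i => (i, c i)) := by
      have : L.toFinset.image (fun i => (i, Function.update c j k i))
          = L.toFinset.image (fun i => (i, c i)) := by
        refine Finset.image_congr fun i hi => ?_
        have : i ≠ j := by
          rintro rfl
          exact hL.1 (by simpa using hi)
        simp [this]
      rw [List.toFinset_cons, Finset.image_insert, this]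
      simp
    rw [hset] at hx
    obtain ⟨y, hy, hxy⟩ := hc x hx
    obtain ⟨w, hw, hyw⟩ := hk y hy
    exact ⟨w, hw, hxy.trans hyw⟩

lemma real_of_nonvanishing (q : ℝ[X]) (h : ∀ z : ℂ, 0 < z.im → aeval z q ≠ 0) (z : ℂ)
    (hz : aeval z q = 0) : z.im = 0 := by
  rcases lt_trichotomy z.im 0 with h1 | h1 | h1
  · exfalso
    refine h ((starRingEnd ℂ) z) (by simpa using h1) ?_
    rw [Polynomial.aeval_conj, hz, map_zero]
  · exact h1
  · exact absurd hz (h z h1)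

/-- direct sum of `r` copies of `A`. -/
def copies {n : ℕ} (r : ℕ) (A : Matrix (Fin n) (Fin n) ℂ) :
    Matrix (Fin n × Fin r) (Fin n × Fin r) ℂ :=
  Matrix.of fun p q => if p.2 = q.2 then A p.1 q.1 else 0

lemma leaf {n r : ℕ} (A : Matrix (Fin n) (Fin n) ℂ) (c : Fin n → Fin r) (x : ℂ) :
    minorG (copies r A) (fun _ => x) (Finset.univ.image (fun i => (i, c i)))
      = (paving A c).charpoly.eval x := by
  rw [minorG_const]
  let e : Fin n ≃ {p : Fin n × Fin r // p ∈ Finset.univ.image (fun i => (i, c i))} :=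
    { toFun := fun i => ⟨(i, c i), by simp⟩
      invFun := fun p => p.1.1
      left_inv := fun i => rfl
      right_inv := by
        rintro ⟨p, hp⟩
        obtain ⟨i, _, rfl⟩ := Finset.mem_image.mp hp
        rfl }
  rw [← Matrix.charpoly_reindex e.symm]
  rfl

/-- For a Hermitian matrix `A`, the sum of the characteristic polynomials of all `r`-pavings
of `A` has only real roots, and some `r`-paving has all of its eigenvalues (roots of its
characteristic polynomial) at most the largest root of the sum. -/
theorem paving_interlacing_family {n : ℕ} (hn : 1 ≤ n) (r : ℕ) (hr : 1 ≤ r)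
    (A : Matrix (Fin n) (Fin n) ℂ) (hA : A.IsHermitian) :
    (∀ z : ℂ, (∑ c : Fin n → Fin r, (paving A c).charpoly).IsRoot z → z.im = 0) ∧
    (∃ c : Fin n → Fin r, ∀ x : ℂ, (paving A c).charpoly.IsRoot x →
      ∃ y : ℂ, (∑ c' : Fin n → Fin r, (paving A c').charpoly).IsRoot y ∧ x.re ≤ y.re) := by
  have hB : (copies r A).IsHermitian := by
    ext p q
    simp only [copies, Matrix.conjTranspose_apply, Matrix.of_apply]
    by_cases h : p.2 = q.2
    · rw [if_pos h, if_pos h.symm]; exact hA.apply _ _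
    · rw [if_neg h, if_neg (Ne.symm h)]; simp
  obtain ⟨Q, hQ1, hQ2⟩ := exists_real (copies r A) hB
  have hQB : ∀ L Y x, aeval x (itSum Q L Y) = itSum (minorG (copies r A) (fun _ => x)) L Y := by
    intro L Y x
    have := itSum_map ((aeval x : ℝ[X] →ₐ[ℝ] ℂ) : ℝ[X] →+ ℂ) Q L Y
    simp only [AddMonoidHom.coe_coe, hQ1] at this
    exact this
  have hsum : ∀ x : ℂ, (∑ c : Fin n → Fin r, (paving A c).charpoly).eval x
      = aeval x (itSum Q (List.finRange n) ∅) := by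
    intro x
    rw [hQB, itSum_unroll _ _ (List.nodup_finRange n) ∅ (fun _ => ⟨0, hr⟩),
      Polynomial.eval_finsetSum]
    simp [← leaf]
  have hnv : ∀ L : List (Fin n), L.Nodup → ∀ Y : Finset (Fin n × Fin r), (∀ p ∈ Y, p.1 ∉ L) →
      ∀ z : ℂ, 0 < z.im → aeval z (itSum Q L Y) ≠ 0 := by
    intro L hL Y hY z hz
    rw [hQB]
    exact itSum_ne_zero hr _ hB L hL _ (fun _ => hz) Y hY
  refine ⟨fun z hz => ?_, ?_⟩
  · rw [IsRoot, hsum] at hz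
    exact real_of_nonvanishing _ (hnv _ (List.nodup_finRange n) ∅ (by simp)) z hz
  · obtain ⟨c, hc⟩ := greedy hr (copies r A) hB Q hQB hQ2 (List.finRange n)
      (List.nodup_finRange n) ∅ (by simp)
    refine ⟨c, fun x hx => ?_⟩
    have hx' : aeval x (Q (Finset.univ.image (fun i => (i, c i)))) = 0 := by
      rw [hQ1, leaf]; exact hx
    have him := real_of_nonvanishing _
      (fun z hz => hnv [] List.nodup_nil (Finset.univ.image (fun i => (i, c i))) (by simp) z hz) x hx'
    have hxr : x = ((x.re : ℝ) : ℂ) := by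
      apply Complex.ext <;> simp [him]
    have hcast : ∀ (q : ℝ[X]) (t : ℝ), aeval (t : ℂ) q = ((q.eval t : ℝ) : ℂ) := by
      intro q t
      exact Polynomial.aeval_algebraMap_apply_eq_algebraMap_eval t q
    rw [hxr, hcast] at hx'
    obtain ⟨y, hy, hxy⟩ := hc x.re (by simpa using hx')
    refine ⟨(y : ℂ), ?_, by simpa using hxy⟩
    rw [IsRoot, hsum, hcast, hy, Complex.ofReal_zero]
end

section
/- Let μ be a probability distribution on the subsets of {1,…,n} (μ(S) ≥ 0 for each S ⊆ {1,…,n} and Σ_S μ(S) = 1) that is strongly Rayleigh, i.e. its generating polynomial P_μ(z₁,…,z_n) = Σ_S μ(S)·∏_{i∈S} z_i is real stable. Let A be an n×n complex Hermitian matrix. Then: (i) the polynomial q(x) := Σ_{S ⊆ {1,…,n}} μ(S)·χ[A_S](x) has all of its complex roots real; (ii) q(x) = P_μ(∂_{z₁},…,∂_{z_n}) det(Z − A), evaluated at z₁ = ⋯ = z_n = x, where Z = diag(z₁,…,z_n); and (iii) if q is nonconstant, there exists S with μ(S) > 0 such that every root of χ[A_S] is at most the largest root of q. -/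
open Polynomial Matrix

/-- A polynomial with real coefficients is real stable if it has no zero all of whose
coordinates have strictly positive imaginary part. -/
def RealStable {n : ℕ} (p : MvPolynomial (Fin n) ℝ) : Prop :=
  ∀ z : Fin n → ℂ, (∀ k, 0 < (z k).im) → MvPolynomial.aeval z p ≠ 0

/-- The principal submatrix of `A` obtained by deleting the rows and columns indexed by `S`. -/
def subAway {n : ℕ} (A : Matrix (Fin n) (Fin n) ℂ) (S : Finset (Fin n)) :
    Matrix ↥(Sᶜ) ↥(Sᶜ) ℂ :=
  A.submatrix (fun x : ↥(Sᶜ) => (x : Fin n)) (fun x : ↥(Sᶜ) => (x : Fin n))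

/-- The formal partial derivative `∂/∂zᵢ` as a linear endomorphism of `ℂ[z₁,…,z_n]`. -/
noncomputable def pd {n : ℕ} (i : Fin n) :
    MvPolynomial (Fin n) ℂ →ₗ[ℂ] MvPolynomial (Fin n) ℂ :=
  (MvPolynomial.pderiv i).toLinearMap

/-- The differential operator `Π_{i ∈ S} ∂_{zᵢ}`. -/
noncomputable def pdS {n : ℕ} (S : Finset (Fin n)) :
    MvPolynomial (Fin n) ℂ →ₗ[ℂ] MvPolynomial (Fin n) ℂ :=
  ((S.sort (· ≤ ·)).map pd).prod

/-- The matrix `Z - A`, where `Z = diag(z₁,…,z_n)` is the diagonal matrix of indeterminates. -/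
noncomputable def ZsubA {n : ℕ} (A : Matrix (Fin n) (Fin n) ℂ) :
    Matrix (Fin n) (Fin n) (MvPolynomial (Fin n) ℂ) :=
  Matrix.of fun i j => (if i = j then MvPolynomial.X i else 0) - MvPolynomial.C (A i j)

/-- The expected characteristic polynomial `Σ_S μ(S) χ[A_S]` over a strongly Rayleigh
distribution `μ`. -/
noncomputable def expCharpoly {n : ℕ} (μ : Finset (Fin n) → ℝ)
    (A : Matrix (Fin n) (Fin n) ℂ) : Polynomial ℂ :=
  ∑ S : Finset (Fin n), Polynomial.C ((μ S : ℝ) : ℂ) * (subAway A S).charpoly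


open Filter Topology in
lemma hurwitz_aux (F : ℝ → ℂ → ℂ) (hF : Continuous (Function.uncurry F))
    (hd : ∀ t, Differentiable ℂ (F t)) (t0 : ℝ) (p : ℂ[X]) (hp : p ≠ 0)
    (hFp : ∀ z, F t0 z = p.eval z) (c : ℂ) (hc : p.eval c = 0) (ε : ℝ) (hε : 0 < ε) :
    ∀ᶠ t in 𝓝 t0, ∃ z ∈ Metric.ball c ε, F t z = 0 := by
  obtain ⟨r, hr, hr'⟩ := (Set.Ioo_infinite hε).exists_notMem_finset
    (p.roots.toFinset.image (fun x => dist x c))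
  have hne : ∀ z ∈ Metric.sphere c r, F t0 z ≠ 0 := by
    intro z hz h0
    apply hr'
    rw [Finset.mem_image]
    refine ⟨z, ?_, hz⟩
    rw [Multiset.mem_toFinset, Polynomial.mem_roots hp, Polynomial.IsRoot, ← hFp, h0]
  have hcF : ∀ t, Continuous (F t) := fun t => (hd t).continuous
  obtain ⟨z0, hz0, hmin⟩ := (isCompact_sphere c r).exists_isMinOn
    (NormedSpace.sphere_nonempty.2 hr.1.le) (hcF t0).norm.continuousOn
  set m := ‖F t0 z0‖ with hm
  have hmpos : 0 < m := norm_pos_iff.2 (hne z0 hz0)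
  have h1 : ∀ᶠ t in 𝓝 t0, ∀ z ∈ Metric.sphere c r, m / 2 < ‖F t z‖ := by
    apply (isCompact_sphere c r).eventually_forall_of_forall_eventually
    intro z hz
    have hlt : m / 2 < ‖F t0 z‖ := lt_of_lt_of_le (by linarith) (hmin hz)
    have hcont : Continuous fun q : ℝ × ℂ => ‖F q.1 q.2‖ := hF.norm
    exact hcont.continuousAt.eventually (lt_mem_nhds hlt)
  have h2 : ∀ᶠ t in 𝓝 t0, ‖F t c‖ < m / 2 := by
    have hcont : Continuous fun t : ℝ => ‖F t c‖ :=
      (hF.comp (Continuous.prodMk continuous_id continuous_const)).norm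
    apply hcont.continuousAt.eventually (gt_mem_nhds _)
    show ‖F t0 c‖ < m / 2
    rw [hFp, hc]; simpa using hmpos
  filter_upwards [h1, h2] with t ht1 ht2
  by_contra! hcon
  have hball : ∀ z ∈ Metric.closedBall c r, F t z ≠ 0 := fun z hz =>
    hcon z (Metric.closedBall_subset_ball hr.2 hz)
  have hdc : DiffContOnCl ℂ (fun z => (F t z)⁻¹) (Metric.ball c r) := by
    apply DifferentiableOn.diffContOnCl
    rw [closure_ball c hr.1.ne']
    intro z hz
    exact ((hd t z).inv (hball z hz)).differentiableWithinAt
  have := Complex.norm_le_of_forall_mem_frontier_norm_le Metric.isBounded_ball hdc (C := (m/2)⁻¹)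
    (z := c) (by
      intro z hz
      rw [frontier_ball c hr.1.ne'] at hz
      rw [norm_inv]
      exact inv_anti₀ (by linarith) (ht1 z hz).le)
    (subset_closure (Metric.mem_ball_self hr.1))
  rw [norm_inv] at this
  have h3 := (inv_le_inv₀ (norm_pos_iff.2 (hball c (Metric.mem_closedBall_self hr.1.le)))
    (by linarith)).1 this
  linarith

lemma contract_scalar (a b c d : ℂ)
    (h : ∀ x y : ℂ, x.im ≤ 0 → 0 ≤ y.im → a + b * x + c * y + d * x * y ≠ 0) : a + d ≠ 0 := by
  intro had
  have hd : d = -a := by linear_combination had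
  subst hd
  have ha : a ≠ 0 := by simpa using h 0 0 (by simp) (by simp)
  have key : ∀ e : ℂ, ∃ t : ℝ, 0 < t ∧ |e.im| ≤ t := fun e => ⟨|e.im| + 1, by positivity, by linarith⟩
  by_cases hb : b = 0
  · obtain ⟨t, ht, het⟩ := key (c / a)
    have htc : (t : ℂ) ≠ 0 := by exact_mod_cast ht.ne'
    refine h (-(t * Complex.I) + c / a) (Complex.I / t) ?_ ?_ ?_
    · simp only [Complex.add_im, Complex.neg_im, Complex.mul_im, Complex.ofReal_re, Complex.I_im,
        Complex.ofReal_im, Complex.I_re]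
      have := le_abs_self (c / a).im
      linarith
    · rw [Complex.div_ofReal_im]; simp [ht.le]
    · subst hb
      field_simp
      ring_nf
      simp only [Complex.I_sq]; ring
  by_cases hc : c = 0
  · obtain ⟨t, ht, het⟩ := key (b / a)
    have htc : (t : ℂ) ≠ 0 := by exact_mod_cast ht.ne'
    refine h (-Complex.I / t) (t * Complex.I + b / a) ?_ ?_ ?_
    · rw [Complex.div_ofReal_im]
      exact div_nonpos_of_nonpos_of_nonneg (by simp) ht.le
    · simp only [Complex.add_im, Complex.mul_im, Complex.ofReal_re, Complex.I_im,
        Complex.ofReal_im, Complex.I_re]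
      have := neg_abs_le (b / a).im
      linarith
    · subst hc
      field_simp
      ring_nf
      simp only [Complex.I_sq]; ring
  obtain ⟨s, hs⟩ := IsAlgClosed.exists_pow_nat_eq (-c / b) (n := 2) (by norm_num)
  have hfin : ∀ x : ℂ, x ^ 2 = -c / b → x.im ≤ 0 → False := by
    intro x hx hxi
    have hx0 : x ≠ 0 := by
      rintro rfl
      have : -c / b ≠ 0 := div_ne_zero (neg_ne_zero.2 hc) hb
      exact this (by rw [← hx]; simp)
    refine h x x⁻¹ hxi ?_ ?_
    · rw [Complex.inv_im]
      exact div_nonneg (by linarith) (Complex.normSq_nonneg _)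
    · have : b * x ^ 2 = -c := by rw [hx]; field_simp
      field_simp
      linear_combination this
  rcases le_total s.im 0 with h0 | h0
  · exact hfin s hs h0
  · exact hfin (-s) (by rw [neg_sq, hs]) (by simpa using h0)

lemma contract_multi {ι : Type*} [DecidableEq ι] (s : Finset ι) :
    ∀ h : Finset ι → Finset ι → ℂ,
    (∀ w u : ι → ℂ, (∀ i, (w i).im ≤ 0) → (∀ i, 0 ≤ (u i).im) →
      ∑ S ∈ s.powerset, ∑ T ∈ s.powerset, h S T * (∏ i ∈ S, w i) * (∏ i ∈ T, u i) ≠ 0) →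
    ∑ S ∈ s.powerset, h S S ≠ 0 := by
  induction s using Finset.induction_on with
  | empty =>
    intro h hh
    simpa using hh 0 0 (by simp) (by simp)
  | insert a s ha ih =>
    intro h hh
    rw [Finset.sum_powerset_insert ha, ← Finset.sum_add_distrib]
    apply ih (fun S T => h S T + h (insert a S) (insert a T))
    intro w u hw hu
    have hout : ∀ S ∈ s.powerset, a ∉ S := fun S hS h' => ha (Finset.mem_powerset.1 hS h')
    have hupd : ∀ (v : ι → ℂ) (x : ℂ), ∀ S ∈ s.powerset,
        ∏ i ∈ S, Function.update v a x i = ∏ i ∈ S, v i := by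
      intro v x S hS
      apply Finset.prod_congr rfl
      intro i hi
      rw [Function.update_of_ne]
      rintro rfl
      exact hout S hS hi
    have hupd' : ∀ (v : ι → ℂ) (x : ℂ), ∀ S ∈ s.powerset,
        ∏ i ∈ insert a S, Function.update v a x i = x * ∏ i ∈ S, v i := by
      intro v x S hS
      rw [Finset.prod_insert (hout S hS), hupd v x S hS, Function.update_self]
    have := contract_scalar
      (∑ S ∈ s.powerset, ∑ T ∈ s.powerset, h S T * (∏ i ∈ S, w i) * (∏ i ∈ T, u i))
      (∑ S ∈ s.powerset, ∑ T ∈ s.powerset, h (insert a S) T * (∏ i ∈ S, w i) * (∏ i ∈ T, u i))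
      (∑ S ∈ s.powerset, ∑ T ∈ s.powerset, h S (insert a T) * (∏ i ∈ S, w i) * (∏ i ∈ T, u i))
      (∑ S ∈ s.powerset, ∑ T ∈ s.powerset,
        h (insert a S) (insert a T) * (∏ i ∈ S, w i) * (∏ i ∈ T, u i)) ?_
    · convert this using 1
      simp only [← Finset.sum_add_distrib]
      refine Finset.sum_congr rfl fun S _ => Finset.sum_congr rfl fun T _ => by ring
    · intro x y hx hy
      have h1 := hh (Function.update w a x) (Function.update u a y) ?_ ?_
      · convert h1 using 1
        rw [Finset.sum_powerset_insert ha]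
        simp only [Finset.sum_powerset_insert ha]
        simp only [Finset.sum_mul, ← Finset.sum_add_distrib]
        refine Finset.sum_congr rfl fun S hS => Finset.sum_congr rfl fun T hT => ?_
        rw [hupd _ _ S hS, hupd _ _ T hT, hupd' _ _ S hS, hupd' _ _ T hT]
        ring
      · intro i
        by_cases hi : i = a
        · subst hi; simpa using hx
        · simpa [Function.update_of_ne hi] using hw i
      · intro i
        by_cases hi : i = a
        · subst hi; simpa using hy
        · simpa [Function.update_of_ne hi] using hu i

/-- Replace the rows of `M` indexed by `S` by the rows of the identity matrix. -/
def pwM {n : ℕ} {R : Type*} [CommRing R] (S : Finset (Fin n)) (M : Matrix (Fin n) (Fin n) R) :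
    Matrix (Fin n) (Fin n) R :=
  Matrix.of fun i j => if i ∈ S then (if i = j then 1 else 0) else M i j

lemma det_piecewise {n : ℕ} {R : Type*} [CommRing R] (M : Matrix (Fin n) (Fin n) R)
    (S : Finset (Fin n)) :
    (pwM S M).det =
      (M.submatrix (fun x : ↥(Sᶜ) => (x : Fin n)) (fun x : ↥(Sᶜ) => (x : Fin n))).det := by
  rw [Matrix.twoBlockTriangular_det' _ (fun i => i ∈ S)]
  · have h1 : (Matrix.toSquareBlockProp (pwM S M)
        (fun i => i ∈ S)) = 1 := by
      ext ⟨i, hi⟩ ⟨j, hj⟩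
      simp [Matrix.toSquareBlockProp, pwM, hi, Matrix.one_apply]
    rw [h1]
    refine (congrArg (· * _) (@Matrix.det_one _ _ (_) R _)).trans ?_
    rw [one_mul]
    let e : {i : Fin n // ¬ i ∈ S} ≃ ↥(Sᶜ) := Equiv.subtypeEquivRight (fun i => by simp)
    refine Eq.trans ?_ (Matrix.det_submatrix_equiv_self e _)
    congr 1
    ext ⟨i, hi⟩ ⟨j, hj⟩
    simp [Matrix.toSquareBlockProp, pwM, hi, e]
  · intro i hi j hj
    have : i ≠ j := by rintro rfl; exact hj hi
    simp [pwM, hi, this]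

lemma det_diag_add {n : ℕ} {R : Type*} [CommRing R] (u : Fin n → R)
    (M : Matrix (Fin n) (Fin n) R) :
    (Matrix.diagonal u + M).det = ∑ S : Finset (Fin n), (∏ i ∈ S, u i) *
      (M.submatrix (fun x : ↥(Sᶜ) => (x : Fin n)) (fun x : ↥(Sᶜ) => (x : Fin n))).det := by
  have h := (Matrix.detRowAlternating (n := Fin n) (R := R)).toMultilinearMap.map_add_univ
    (Matrix.diagonal u) M
  refine h.trans (Finset.sum_congr rfl fun S _ => ?_)
  rw [← det_piecewise]
  have h2 := (Matrix.detRowAlternating (n := Fin n) (R := R)).toMultilinearMap.map_piecewise_smul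
    u (pwM S M) S
  rw [smul_eq_mul] at h2
  refine Eq.trans ?_ h2
  congr 1
  funext i
  show (if i ∈ S then Matrix.diagonal u i else M i) =
    (if i ∈ S then u i • pwM S M i else pwM S M i)
  by_cases hi : i ∈ S
  · rw [if_pos hi, if_pos hi]
    funext j
    simp [pwM, hi, Matrix.diagonal_apply]
  · rw [if_neg hi, if_neg hi]
    funext j
    simp [pwM, hi]

lemma det_stable {n : ℕ} (A : Matrix (Fin n) (Fin n) ℂ) (hA : A.IsHermitian) (d : Fin n → ℂ)
    (hd : ∀ i, 0 < (d i).im) : (Matrix.diagonal d - A).det ≠ 0 := by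
  intro h0
  obtain ⟨v, hv, hv0⟩ := Matrix.exists_mulVec_eq_zero_iff.2 h0
  have h1 : star v ⬝ᵥ ((Matrix.diagonal d - A) *ᵥ v) = 0 := by rw [hv0]; simp
  rw [Matrix.sub_mulVec, dotProduct_sub] at h1
  have h2 : (star v ⬝ᵥ (A *ᵥ v)).im = 0 := by
    have := hA.im_star_dotProduct_mulVec_self v
    simpa using this
  have h3 : (star v ⬝ᵥ (Matrix.diagonal d *ᵥ v)).im = 0 := by
    have := congrArg Complex.im h1
    rw [Complex.sub_im, h2] at this
    simpa using this
  have h4 : (star v ⬝ᵥ (Matrix.diagonal d *ᵥ v)).im = ∑ i, (d i).im * Complex.normSq (v i) := by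
    simp only [dotProduct, Matrix.mulVec_diagonal, Complex.im_sum]
    refine Finset.sum_congr rfl fun i _ => ?_
    simp [Complex.normSq_apply]
    ring
  rw [h4] at h3
  have h5 := (Finset.sum_eq_zero_iff_of_nonneg (fun i _ =>
    mul_nonneg (hd i).le (Complex.normSq_nonneg (v i)))).1 h3
  apply hv
  ext i
  have := h5 i (Finset.mem_univ i)
  rcases mul_eq_zero.1 this with h | h
  · exact absurd h (hd i).ne'
  · simpa using h

lemma eval_charpoly_subAway {n : ℕ} (A : Matrix (Fin n) (Fin n) ℂ) (S : Finset (Fin n)) (z : ℂ) :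
    (subAway A S).charpoly.eval z =
      ((Matrix.diagonal (fun _ => z) - A).submatrix (fun x : ↥(Sᶜ) => (x : Fin n))
        (fun x : ↥(Sᶜ) => (x : Fin n))).det := by
  rw [Matrix.eval_charpoly]
  congr 1
  ext i j
  by_cases h : i = j
  · subst h; simp [subAway]
  · have h' : (i : Fin n) ≠ j := fun h' => h (Subtype.ext h')
    simp [subAway, h, h']

lemma exists_real_charpoly {n : ℕ} (A : Matrix (Fin n) (Fin n) ℂ) (hA : A.IsHermitian) :
    ∃ (R : Finset (Fin n) → ℝ[X]) (M : ℝ), (∀ S, (subAway A S).charpoly = (R S).map Complex.ofRealHom)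
      ∧ ∀ S x, M ≤ x → 0 < (R S).eval x := by
  have hS : ∀ S, (subAway A S).IsHermitian := fun S => hA.submatrix _
  refine ⟨fun S => ∏ i, (X - C ((hS S).eigenvalues i)),
    ∑ S, ∑ i, |(hS S).eigenvalues i| + 1, ?_, ?_⟩
  · intro S
    rw [(hS S).charpoly_eq, Polynomial.map_prod]
    simp
  · intro S x hx
    rw [Polynomial.eval_prod]
    apply Finset.prod_pos
    intro i _
    have h1 : |(hS S).eigenvalues i| ≤ ∑ i, |(hS S).eigenvalues i| :=
      Finset.single_le_sum (f := fun i => |(hS S).eigenvalues i|)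
        (fun i _ => abs_nonneg _) (Finset.mem_univ i)
    have h2 : ∑ i, |(hS S).eigenvalues i| ≤ ∑ S, ∑ i, |(hS S).eigenvalues i| :=
      Finset.single_le_sum (f := fun S => ∑ i, |(hS S).eigenvalues i|)
        (fun i _ => Finset.sum_nonneg fun i _ => abs_nonneg _) (Finset.mem_univ S)
    have h3 := le_abs_self ((hS S).eigenvalues i)
    simp only [eval_sub, eval_X, eval_C]
    linarith

lemma pderiv_det_zero {n : ℕ} (i : Fin n) (N : Matrix (Fin n) (Fin n) (MvPolynomial (Fin n) ℂ))
    (h : ∀ a b, MvPolynomial.pderiv i (N a b) = 0) : MvPolynomial.pderiv i N.det = 0 := by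
  rw [Matrix.det_apply, map_sum]
  refine Finset.sum_eq_zero fun σ _ => ?_
  have : MvPolynomial.pderiv i (∏ a, N (σ a) a) = 0 := by
    apply Finset.prod_induction (fun a => N (σ a) a) (fun p => MvPolynomial.pderiv i p = 0)
    · intro a b ha hb
      simp [Derivation.leibniz, ha, hb]
    · simp
    · intro a _
      exact h _ _
  rcases Int.units_eq_one_or (Equiv.Perm.sign σ) with h1 | h1 <;> simp [h1, this]

lemma pderiv_step {n : ℕ} (A : Matrix (Fin n) (Fin n) ℂ) (T : Finset (Fin n)) (i : Fin n)
    (hi : i ∉ T) :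
    MvPolynomial.pderiv i ((pwM (T) (ZsubA A)).det) =
      (pwM (insert i T) (ZsubA A)).det := by
  set N : Matrix (Fin n) (Fin n) (MvPolynomial (Fin n) ℂ) :=
    pwM (T) (ZsubA A) with hN
  have e1 : pwM (insert i T) (ZsubA A) = N.updateRow i (Pi.single i 1) := by
    refine Matrix.ext fun a b => ?_
    by_cases hai : a = i
    · subst hai
      by_cases hb : a = b
      · subst hb; simp [Matrix.updateRow_self, pwM]
      · simp [Matrix.updateRow_self, pwM, hb, Ne.symm hb]
    · rw [Matrix.updateRow_ne hai]
      by_cases haT : a ∈ T <;> simp [hN, pwM, hai, haT]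
  have e2 : N = N.updateRow i ((MvPolynomial.X i : MvPolynomial (Fin n) ℂ) • Pi.single i 1 +
      fun b => - MvPolynomial.C (A i b)) := by
    refine Matrix.ext fun a b => ?_
    by_cases hai : a = i
    · subst hai
      by_cases hb : a = b
      · subst hb; simp [Matrix.updateRow_self, hN, pwM, hi, ZsubA, sub_eq_add_neg]
      · simp [Matrix.updateRow_self, hN, pwM, hi, ZsubA, hb, Ne.symm hb]
    · rw [Matrix.updateRow_ne hai]
  have hz : ∀ v : Fin n → MvPolynomial (Fin n) ℂ, (∀ b, MvPolynomial.pderiv i (v b) = 0) →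
      MvPolynomial.pderiv i (N.updateRow i v).det = 0 := by
    intro v hv
    apply pderiv_det_zero
    intro a b
    by_cases hai : a = i
    · subst hai
      rw [Matrix.updateRow_self, hv]
    · rw [Matrix.updateRow_ne hai]
      by_cases haT : a ∈ T
      · by_cases hab : a = b
        · subst hab
          simp [hN, pwM, haT]
        · simp [hN, pwM, haT, hab]
      · by_cases hab : a = b
        · subst hab
          simp [hN, pwM, haT, ZsubA, MvPolynomial.pderiv_X_of_ne hai]
        · simp [hN, pwM, haT, ZsubA, hab]
  rw [e1, e2, Matrix.det_updateRow_add, Matrix.det_updateRow_smul, map_add,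
    hz _ (by simp), Derivation.leibniz, hz _ (fun b => by by_cases hb : b = i <;> simp [hb])]
  simp [Matrix.updateRow_idem]

lemma pd_list {n : ℕ} (A : Matrix (Fin n) (Fin n) ℂ) (l : List (Fin n)) (hl : l.Nodup) :
    (l.map pd).prod (ZsubA A).det =
      (pwM (l.toFinset) (ZsubA A)).det := by
  induction l with
  | nil =>
    have : pwM ∅ (ZsubA A) = ZsubA A := by ext a b : 2; simp [pwM]
    simp [this]
  | cons i l ih =>
    rw [List.nodup_cons] at hl
    rw [List.map_cons, List.prod_cons, Module.End.mul_apply, ih hl.2, List.toFinset_cons]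
    exact pderiv_step A _ i (by simpa using hl.1)

lemma pdS_det {n : ℕ} (A : Matrix (Fin n) (Fin n) ℂ) (S : Finset (Fin n)) :
    MvPolynomial.aeval (fun _ : Fin n => (Polynomial.X : Polynomial ℂ)) (pdS S (ZsubA A).det) =
      (subAway A S).charpoly := by
  rw [pdS, pd_list _ _ (Finset.sort_nodup _ _), Finset.sort_toFinset, det_piecewise,
    AlgHom.map_det, Matrix.charpoly]
  congr 1
  ext i j : 2
  by_cases h : i = j
  · subst h; simp [ZsubA, subAway, Polynomial.algebraMap_eq]
  · have h' : (i : Fin n) ≠ j := fun h' => h (Subtype.ext h')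
    simp [ZsubA, subAway, h, h', Polynomial.algebraMap_eq]

lemma expected_upper {n : ℕ} (c : Finset (Fin n) → ℝ) (hc0 : ∀ S, 0 ≤ c S) (hpos : ∃ S, 0 < c S)
    (hst : ∀ w : Fin n → ℂ, (∀ k, 0 < (w k).im) → ∑ S, (c S : ℂ) * ∏ i ∈ S, w i ≠ 0)
    (A : Matrix (Fin n) (Fin n) ℂ) (hA : A.IsHermitian) (z : ℂ) (hz : 0 < z.im) :
    (expCharpoly c A).eval z ≠ 0 := by
  intro h0
  have hp : expCharpoly c A ≠ 0 := by
    intro h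
    obtain ⟨R, M, hR, hM⟩ := exists_real_charpoly A hA
    have h1 : (expCharpoly c A).eval (M : ℂ) = ((∑ S, c S * (R S).eval M : ℝ) : ℂ) := by
      rw [expCharpoly, Polynomial.eval_finsetSum]
      push_cast
      refine Finset.sum_congr rfl fun S _ => ?_
      rw [Polynomial.eval_mul, Polynomial.eval_C, hR S]
      congr 1
      exact Polynomial.eval_map_apply (f := Complex.ofRealHom) M
    rw [h, Polynomial.eval_zero] at h1
    have h2 : (∑ S, c S * (R S).eval M) = 0 := by exact_mod_cast h1.symm
    obtain ⟨S, hS⟩ := hpos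
    have h3 := (Finset.sum_eq_zero_iff_of_nonneg (fun S _ =>
      mul_nonneg (hc0 S) (hM S M le_rfl).le)).1 h2 S (Finset.mem_univ S)
    exact (mul_pos hS (hM S M le_rfl)).ne' h3
  set χ : Finset (Fin n) → ℂ → ℂ := fun S z => (subAway A S).charpoly.eval z with hχ
  have hχd : ∀ S, Differentiable ℂ (χ S) := fun S => Polynomial.differentiable _
  have hχc : ∀ S, Continuous (χ S) := fun S => (hχd S).continuous
  let F : ℝ → ℂ → ℂ := fun δ z => ∑ T : Finset (Fin n), (c T : ℂ) *
    ∑ S ∈ T.powerset, (-(δ * Complex.I)) ^ (T \ S).card * χ S z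
  have hFc : Continuous (Function.uncurry F) := by
    refine continuous_finsetSum _ fun T _ => continuous_const.mul
      (continuous_finsetSum _ fun S _ => ?_)
    exact (((Complex.continuous_ofReal.comp continuous_fst).mul continuous_const).neg.pow _).mul
      ((hχc S).comp continuous_snd)
  have hFd : ∀ t, Differentiable ℂ (F t) := by
    intro t
    refine Differentiable.fun_sum fun T _ => (Differentiable.const_mul ?_ _)
    refine Differentiable.fun_sum fun S _ => ((hχd S).const_mul _)
  have hF0 : ∀ z, F 0 z = (expCharpoly c A).eval z := by
    intro z
    rw [expCharpoly, Polynomial.eval_finsetSum]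
    refine Finset.sum_congr rfl fun T _ => ?_
    rw [Polynomial.eval_mul, Polynomial.eval_C]
    congr 1
    rw [Finset.sum_eq_single T]
    · simp [hχ]
    · intro S hS hST
      have : (T \ S).card ≠ 0 := by
        rw [Finset.card_ne_zero, Finset.sdiff_nonempty]
        intro h
        exact hST (Finset.Subset.antisymm (Finset.mem_powerset.1 hS) h)
      simp [this]
    · simp
  have hev := hurwitz_aux F hFc hFd 0 _ hp hF0 z h0 z.im hz
  have hev2 : ∀ᶠ t in nhdsWithin (0 : ℝ) (Set.Ioi 0), False := by
    filter_upwards [hev.filter_mono nhdsWithin_le_nhds, self_mem_nhdsWithin] with δ hδ hδ0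
    obtain ⟨y, hy, hFy⟩ := hδ
    have hδ0 : 0 < δ := hδ0
    have hyim : 0 < y.im := by
      have h1 : |(y - z).im| ≤ ‖y - z‖ := Complex.abs_im_le_norm _
      rw [Metric.mem_ball, dist_eq_norm] at hy
      have h2 := neg_abs_le (y - z).im
      rw [Complex.sub_im] at h1 h2
      linarith
    let P : Finset (Fin n) → ℂ := fun S => ∑ T : Finset (Fin n),
      if S ⊆ T then (c T : ℂ) * (-(δ * Complex.I)) ^ (T \ S).card else 0
    have hswap : ∀ g : Finset (Fin n) → ℂ, ∑ S, P S * g S = ∑ T : Finset (Fin n), (c T : ℂ) *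
        ∑ S ∈ T.powerset, (-(δ * Complex.I)) ^ (T \ S).card * g S := by
      intro g
      simp only [P, Finset.sum_mul]
      rw [Finset.sum_comm]
      refine Finset.sum_congr rfl fun T _ => ?_
      rw [Finset.mul_sum]
      have : T.powerset = Finset.univ.filter (fun S => S ⊆ T) := by ext; simp
      rw [this, Finset.sum_filter]
      refine Finset.sum_congr rfl fun S _ => ?_
      split_ifs <;> ring
    have hcm := contract_multi (Finset.univ : Finset (Fin n)) (fun S T => P S * χ T y) ?_
    · rw [Finset.powerset_univ] at hcm
      exact hcm ((hswap (fun S => χ S y)).trans hFy)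
    · intro w u hw hu
      rw [Finset.powerset_univ]
      have hfac : ∑ S, ∑ T, P S * χ T y * (∏ i ∈ S, w i) * (∏ i ∈ T, u i) =
          (∑ S, P S * ∏ i ∈ S, w i) * (∑ T, (∏ i ∈ T, u i) * χ T y) := by
        rw [Finset.sum_mul_sum]
        refine Finset.sum_congr rfl fun S _ => Finset.sum_congr rfl fun T _ => by ring
      rw [hfac]
      apply mul_ne_zero
      · rw [hswap]
        have h1 : ∀ T : Finset (Fin n), ∑ S ∈ T.powerset,
            (-(δ * Complex.I)) ^ (T \ S).card * ∏ i ∈ S, w i =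
            ∏ i ∈ T, (w i + -(δ * Complex.I)) := by
          intro T
          rw [Finset.prod_add]
          refine Finset.sum_congr rfl fun S _ => ?_
          rw [Finset.prod_const, mul_comm]
        simp only [h1]
        intro h2
        apply hst (fun i => (starRingEnd ℂ) (w i + -(δ * Complex.I)))
        · intro k
          have := hw k
          simp
          linarith
        · have h3 := congrArg (starRingEnd ℂ) h2
          simpa only [map_sum, map_mul, map_prod, Complex.conj_ofReal, map_zero] using h3
      · have h1 : ∑ T, (∏ i ∈ T, u i) * χ T y =
            (Matrix.diagonal u + (Matrix.diagonal (fun _ => y) - A)).det := by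
          rw [det_diag_add]
          refine Finset.sum_congr rfl fun T _ => ?_
          rw [← eval_charpoly_subAway]
        rw [h1, ← add_sub_assoc, Matrix.diagonal_add]
        apply det_stable A hA
        intro i
        have := hu i
        simp only [Complex.add_im]
        linarith
  rw [Filter.eventually_false_iff_eq_bot] at hev2
  exact (inferInstance : (nhdsWithin (0 : ℝ) (Set.Ioi 0)).NeBot).ne hev2

/-- All complex roots of the real polynomial `q` are real. -/
def RRp (q : ℝ[X]) : Prop := ∀ z : ℂ, (q.map Complex.ofRealHom).eval z = 0 → z.im = 0

lemma hurwitz_lin (p r : ℝ[X]) (t0 : ℝ) (hp : p + C t0 * r ≠ 0) (c : ℂ)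
    (hc : ((p + C t0 * r).map Complex.ofRealHom).eval c = 0) (ε : ℝ) (hε : 0 < ε) :
    ∀ᶠ t in nhds t0, ∃ z ∈ Metric.ball c ε,
      ((p + C t * r).map Complex.ofRealHom).eval z = 0 := by
  have hev : ∀ (t : ℝ) (z : ℂ), ((p + C t * r).map Complex.ofRealHom).eval z =
    (p.map Complex.ofRealHom).eval z + t * (r.map Complex.ofRealHom).eval z := by
    intro t z
    simp
  refine hurwitz_aux (fun t z => ((p + C t * r).map Complex.ofRealHom).eval z) ?_ ?_ t0
    ((p + C t0 * r).map Complex.ofRealHom) ?_ (fun _ => rfl) c hc ε hε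
  · have : (Function.uncurry fun (t : ℝ) z => ((p + C t * r).map Complex.ofRealHom).eval z) =
        fun q : ℝ × ℂ => (p.map Complex.ofRealHom).eval q.2 +
          (q.1 : ℂ) * (r.map Complex.ofRealHom).eval q.2 := by
      funext ⟨t, z⟩
      exact hev t z
    rw [this]
    exact ((Polynomial.continuous _).comp continuous_snd).add
      ((Complex.continuous_ofReal.comp continuous_fst).mul
        ((Polynomial.continuous _).comp continuous_snd))
  · intro t
    exact Polynomial.differentiable _
  · rwa [Ne, Polynomial.map_eq_zero]

lemma RRp_limit (p r : ℝ[X]) (hp : p ≠ 0) (h : ∀ t : ℝ, 0 < t → RRp (p + C t * r)) : RRp p := by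
  intro z hz
  by_contra him
  have hev := hurwitz_lin p r 0 (by simpa using hp) z (by simpa using hz) |z.im| (abs_pos.2 him)
  have hev2 : ∀ᶠ t in nhdsWithin (0 : ℝ) (Set.Ioi 0), False := by
    filter_upwards [hev.filter_mono nhdsWithin_le_nhds, self_mem_nhdsWithin] with t ht ht0
    obtain ⟨y, hy, hFy⟩ := ht
    have hyim := h t ht0 y hFy
    have h1 : |(y - z).im| ≤ ‖y - z‖ := Complex.abs_im_le_norm _
    rw [Metric.mem_ball, dist_eq_norm] at hy
    rw [Complex.sub_im, hyim, zero_sub, abs_neg] at h1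
    linarith
  rw [Filter.eventually_false_iff_eq_bot] at hev2
  exact (inferInstance : (nhdsWithin (0 : ℝ) (Set.Ioi 0)).NeBot).ne hev2

lemma pos_of_ne (q : ℝ[X]) (a M : ℝ) (haM : a ≤ M) (hM : 0 < q.eval M)
    (h : ∀ x, a ≤ x → q.eval x ≠ 0) : ∀ x, a ≤ x → 0 < q.eval x := by
  intro x hx
  by_contra! hneg
  obtain ⟨y, hy, hy0⟩ := (isPreconnected_Ici (a := a)).intermediate_value
    (Set.mem_Ici.2 hx) (Set.mem_Ici.2 haM) q.continuous.continuousOn ⟨hneg, hM.le⟩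
  exact h y hy hy0

lemma interlace_step_s7 (q0 q1 : ℝ[X]) (M a : ℝ) (h0M : ∀ x, M ≤ x → 0 < q0.eval x)
    (h1M : ∀ x, M ≤ x → 0 < q1.eval x) (hRR : ∀ t : ℝ, 0 < t → RRp (q0 + C t * q1))
    (ha : 0 < q0.eval a) (hs : ∀ x, a ≤ x → 0 < q0.eval x + q1.eval x) :
    ∀ x, a ≤ x → 0 < q0.eval x := by
  apply pos_of_ne q0 a (max a M) (le_max_left _ _) (h0M _ (le_max_right _ _))
  intro b hab hb
  have hFM : ∀ t : ℝ, 0 ≤ t → ∀ x, M ≤ x → 0 < (q0 + C t * q1).eval x := by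
    intro t ht x hx
    simp only [eval_add, eval_mul, eval_C]
    have := h0M x hx
    have := mul_nonneg ht (h1M x hx).le
    linarith
  have hcast : ∀ (q : ℝ[X]) (x : ℝ), (q.map Complex.ofRealHom).eval (x : ℂ) = ((q.eval x : ℝ) : ℂ) :=
    fun q x => Polynomial.eval_map_apply (f := Complex.ofRealHom) x
  let K : Set (ℝ × ℝ) := (Set.Icc (0:ℝ) 1 ×ˢ Set.Icc a M) ∩
    {q | q0.eval q.2 + q.1 * q1.eval q.2 = 0}
  have hK : IsCompact K := by
    apply (isCompact_Icc.prod isCompact_Icc).inter_right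
    refine isClosed_eq ?_ continuous_const
    exact (q0.continuous.comp continuous_snd).add
      (continuous_fst.mul (q1.continuous.comp continuous_snd))
  let U : Set ℝ := Prod.fst '' K
  have hU : IsClosed U := (hK.image continuous_fst).isClosed
  have h0U : (0 : ℝ) ∈ U := by
    refine ⟨(0, b), ⟨⟨by simp, hab, ?_⟩, by simpa using hb⟩, rfl⟩
    by_contra! hbM
    exact (h0M b hbM.le).ne' hb
  have hsub : Set.Icc (0:ℝ) 1 ⊆ U := by
    apply (hU.inter isClosed_Icc).Icc_subset_of_forall_mem_nhdsWithin h0U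
    rintro t ⟨⟨⟨t', c⟩, ⟨⟨ht', hc⟩, hc0⟩, rfl⟩, ht⟩
    simp only [Set.mem_ofPred_eq] at hc0 hc ht' ht ⊢
    have hac : a < c := by
      refine lt_of_le_of_ne hc.1 ?_
      rintro rfl
      have h1 := hs a le_rfl
      have h2 := mul_nonneg ht.1 h1.le
      have h3 := mul_pos (sub_pos.2 ht.2) ha
      nlinarith
    have hne : q0 + C t' * q1 ≠ 0 := by
      intro h
      have := hFM t' ht.1 M le_rfl
      rw [h] at this
      simp at this
    have hev := hurwitz_lin q0 q1 t' hne (c : ℂ) (by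
      rw [hcast]
      simp only [eval_add, eval_mul, eval_C]
      rw [hc0]; simp) (c - a) (sub_pos.2 hac)
    filter_upwards [hev.filter_mono nhdsWithin_le_nhds, self_mem_nhdsWithin,
      mem_nhdsWithin_of_mem_nhds (Iio_mem_nhds ht.2)] with s hs1 hs2 hs3
    obtain ⟨z, hz, hz0⟩ := hs1
    have hspos : 0 < s := lt_of_le_of_lt ht.1 hs2
    have hzim := hRR s hspos z hz0
    obtain ⟨x, rfl⟩ : ∃ x : ℝ, z = (x : ℂ) := ⟨z.re, Complex.ext (by simp) (by simpa using hzim)⟩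
    rw [hcast, Complex.ofReal_eq_zero] at hz0
    rw [Metric.mem_ball, Complex.dist_eq, ← Complex.ofReal_sub, Complex.norm_real,
      Real.norm_eq_abs, abs_lt] at hz
    refine ⟨(s, x), ⟨⟨⟨hspos.le, le_of_lt hs3⟩, by linarith [hz.1], ?_⟩, ?_⟩, rfl⟩
    · by_contra! hxM
      exact (hFM s hspos.le x hxM.le).ne' hz0
    · simpa using hz0
  obtain ⟨⟨t, x⟩, ⟨⟨_, hx⟩, hx0⟩, h1⟩ := hsub (Set.right_mem_Icc.2 zero_le_one)
  simp only [Set.mem_ofPred_eq] at hx0 hx h1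
  subst h1
  have := hs x hx.1
  linarith

/-- The weighted sum `∑ μ(S) λ^S R_S`. -/
noncomputable def wsum {n : ℕ} (R : Finset (Fin n) → ℝ[X]) (μ : Finset (Fin n) → ℝ)
    (l : Fin n → ℝ) : ℝ[X] := ∑ S, C (μ S * ∏ i ∈ S, l i) * R S

lemma wsum_pos {n : ℕ} (R : Finset (Fin n) → ℝ[X]) (M : ℝ) (hM : ∀ S x, M ≤ x → 0 < (R S).eval x)
    (μ : Finset (Fin n) → ℝ) (h0 : ∀ S, 0 ≤ μ S) (hp : ∃ S, 0 < μ S) (l : Fin n → ℝ)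
    (hl : ∀ i, 0 < l i) (x : ℝ) (hx : M ≤ x) : 0 < (wsum R μ l).eval x := by
  rw [wsum, Polynomial.eval_finsetSum]
  obtain ⟨S, hS⟩ := hp
  have hprod : ∀ S : Finset (Fin n), 0 < ∏ i ∈ S, l i := fun S => Finset.prod_pos fun i _ => hl i
  apply Finset.sum_pos'
  · intro T _
    simp only [eval_mul, eval_C]
    exact mul_nonneg (mul_nonneg (h0 T) (hprod T).le) (hM T x hx).le
  · refine ⟨S, Finset.mem_univ S, ?_⟩
    rw [eval_mul, eval_C]
    exact mul_pos (mul_pos hS (hprod S)) (hM S x hx)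

lemma branch {n : ℕ} (R : Finset (Fin n) → ℝ[X]) (M : ℝ)
    (hM : ∀ S x, M ≤ x → 0 < (R S).eval x) : ∀ (k : ℕ) (μ : Finset (Fin n) → ℝ),
    (∀ S, 0 ≤ μ S) → (∃ S, 0 < μ S) → (∀ l : Fin n → ℝ, (∀ i, 0 < l i) → RRp (wsum R μ l)) →
    (Finset.univ.filter (fun S => 0 < μ S)).card ≤ k →
    ∀ a : ℝ, (∀ x, a ≤ x → 0 < (wsum R μ 1).eval x) →
      ∃ S, 0 < μ S ∧ ∀ x, a ≤ x → 0 < (R S).eval x := by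
  intro k
  induction k with
  | zero =>
    rintro μ h0 ⟨S, hS⟩ hRR hcard
    have : S ∈ Finset.univ.filter (fun S => 0 < μ S) := by simp [hS]
    rw [Nat.le_zero, Finset.card_eq_zero] at hcard
    rw [hcard] at this
    simp at this
  | succ k ih =>
    intro μ h0 hp hRR hcard a ha
    by_cases hsplit : ∃ S T i, 0 < μ S ∧ 0 < μ T ∧ i ∈ S ∧ i ∉ T
    · obtain ⟨S1, S0, i, hS1, hS0, hi1, hi0⟩ := hsplit
      set μ0 : Finset (Fin n) → ℝ := fun S => if i ∈ S then 0 else μ S with hμ0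
      set μ1 : Finset (Fin n) → ℝ := fun S => if i ∈ S then μ S else 0 with hμ1
      have h00 : ∀ S, 0 ≤ μ0 S := by intro S; simp only [hμ0]; split_ifs <;> simp [h0]
      have h10 : ∀ S, 0 ≤ μ1 S := by intro S; simp only [hμ1]; split_ifs <;> simp [h0]
      have hp0 : ∃ S, 0 < μ0 S := ⟨S0, by simp [hμ0, hi0, hS0]⟩
      have hp1 : ∃ S, 0 < μ1 S := ⟨S1, by simp [hμ1, hi1, hS1]⟩
      have hdec : ∀ (l : Fin n → ℝ) (t : ℝ), wsum R μ (Function.update l i (t * l i)) =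
          wsum R μ0 l + C t * wsum R μ1 l := by
        intro l t
        simp only [wsum, Finset.mul_sum, ← Finset.sum_add_distrib]
        refine Finset.sum_congr rfl fun S _ => ?_
        by_cases hi : i ∈ S
        · have : ∏ j ∈ S, Function.update l i (t * l i) j = t * ∏ j ∈ S, l j := by
            rw [Finset.prod_update_of_mem hi, ← Finset.mul_prod_erase S l hi, mul_assoc,
              Finset.sdiff_singleton_eq_erase]
          rw [this]
          simp only [hμ0, hμ1, hi, if_true, zero_mul, map_zero, zero_add, map_mul]
          ring
        · rw [Finset.prod_update_of_notMem hi]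
          simp [hμ0, hμ1, hi]
      have hdec1 : wsum R μ 1 = wsum R μ0 1 + wsum R μ1 1 := by
        have := hdec 1 1
        simpa using this
      have hA : ∀ l : Fin n → ℝ, (∀ i, 0 < l i) → ∀ t : ℝ, 0 < t →
          RRp (wsum R μ0 l + C t * wsum R μ1 l) := by
        intro l hl t ht
        rw [← hdec]
        apply hRR
        intro j
        by_cases hj : j = i
        · subst hj; simpa using mul_pos ht (hl j)
        · simpa [Function.update_of_ne hj] using hl j
      have hB : ∀ l : Fin n → ℝ, (∀ i, 0 < l i) → ∀ t : ℝ, 0 < t →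
          RRp (wsum R μ1 l + C t * wsum R μ0 l) := by
        intro l hl t ht
        have h1 : wsum R μ1 l + C t * wsum R μ0 l =
            C t * (wsum R μ0 l + C t⁻¹ * wsum R μ1 l) := by
          rw [mul_add, ← mul_assoc, ← C_mul, mul_inv_cancel₀ ht.ne', C_1]
          ring
        intro z hz
        rw [h1, Polynomial.map_mul, eval_mul, Polynomial.map_C, eval_C] at hz
        refine hA l hl t⁻¹ (inv_pos.2 ht) z ((mul_eq_zero.1 hz).resolve_left ?_)
        simpa using ht.ne'
      have hne : ∀ ν : Finset (Fin n) → ℝ, (∀ S, 0 ≤ ν S) → (∃ S, 0 < ν S) →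
          ∀ l : Fin n → ℝ, (∀ i, 0 < l i) → wsum R ν l ≠ 0 := by
        intro ν hν hνp l hl h
        have := wsum_pos R M hM ν hν hνp l hl M le_rfl
        rw [h] at this
        simp at this
      have hone : ∀ i : Fin n, 0 < (1 : Fin n → ℝ) i := by simp
      have hcase : ∀ ν ν' : Finset (Fin n) → ℝ, (∀ S, 0 ≤ ν S) → (∃ S, 0 < ν S) →
          (∀ S, 0 ≤ ν' S) → (∃ S, 0 < ν' S) → (∀ S, 0 < ν S → 0 < μ S) →
          (∃ S, 0 < μ S ∧ ¬ 0 < ν S) →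
          (∀ l : Fin n → ℝ, (∀ i, 0 < l i) → ∀ t : ℝ, 0 < t →
            RRp (wsum R ν l + C t * wsum R ν' l)) →
          wsum R μ 1 = wsum R ν 1 + wsum R ν' 1 → 0 < (wsum R ν 1).eval a →
          ∃ S, 0 < μ S ∧ ∀ x, a ≤ x → 0 < (R S).eval x := by
        intro ν ν' hν hνp hν' hνp' hsub hss hrr hsum hνa
        have hpos := interlace_step_s7 (wsum R ν 1) (wsum R ν' 1) M a
          (wsum_pos R M hM ν hν hνp 1 hone) (wsum_pos R M hM ν' hν' hνp' 1 hone)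
          (hrr 1 hone) hνa (by
            intro x hx
            rw [← eval_add, ← hsum]
            exact ha x hx)
        obtain ⟨S, hS, hSx⟩ := ih ν hν hνp
          (fun l hl => RRp_limit _ _ (hne ν hν hνp l hl) (hrr l hl)) (by
            have : (Finset.univ.filter (fun S => 0 < ν S)).card <
                (Finset.univ.filter (fun S => 0 < μ S)).card := by
              apply Finset.card_lt_card
              rw [Finset.ssubset_iff_of_subset]
              · obtain ⟨S, hS, hS'⟩ := hss
                exact ⟨S, by simp [hS], by simpa using hS'⟩
              · intro S hS
                simp only [Finset.mem_filter, Finset.mem_univ, true_and] at hS ⊢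
                exact hsub S hS
            omega) a hpos
        exact ⟨S, hsub S hS, hSx⟩
      have hor : 0 < (wsum R μ0 1).eval a ∨ 0 < (wsum R μ1 1).eval a := by
        have := ha a le_rfl
        rw [hdec1, eval_add] at this
        by_contra! hcon
        linarith [hcon.1, hcon.2]
      rcases hor with h | h
      · refine hcase μ0 μ1 h00 hp0 h10 hp1 ?_ ⟨S1, hS1, by simp [hμ0, hi1]⟩ hA hdec1 h
        intro S hS
        simp only [hμ0] at hS
        split_ifs at hS
        · exact absurd hS (lt_irrefl _)
        · exact hS
      · refine hcase μ1 μ0 h10 hp1 h00 hp0 ?_ ⟨S0, hS0, by simp [hμ1, hi0]⟩ hB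
          (by rw [hdec1, add_comm]) h
        intro S hS
        simp only [hμ1] at hS
        split_ifs at hS
        · exact hS
        · exact absurd hS (lt_irrefl _)
    · push Not at hsplit
      obtain ⟨S, hS⟩ := hp
      refine ⟨S, hS, fun x hx => ?_⟩
      have hz : ∀ T, T ≠ S → μ T = 0 := by
        intro T hT
        by_contra hne
        have hTp : 0 < μ T := lt_of_le_of_ne (h0 T) (Ne.symm hne)
        exact hT (Finset.Subset.antisymm (fun i hi => hsplit T S i hTp hS hi)
          (fun i hi => hsplit S T i hS hTp hi))
      have h1 := ha x hx
      rw [wsum, Finset.sum_eq_single S (fun T _ hT => by simp [hz T hT]) (by simp)] at h1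
      simp only [Pi.one_apply, Finset.prod_const_one, mul_one, eval_mul, eval_C] at h1
      exact (pos_iff_pos_of_mul_pos h1).1 hS

/-- For a strongly Rayleigh distribution `μ` on subsets of `{1,…,n}` and a Hermitian `A`:
(i) the expected characteristic polynomial `q = Σ_S μ(S) χ[A_S]` is real rooted;
(ii) `q = P_μ(∂_{z₁},…,∂_{z_n}) det(Z-A)` with all variables then set equal to `x`;
(iii) if `q` is nonconstant, some `S` with `μ(S) > 0` has all roots of `χ[A_S]` at most
the largest root of `q`. -/
theorem strongly_rayleigh_expected_charpoly {n : ℕ} (μ : Finset (Fin n) → ℝ)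
    (hμ0 : ∀ S, 0 ≤ μ S) (hμ1 : ∑ S : Finset (Fin n), μ S = 1)
    (hSR : RealStable (∑ S : Finset (Fin n), MvPolynomial.C (μ S) * ∏ i ∈ S, MvPolynomial.X i))
    (A : Matrix (Fin n) (Fin n) ℂ) (hA : A.IsHermitian) :
    (∀ z : ℂ, (expCharpoly μ A).IsRoot z → z.im = 0) ∧
    (expCharpoly μ A
      = MvPolynomial.aeval (fun _ : Fin n => (Polynomial.X : Polynomial ℂ))
          (∑ S : Finset (Fin n), ((μ S : ℂ)) • (pdS S (ZsubA A).det))) ∧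
    (0 < (expCharpoly μ A).natDegree →
      ∃ S : Finset (Fin n), 0 < μ S ∧ ∀ x : ℂ, (subAway A S).charpoly.IsRoot x →
        ∃ y : ℂ, (expCharpoly μ A).IsRoot y ∧ x.re ≤ y.re) := by
  obtain ⟨R, M, hR, hM⟩ := exists_real_charpoly A hA
  have hP : ∀ w : Fin n → ℂ, (∀ k, 0 < (w k).im) → ∑ S, (μ S : ℂ) * ∏ i ∈ S, w i ≠ 0 := by
    intro w hw
    have := hSR w hw
    simpa [map_sum, map_mul, map_prod] using this
  have hpos : ∃ S, 0 < μ S := by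
    by_contra! hcon
    have : ∑ S, μ S ≤ 0 := Finset.sum_nonpos fun S _ => hcon S
    linarith
  have hmap : ∀ l : Fin n → ℝ, expCharpoly (fun S => μ S * ∏ i ∈ S, l i) A =
      (wsum R μ l).map Complex.ofRealHom := by
    intro l
    rw [expCharpoly, wsum, Polynomial.map_sum]
    refine Finset.sum_congr rfl fun S _ => ?_
    rw [hR S, Polynomial.map_mul, Polynomial.map_C]
    rfl
  have hRR : ∀ l : Fin n → ℝ, (∀ i, 0 < l i) → RRp (wsum R μ l) := by
    intro l hl z hz
    have hup : ∀ z : ℂ, 0 < z.im → ((wsum R μ l).map Complex.ofRealHom).eval z ≠ 0 := by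
      intro z hz
      rw [← hmap]
      have hprod : ∀ S : Finset (Fin n), 0 < ∏ i ∈ S, l i :=
        fun S => Finset.prod_pos fun i _ => hl i
      apply expected_upper _ (fun S => mul_nonneg (hμ0 S) (hprod S).le) _ _ A hA z hz
      · obtain ⟨S, hS⟩ := hpos
        exact ⟨S, mul_pos hS (hprod S)⟩
      · intro w hw
        have := hP (fun i => (l i : ℂ) * w i) (fun k => by
          rw [Complex.im_ofReal_mul]
          exact mul_pos (hl k) (hw k))
        convert this using 1
        refine Finset.sum_congr rfl fun S _ => ?_
        rw [Finset.prod_mul_distrib]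
        push_cast
        ring
    rcases lt_trichotomy z.im 0 with h | h | h
    · exfalso
      apply hup ((starRingEnd ℂ) z) (by simpa using h)
      have h1 : ((wsum R μ l).map Complex.ofRealHom).eval ((starRingEnd ℂ) z) =
          (starRingEnd ℂ) (((wsum R μ l).map Complex.ofRealHom).eval z) := by
        rw [Polynomial.eval_map, Polynomial.eval_map, Polynomial.hom_eval₂]
        congr 1
        ext x
        simp
      rw [h1, hz, map_zero]
    · exact h
    · exact absurd hz (hup z h)
  have hq : expCharpoly μ A = (wsum R μ 1).map Complex.ofRealHom := by
    have := hmap 1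
    simpa using this
  have hcast : ∀ (q : ℝ[X]) (x : ℝ), (q.map Complex.ofRealHom).eval (x : ℂ) = ((q.eval x : ℝ) : ℂ) :=
    fun q x => Polynomial.eval_map_apply (f := Complex.ofRealHom) x
  refine ⟨?_, ?_, ?_⟩
  · intro z hz
    rw [Polynomial.IsRoot, hq] at hz
    exact hRR 1 (by simp) z hz
  · rw [map_sum, expCharpoly]
    refine Finset.sum_congr rfl fun S _ => ?_
    rw [map_smul, pdS_det, Polynomial.smul_eq_C_mul]
  · intro _
    by_contra! hcon
    have hcon' : ∀ S, ∃ x : ℂ, 0 < μ S → (subAway A S).charpoly.IsRoot x ∧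
        ∀ y : ℂ, (expCharpoly μ A).IsRoot y → y.re < x.re := by
      intro S
      by_cases hS : 0 < μ S
      · obtain ⟨x, hx⟩ := hcon S hS
        exact ⟨x, fun _ => hx⟩
      · exact ⟨0, fun h => absurd h hS⟩
    choose x hx using hcon'
    obtain ⟨S0, hS0⟩ := hpos
    obtain ⟨S1, hS1, hmin⟩ := Finset.exists_min_image (Finset.univ.filter (fun S => 0 < μ S))
      (fun S => (x S).re) ⟨S0, by simp [hS0]⟩
    simp only [Finset.mem_filter, Finset.mem_univ, true_and] at hS1 hmin
    have hqpos : ∀ t, (x S1).re ≤ t → 0 < (wsum R μ 1).eval t := by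
      apply pos_of_ne _ _ (max (x S1).re M) (le_max_left _ _)
        (wsum_pos R M hM μ hμ0 ⟨S0, hS0⟩ 1 (by simp) _ (le_max_right _ _))
      intro t ht h0
      have := (hx S1 hS1).2 (t : ℂ) (by rw [Polynomial.IsRoot, hq, hcast, h0]; simp)
      rw [Complex.ofReal_re] at this
      linarith
    obtain ⟨S, hS, hSx⟩ := branch R M hM _ μ hμ0 ⟨S0, hS0⟩ hRR le_rfl _ hqpos
    have hroot := (hx S hS).1
    have him : (x S).im = 0 := by
      have hH : (subAway A S).IsHermitian := hA.submatrix _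
      rw [Polynomial.IsRoot, hH.charpoly_eq, Polynomial.eval_prod, Finset.prod_eq_zero_iff] at hroot
      obtain ⟨i, _, hi⟩ := hroot
      rw [eval_sub, eval_X, eval_C, sub_eq_zero] at hi
      rw [hi]; simp
    have hxe : x S = ((x S).re : ℂ) := Complex.ext (by simp) (by simpa using him)
    rw [Polynomial.IsRoot, hxe, hR S, hcast, Complex.ofReal_eq_zero] at hroot
    exact (hSx _ (hmin S hS)).ne' hroot
end
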